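/- arXiv:1412.0844 — 11 statements merged into one kernel-verified Lean document; each statement's English description precedes it below -/
import Mathlib

section
/- There exist constants a_- > 0, a_+ > 0 and b_-, b_+, c'_-, c'_+ ∈ ℝ such that, as x → −∞: a(x) = a_-·e^{κ_- x} + O(e^{3κ_- x}), a'(x) = a_-·κ_-·e^{κ_- x} + O(e^{3κ_- x}), b(x) = b_-·e^{κ_- x} + O(e^{3κ_- x}), b'(x) = b_-·κ_-·e^{κ_- x} + O(e^{3κ_- x}), c(x) = c_- + c'_-·e^{2κ_- x} + O(e^{4κ_- x}), c'(x) = 2c'_-·κ_-·e^{2κ_- x} + O(e^{4κ_- x}); and, as x → +∞: a(x) = a_+·e^{κ_+ x} + O(e^{3κ_+ x}), a'(x) = a_+·κ_+·e^{κ_+ x} + O(e^{3κ_+ x}), b(x) = b_+·e^{κ_+ x} + O(e^{3κ_+ x}), b'(x) = b_+·κ_+·e^{κ_+ x} + O(e^{3κ_+ x}), c(x) = c_+ + c'_+·e^{2κ_+ x} + O(e^{4κ_+ x}), c'(x) = 2c'_+·κ_+·e^{2κ_+ x} + O(e^{4κ_+ x}). Here primes denote d/dx and c_± = qQ/r_±.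 -/
open Asymptotics Filter

lemma aux_deriv (C : ℝ → ℝ) (hC : ContDiffAt ℝ 2 C 0) : ContDiffAt ℝ 1 (deriv C) 0 := by
  have := hC.fderiv_right (m := 1) (by norm_num)
  have h2 : deriv C = fun t => fderiv ℝ C t 1 := by ext t; simp
  rw [h2]
  exact this.clm_apply contDiffAt_const

lemma aux_taylor (C : ℝ → ℝ) (hC : ContDiffAt ℝ 2 C 0) :
    (fun t => C t - C 0 - deriv C 0 * t) =O[nhds 0] fun t => t ^ 2 := by
  have h1 : ∀ᶠ t in nhds (0:ℝ), DifferentiableAt ℝ C t := by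
    filter_upwards [hC.eventually (by simp)] with t ht
    exact ht.differentiableAt (by norm_num)
  have h2 : ContDiffAt ℝ 1 (deriv C) 0 := aux_deriv C hC
  have h3 : (fun t => deriv C t - deriv C 0) =O[nhds 0] fun t => t - 0 :=
    (h2.differentiableAt (by norm_num)).isBigO_sub
  obtain ⟨K, hK⟩ := h3.bound
  obtain ⟨ε, hε, H⟩ := Metric.eventually_nhds_iff_ball.1 (h1.and hK)
  refine IsBigO.of_bound K ?_
  filter_upwards [Metric.ball_mem_nhds (0:ℝ) hε] with t ht
  have hK0 : ∀ u ∈ Metric.closedBall (0:ℝ) |t|, ‖deriv C u - deriv C 0‖ ≤ K * |u| ∧ DifferentiableAt ℝ C u := by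
    intro u hu
    have : u ∈ Metric.ball (0:ℝ) ε := by
      simp at hu ht ⊢; linarith
    have := H u this
    refine ⟨by simpa using this.2, this.1⟩
  have hder : ∀ u ∈ Metric.closedBall (0:ℝ) |t|,
      HasDerivWithinAt (fun t => C t - C 0 - deriv C 0 * t) (deriv C u - deriv C 0) (Metric.closedBall (0:ℝ) |t|) u := by
    intro u hu
    have h3 : HasDerivAt (fun t => C t - C 0 - deriv C 0 * t) (deriv C u - deriv C 0 * 1) u :=
      (((hK0 u hu).2.hasDerivAt.sub_const (C 0)).sub ((hasDerivAt_id u).const_mul (deriv C 0)))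
    rw [mul_one] at h3
    exact h3.hasDerivWithinAt
  have hKt : 0 ≤ K * |t| := le_trans (norm_nonneg _) (hK0 t (by simp)).1
  have := Convex.norm_image_sub_le_of_norm_hasDerivWithin_le (C := K * |t|) hder ?_
    (convex_closedBall _ _) (x := 0) (y := t) (by simp) (by simp)
  · simp only [sub_self, mul_zero, sub_zero] at this
    refine this.trans (le_of_eq ?_)
    rw [mul_assoc, Real.norm_eq_abs, ← sq, Real.norm_eq_abs, abs_pow]
  · intro u hu
    refine (hK0 u hu).1.trans ?_
    rcases eq_or_ne t 0 with h | h
    · subst h; simp at hu; simp [hu]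
    · have : 0 ≤ K := by
        by_contra hh
        have : 0 < |t| := abs_pos.2 h
        nlinarith
      exact mul_le_mul_of_nonneg_left (by simpa using hu) this

lemma aux_one (κ : ℝ) (l : Filter ℝ) (hl : Tendsto (fun s => Real.exp (2 * κ * s)) l (nhds 0))
    (hl2 : ∀ P : ℝ → Prop, (∀ᶠ s in l, P s) → ∀ᶠ s in l, ∀ᶠ t in nhds s, P t)
    (A : ℝ → ℝ) (hA : ContDiffAt ℝ 2 A 0) (f : ℝ → ℝ)
    (hf : ∀ᶠ s in l, f s = Real.exp (κ * s) * A (Real.exp (2 * κ * s))) :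
    ((fun s => f s - A 0 * Real.exp (κ * s)) =O[l] fun s => Real.exp (3 * κ * s)) ∧
    ((fun s => deriv f s - A 0 * κ * Real.exp (κ * s)) =O[l] fun s => Real.exp (3 * κ * s)) := by
  have h0 : (fun s => A (Real.exp (2 * κ * s)) - A 0) =O[l] fun s => Real.exp (2 * κ * s) := by
    have := ((hA.differentiableAt (by norm_num)).isBigO_sub).comp_tendsto hl
    simpa [Function.comp_def] using this
  have hmul : ∀ s, Real.exp (κ * s) * Real.exp (2 * κ * s) = Real.exp (3 * κ * s) := by
    intro s; rw [← Real.exp_add]; ring_nf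
  have h1 : (fun s => Real.exp (κ * s) * (A (Real.exp (2 * κ * s)) - A 0)) =O[l]
      fun s => Real.exp (3 * κ * s) := by
    have := (isBigO_refl (fun s => Real.exp (κ * s)) l).mul h0
    simpa only [hmul] using this
  have h2 : ContDiffAt ℝ 1 (deriv A) 0 := aux_deriv A hA
  have h3 : (fun s => deriv A (Real.exp (2 * κ * s))) =O[l] fun _ => (1:ℝ) :=
    (h2.continuousAt.tendsto.comp hl).isBigO_one ℝ
  have hd : ∀ᶠ s in l, DifferentiableAt ℝ A (Real.exp (2 * κ * s)) := by
    refine hl.eventually ?_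
    filter_upwards [hA.eventually (by simp)] with t ht
    exact ht.differentiableAt (by norm_num)
  constructor
  · refine h1.congr' ?_ EventuallyEq.rfl
    filter_upwards [hf] with s hs
    rw [hs]; ring
  · have h4 : (fun s => κ * (Real.exp (κ * s) * (A (Real.exp (2 * κ * s)) - A 0)) +
        2 * κ * (Real.exp (3 * κ * s) * deriv A (Real.exp (2 * κ * s)))) =O[l]
        fun s => Real.exp (3 * κ * s) := by
      refine (h1.const_mul_left κ).add (IsBigO.const_mul_left ?_ _)
      simpa using (isBigO_refl (fun s => Real.exp (3 * κ * s)) l).mul h3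
    refine h4.congr' ?_ EventuallyEq.rfl
    filter_upwards [hl2 _ hf, hd] with s hs hds
    have e1 : HasDerivAt (fun s => Real.exp (κ * s)) (Real.exp (κ * s) * κ) s := by
      simpa using ((hasDerivAt_id s).const_mul κ).exp
    have e2 : HasDerivAt (fun s => Real.exp (2 * κ * s)) (Real.exp (2 * κ * s) * (2 * κ)) s := by
      simpa using ((hasDerivAt_id s).const_mul (2 * κ)).exp
    have e3 := e1.mul (hds.hasDerivAt.comp s e2)
    have e4 : deriv f s = _ := (e3.congr_of_eventuallyEq (f₁ := f) hs).deriv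
    rw [e4, ← hmul]
    simp only [Function.comp_def]; ring

lemma aux_two (κ : ℝ) (l : Filter ℝ) (hl : Tendsto (fun s => Real.exp (2 * κ * s)) l (nhds 0))
    (hl2 : ∀ P : ℝ → Prop, (∀ᶠ s in l, P s) → ∀ᶠ s in l, ∀ᶠ t in nhds s, P t)
    (A : ℝ → ℝ) (hA : ContDiffAt ℝ 2 A 0) (f : ℝ → ℝ)
    (hf : ∀ᶠ s in l, f s = A (Real.exp (2 * κ * s))) :
    ((fun s => f s - (A 0 + deriv A 0 * Real.exp (2 * κ * s))) =O[l] fun s => Real.exp (4 * κ * s)) ∧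
    ((fun s => deriv f s - 2 * deriv A 0 * κ * Real.exp (2 * κ * s)) =O[l]
      fun s => Real.exp (4 * κ * s)) := by
  have hmul : ∀ s, Real.exp (2 * κ * s) * Real.exp (2 * κ * s) = Real.exp (4 * κ * s) := by
    intro s; rw [← Real.exp_add]; ring_nf
  have h2 : ContDiffAt ℝ 1 (deriv A) 0 := aux_deriv A hA
  have h0 : (fun s => deriv A (Real.exp (2 * κ * s)) - deriv A 0) =O[l]
      fun s => Real.exp (2 * κ * s) := by
    have := ((h2.differentiableAt (by norm_num)).isBigO_sub).comp_tendsto hl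
    simpa [Function.comp_def] using this
  have hd : ∀ᶠ s in l, DifferentiableAt ℝ A (Real.exp (2 * κ * s)) := by
    refine hl.eventually ?_
    filter_upwards [hA.eventually (by simp)] with t ht
    exact ht.differentiableAt (by norm_num)
  constructor
  · have := (aux_taylor A hA).comp_tendsto hl
    refine this.congr' ?_ ?_
    · filter_upwards [hf] with s hs
      rw [hs]; simp only [Function.comp_def]; ring
    · refine Eventually.of_forall fun s => ?_
      simp only [Function.comp_def, sq, hmul]
  · have h4 := ((isBigO_refl (fun s => Real.exp (2 * κ * s)) l).mul h0).const_mul_left (2 * κ)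
    simp only [hmul] at h4
    refine h4.congr' ?_ EventuallyEq.rfl
    filter_upwards [hl2 _ hf, hd] with s hs hds
    have e2 : HasDerivAt (fun s => Real.exp (2 * κ * s)) (Real.exp (2 * κ * s) * (2 * κ)) s := by
      simpa using ((hasDerivAt_id s).const_mul (2 * κ)).exp
    have e3 := (hds.hasDerivAt.comp s e2)
    have e4 : deriv f s = _ := (e3.congr_of_eventuallyEq (f₁ := f) hs).deriv
    rw [e4]; ring

lemma aux_end (κ : ℝ) (l : Filter ℝ) (hl : Tendsto (fun s => Real.exp (2 * κ * s)) l (nhds 0))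
    (hl2 : ∀ P : ℝ → Prop, (∀ᶠ s in l, P s) → ∀ᶠ s in l, ∀ᶠ t in nhds s, P t)
    (rf : ℝ → ℝ) (r0 σ : ℝ) (hr0 : 0 < r0) (hlim : Tendsto rf l (nhds r0)) (hσ : σ ≠ 0)
    (G Φ F : ℝ → ℝ) (hG : ContDiffAt ℝ 2 G r0) (hGpos : 0 < G r0)
    (hE : ∀ s, Real.exp (2 * κ * s) = σ * (rf s - r0) * G (rf s))
    (hΦ : ContDiffAt ℝ 2 Φ r0) (hΦpos : 0 < Φ r0 / σ)
    (hF : ∀ s, F (rf s) = (rf s - r0) * Φ (rf s))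
    (m e : ℝ) (a b c : ℝ → ℝ)
    (ha : ∀ s, a s = Real.sqrt (F (rf s)) / rf s)
    (hb : ∀ s, b s = m * Real.sqrt (F (rf s)))
    (hc : ∀ s, c s = e / rf s) :
    ∃ am > (0 : ℝ), ∃ bm c'm : ℝ,
      ((fun s => a s - am * Real.exp (κ * s)) =O[l] fun s => Real.exp (3 * κ * s)) ∧
      ((fun s => deriv a s - am * κ * Real.exp (κ * s))
        =O[l] fun s => Real.exp (3 * κ * s)) ∧
      ((fun s => b s - bm * Real.exp (κ * s)) =O[l] fun s => Real.exp (3 * κ * s)) ∧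
      ((fun s => deriv b s - bm * κ * Real.exp (κ * s))
        =O[l] fun s => Real.exp (3 * κ * s)) ∧
      ((fun s => c s - (e / r0 + c'm * Real.exp (2 * κ * s)))
        =O[l] fun s => Real.exp (4 * κ * s)) ∧
      ((fun s => deriv c s - 2 * c'm * κ * Real.exp (2 * κ * s))
        =O[l] fun s => Real.exp (4 * κ * s)) := by
  set h : ℝ → ℝ := fun r => σ * (r - r0) * G r with hh
  have hhc : ContDiffAt ℝ 2 h r0 := by
    simp only [hh]; fun_prop
  have hh0 : h r0 = 0 := by simp [hh]
  have hd : HasDerivAt h (σ * G r0) r0 := by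
    have : HasDerivAt h (σ * 1 * G r0 + σ * (r0 - r0) * deriv G r0) r0 :=
      (((hasDerivAt_id r0).sub_const r0).const_mul σ).mul (hG.differentiableAt (by norm_num)).hasDerivAt
    simpa using this
  have hne : σ * G r0 ≠ 0 := mul_ne_zero hσ hGpos.ne'
  have hst : HasStrictDerivAt h (σ * G r0) r0 := by
    have := hhc.hasStrictDerivAt (by norm_num)
    rwa [hd.deriv] at this
  obtain ⟨k, hk, hkl⟩ : ∃ k : ℝ → ℝ, ContDiffAt ℝ 2 k 0 ∧ ∀ᶠ r in nhds r0, k (h r) = r := by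
    have h1 : HasFDerivAt h
      ((ContinuousLinearEquiv.unitsEquivAut ℝ (Units.mk0 _ hne) : ℝ ≃L[ℝ] ℝ) : ℝ →L[ℝ] ℝ) r0 := by
      exact hd.hasFDerivAt_equiv hne
    refine ⟨hhc.localInverse h1 (by norm_num), ?_, ?_⟩
    · have := hhc.to_localInverse h1 (by norm_num)
      rwa [hh0] at this
    · exact (hhc.hasStrictFDerivAt' h1 (by norm_num)).eventually_left_inverse
  have hk0 : k 0 = r0 := by have := hkl.self_of_nhds; rwa [hh0] at this
  have hkr : ∀ᶠ s in l, k (Real.exp (2 * κ * s)) = rf s := by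
    filter_upwards [hlim.eventually hkl] with s hs
    rw [hE]; exact hs
  have hGne : ∀ᶠ s in l, G (rf s) ≠ 0 :=
    hlim.eventually (hG.continuousAt.eventually_ne hGpos.ne')
  set S : ℝ → ℝ := fun t => Real.sqrt (Φ (k t) / σ / G (k t)) with hS
  have hSpos : 0 < Φ (k 0) / σ / G (k 0) := by rw [hk0]; positivity
  have hSc : ContDiffAt ℝ 2 S 0 := by
    have e1 : ContDiffAt ℝ 2 (fun t => Φ (k t)) 0 :=
      ContDiffAt.comp (g := Φ) (0:ℝ) (by rwa [hk0]) hk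
    have e2 : ContDiffAt ℝ 2 (fun t => G (k t)) 0 :=
      ContDiffAt.comp (g := G) (0:ℝ) (by rwa [hk0]) hk
    exact ((e1.div_const σ).div e2 (by rw [hk0]; exact hGpos.ne')).sqrt hSpos.ne'
  have hsqrt : ∀ᶠ s in l, Real.sqrt (F (rf s)) = Real.exp (κ * s) * S (Real.exp (2 * κ * s)) := by
    filter_upwards [hkr, hGne] with s hs hg
    have e1 : F (rf s) = Real.exp (κ * s) ^ 2 * (Φ (rf s) / σ / G (rf s)) := by
      have : Real.exp (κ * s) ^ 2 = Real.exp (2 * κ * s) := by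
        rw [sq, ← Real.exp_add]; ring_nf
      rw [this, hE, hF]; field_simp
    rw [e1, Real.sqrt_mul (by positivity), Real.sqrt_sq (Real.exp_pos _).le]
    simp only [hS, hs]
  have hk0ne : k 0 ≠ 0 := by rw [hk0]; exact hr0.ne'
  have A1 := aux_one κ l hl hl2 (fun t => S t / k t) (hSc.div hk hk0ne) a (by
    filter_upwards [hsqrt, hkr] with s h1 h2
    rw [ha, h1, h2]; ring)
  have A2 := aux_one κ l hl hl2 (fun t => m * S t) (contDiffAt_const.mul hSc) b (by
    filter_upwards [hsqrt] with s h1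
    rw [hb, h1]; ring)
  have A3 := aux_two κ l hl hl2 (fun t => e / k t) (contDiffAt_const.div hk hk0ne) c (by
    filter_upwards [hkr] with s h2
    rw [hc, h2])
  simp only [hk0] at A3
  refine ⟨S 0 / k 0, ?_, m * S 0, _, A1.1, A1.2, A2.1, A2.2, A3.1, A3.2⟩
  have : 0 < S 0 := Real.sqrt_pos.2 hSpos
  rw [hk0]; positivity

/-- lower bound gives convergence -/
lemma aux_lim (κ : ℝ) (l : Filter ℝ) (hl : Tendsto (fun s => Real.exp (2 * κ * s)) l (nhds 0))
    (rf : ℝ → ℝ) (r0 σ : ℝ) (hσ : |σ| = 1) (G : ℝ → ℝ) (g : ℝ) (hg : 0 < g)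
    (hGg : ∀ s, g ≤ G (rf s))
    (hE : ∀ s, Real.exp (2 * κ * s) = σ * (rf s - r0) * G (rf s)) :
    Tendsto rf l (nhds r0) := by
  rw [tendsto_iff_norm_sub_tendsto_zero]
  refine squeeze_zero (g := fun s => Real.exp (2 * κ * s) / g) (fun s => norm_nonneg _) ?_
    (by simpa using hl.div_const g)
  intro s
  rw [le_div_iff₀ hg]
  have h1 : Real.exp (2 * κ * s) = |rf s - r0| * G (rf s) := by
    rw [← abs_of_pos (Real.exp_pos (2 * κ * s)), hE, abs_mul, abs_mul, hσ,
      abs_of_pos (hg.trans_le (hGg s)), one_mul]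
  rw [h1, Real.norm_eq_abs]
  exact mul_le_mul_of_nonneg_left (hGg s) (abs_nonneg _)

lemma aux_bound (u w : ℝ → ℝ) (p q W : ℝ) (hu : ContinuousOn u (Set.Icc p q))
    (hw : ∀ r ∈ Set.Ioo p q, W ≤ w r) :
    ∃ g > 0, ∀ r ∈ Set.Ioo p q, g ≤ Real.exp (u r + w r) := by
  obtain ⟨B, hB⟩ := isCompact_Icc.bddBelow_image hu
  refine ⟨Real.exp (B + W), Real.exp_pos _, fun r hr => Real.exp_le_exp.2 ?_⟩
  exact add_le_add (hB ⟨r, Set.Ioo_subset_Icc_self hr, rfl⟩) (hw r hr)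

lemma aux_F (M Q Λ : ℝ) (F : ℝ → ℝ)
    (hF : ∀ r, F r = 1 - 2 * M / r + Q ^ 2 / r ^ 2 - Λ * r ^ 2 / 3) (r0 : ℝ) (hr0 : 0 < r0)
    (h0 : F r0 = 0) :
    ∃ Φ : ℝ → ℝ, ContDiffAt ℝ 2 Φ r0 ∧ Φ r0 = deriv F r0 ∧
      ∀ r, 0 < r → F r = (r - r0) * Φ r := by
  have hne := hr0.ne'
  set Φ : ℝ → ℝ := fun r => 2 * M / (r * r0) - Q ^ 2 * (r + r0) / (r ^ 2 * r0 ^ 2) - Λ * (r + r0) / 3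
    with hΦ
  have hc : ContDiffAt ℝ 2 Φ r0 := by
    refine ContDiffAt.sub (ContDiffAt.sub (ContDiffAt.div (by fun_prop) (by fun_prop) (by positivity))
      (ContDiffAt.div (by fun_prop) (by fun_prop) (by positivity))) (by fun_prop)
  have hfac : ∀ r, 0 < r → F r = (r - r0) * Φ r := by
    intro r hr
    have : F r = F r - F r0 := by rw [h0, sub_zero]
    rw [this, hF, hF, hΦ]
    field_simp
    ring
  refine ⟨Φ, hc, ?_, hfac⟩
  have hd := ((hasDerivAt_id r0).sub_const r0).mul
      (hc.differentiableAt (by norm_num)).hasDerivAt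
  have : HasDerivAt F (Φ r0) r0 := by
    have h2 := hd.congr_of_eventuallyEq (f₁ := F) (by
      filter_upwards [lt_mem_nhds hr0] with r hr using hfac r hr)
    simpa using h2
  exact this.deriv.symm

/-- Asymptotics of the potentials `a`, `b`, `c` (and their derivatives)
of the Dirac equation in a dS-RN black hole, at both horizons `x → ±∞`:
there are constants `a₋, a₊ > 0` and `b₋, b₊, c'₋, c'₊ ∈ ℝ` such that, e.g. as `x → −∞`,
`a(x) = a₋ e^{κ₋x} + O(e^{3κ₋x})`, ..., `c(x) = c₋ + c'₋ e^{2κ₋x} + O(e^{4κ₋x})`, and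
similarly as `x → +∞` with `κ₊`. -/
theorem stmt_1 (M Q Λ : ℝ) (hM : 0 < M) (hΛ : 0 < Λ)
    (rn rc rm rp : ℝ) (hrn : rn < 0) (hrc : 0 < rc) (hrcm : rc < rm) (hrmp : rm < rp)
    (F : ℝ → ℝ)
    (hF : ∀ r, F r = 1 - 2 * M / r + Q ^ 2 / r ^ 2 - Λ * r ^ 2 / 3)
    (hFn : F rn = 0) (hFc : F rc = 0) (hFm : F rm = 0) (hFp : F rp = 0)
    (hFpos : ∀ r ∈ Set.Ioo rm rp, 0 < F r)
    (κn κc κm κp : ℝ)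
    (hκn : κn = deriv F rn / 2) (hκc : κc = deriv F rc / 2)
    (hκm : κm = deriv F rm / 2) (hκp : κp = deriv F rp / 2)
    (hκmpos : 0 < κm) (hκpneg : κp < 0)
    (x : ℝ → ℝ)
    (hx : ∀ r, x r = 1 / (2 * κn) * Real.log (r - rn) + 1 / (2 * κc) * Real.log (r - rc)
      + 1 / (2 * κm) * Real.log (r - rm) + 1 / (2 * κp) * Real.log (rp - r))
    (rfun : ℝ → ℝ)
    (hrmem : ∀ s, rfun s ∈ Set.Ioo rm rp) (hrinv : ∀ s, x (rfun s) = s)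
    (m q : ℝ) (a b c : ℝ → ℝ)
    (ha : ∀ s, a s = Real.sqrt (F (rfun s)) / rfun s)
    (hb : ∀ s, b s = m * Real.sqrt (F (rfun s)))
    (hc : ∀ s, c s = q * Q / rfun s)
    (cm cp : ℝ) (hcm : cm = q * Q / rm) (hcp : cp = q * Q / rp) :
    ∃ am > (0 : ℝ), ∃ ap > (0 : ℝ), ∃ bm bp c'm c'p : ℝ,
      ((fun s => a s - am * Real.exp (κm * s)) =O[atBot] fun s => Real.exp (3 * κm * s)) ∧
      ((fun s => deriv a s - am * κm * Real.exp (κm * s))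
        =O[atBot] fun s => Real.exp (3 * κm * s)) ∧
      ((fun s => b s - bm * Real.exp (κm * s)) =O[atBot] fun s => Real.exp (3 * κm * s)) ∧
      ((fun s => deriv b s - bm * κm * Real.exp (κm * s))
        =O[atBot] fun s => Real.exp (3 * κm * s)) ∧
      ((fun s => c s - (cm + c'm * Real.exp (2 * κm * s)))
        =O[atBot] fun s => Real.exp (4 * κm * s)) ∧
      ((fun s => deriv c s - 2 * c'm * κm * Real.exp (2 * κm * s))
        =O[atBot] fun s => Real.exp (4 * κm * s)) ∧
      ((fun s => a s - ap * Real.exp (κp * s)) =O[atTop] fun s => Real.exp (3 * κp * s)) ∧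
      ((fun s => deriv a s - ap * κp * Real.exp (κp * s))
        =O[atTop] fun s => Real.exp (3 * κp * s)) ∧
      ((fun s => b s - bp * Real.exp (κp * s)) =O[atTop] fun s => Real.exp (3 * κp * s)) ∧
      ((fun s => deriv b s - bp * κp * Real.exp (κp * s))
        =O[atTop] fun s => Real.exp (3 * κp * s)) ∧
      ((fun s => c s - (cp + c'p * Real.exp (2 * κp * s)))
        =O[atTop] fun s => Real.exp (4 * κp * s)) ∧
      ((fun s => deriv c s - 2 * c'p * κp * Real.exp (2 * κp * s))
        =O[atTop] fun s => Real.exp (4 * κp * s)) := by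
  have hrm : 0 < rm := hrc.trans hrcm
  have hrp : 0 < rp := hrm.trans hrmp
  obtain ⟨Φm, hΦm, hΦm0, hΦmF⟩ := aux_F M Q Λ F hF rm hrm hFm
  obtain ⟨Φp, hΦp, hΦp0, hΦpF⟩ := aux_F M Q Λ F hF rp hrp hFp
  have hrpos : ∀ s, 0 < rfun s := fun s => hrm.trans (hrmem s).1
  have hlm : Tendsto (fun s => Real.exp (2 * κm * s)) atBot (nhds 0) :=
    Real.tendsto_exp_atBot.comp (tendsto_id.const_mul_atBot (by positivity : 0 < 2 * κm))
  have hlp : Tendsto (fun s => Real.exp (2 * κp * s)) atTop (nhds 0) :=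
    Real.tendsto_exp_atBot.comp (tendsto_id.const_mul_atTop_of_neg (by linarith : 2 * κp < 0))
  have hm2 : ∀ P : ℝ → Prop, (∀ᶠ s in atBot, P s) → ∀ᶠ s in atBot, ∀ᶠ t in nhds s, P t := by
    intro P hP
    obtain ⟨A, hA⟩ := eventually_atBot.1 hP
    filter_upwards [eventually_lt_atBot A] with s hs
    filter_upwards [gt_mem_nhds hs] with t ht using hA t ht.le
  have hp2 : ∀ P : ℝ → Prop, (∀ᶠ s in atTop, P s) → ∀ᶠ s in atTop, ∀ᶠ t in nhds s, P t := by
    intro P hP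
    obtain ⟨A, hA⟩ := eventually_atTop.1 hP
    filter_upwards [eventually_gt_atTop A] with s hs
    filter_upwards [lt_mem_nhds hs] with t ht using hA t ht.le
  -- common part
  set U : ℝ → ℝ → ℝ := fun κ r => 2 * κ * (1 / (2 * κn) * Real.log (r - rn)
    + 1 / (2 * κc) * Real.log (r - rc)) with hU
  have hUc : ∀ κ r, rm ≤ r → ContDiffAt ℝ 2 (U κ) r := by
    intro κ r hr
    have h1 : r - rn ≠ 0 := ne_of_gt (by linarith)
    have h2 : r - rc ≠ 0 := ne_of_gt (by linarith)
    have e1 : ContDiffAt ℝ 2 (fun r => Real.log (r - rn)) r :=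
      (contDiffAt_id.sub contDiffAt_const).log h1
    have e2 : ContDiffAt ℝ 2 (fun r => Real.log (r - rc)) r :=
      (contDiffAt_id.sub contDiffAt_const).log h2
    simp only [hU]
    fun_prop
  have hUcont : ∀ κ, ContinuousOn (U κ) (Set.Icc rm rp) := fun κ r hr =>
    (hUc κ r hr.1).continuousAt.continuousWithinAt
  -- left end
  set Gm : ℝ → ℝ := fun r => Real.exp (U κm r + κm / κp * Real.log (rp - r)) with hGm
  have hGmc : ContDiffAt ℝ 2 Gm rm := by
    have e1 : ContDiffAt ℝ 2 (fun r => Real.log (rp - r)) rm :=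
      (contDiffAt_const.sub contDiffAt_id).log (sub_pos.2 hrmp).ne'
    exact ((hUc κm rm le_rfl).add (contDiffAt_const.mul e1)).exp
  have hEm : ∀ s, Real.exp (2 * κm * s) = 1 * (rfun s - rm) * Gm (rfun s) := by
    intro s
    have h1 : 0 < rfun s - rm := sub_pos.2 (hrmem s).1
    rw [one_mul]
    nth_rewrite 1 [← hrinv s]
    nth_rewrite 1 [← Real.exp_log h1]
    rw [hGm, ← Real.exp_add, hx, hU]
    congr 1
    have := hκpneg.ne
    have e1 : 2 * κm * (1 / (2 * κm)) = 1 := by field_simp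
    have e2 : 2 * κm * (1 / (2 * κp)) = κm / κp := by field_simp
    linear_combination Real.log (rfun s - rm) * e1 + Real.log (rp - rfun s) * e2
  obtain ⟨gm, hgm, hgmb⟩ := aux_bound (U κm) (fun r => κm / κp * Real.log (rp - r)) rm rp
    (κm / κp * Real.log (rp - rm)) (hUcont κm) (by
      intro r hr
      refine mul_le_mul_of_nonpos_left ?_ (div_nonpos_of_nonneg_of_nonpos hκmpos.le hκpneg.le)
      exact Real.log_le_log (by linarith [hr.2]) (by linarith [hr.1]))
  have limm : Tendsto rfun atBot (nhds rm) :=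
    aux_lim κm atBot hlm rfun rm 1 (by simp) Gm gm hgm (fun s => hgmb _ (hrmem s)) hEm
  obtain ⟨am, ham, bm, c'm, m1, m2, m3, m4, m5, m6⟩ := aux_end κm atBot hlm hm2 rfun rm 1 hrm limm
    one_ne_zero Gm Φm F hGmc (Real.exp_pos _) hEm hΦm (by rw [hΦm0]; linarith)
    (fun s => hΦmF _ (hrpos s)) m (q * Q) a b c ha hb hc
  -- right end
  set Gp : ℝ → ℝ := fun r => Real.exp (U κp r + κp / κm * Real.log (r - rm)) with hGp
  have hGpc : ContDiffAt ℝ 2 Gp rp := by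
    have e1 : ContDiffAt ℝ 2 (fun r => Real.log (r - rm)) rp :=
      (contDiffAt_id.sub contDiffAt_const).log (sub_pos.2 hrmp).ne'
    exact ((hUc κp rp hrmp.le).add (contDiffAt_const.mul e1)).exp
  have hEp : ∀ s, Real.exp (2 * κp * s) = (-1) * (rfun s - rp) * Gp (rfun s) := by
    intro s
    have h1 : 0 < rp - rfun s := sub_pos.2 (hrmem s).2
    have h2 : (-1) * (rfun s - rp) = rp - rfun s := by ring
    rw [h2]
    nth_rewrite 1 [← hrinv s]
    nth_rewrite 1 [← Real.exp_log h1]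
    rw [hGp, ← Real.exp_add, hx, hU]
    congr 1
    have := hκpneg.ne
    have e1 : 2 * κp * (1 / (2 * κp)) = 1 := by field_simp
    have e2 : 2 * κp * (1 / (2 * κm)) = κp / κm := by field_simp
    linear_combination Real.log (rp - rfun s) * e1 + Real.log (rfun s - rm) * e2
  obtain ⟨gp, hgp, hgpb⟩ := aux_bound (U κp) (fun r => κp / κm * Real.log (r - rm)) rm rp
    (κp / κm * Real.log (rp - rm)) (hUcont κp) (by
      intro r hr
      refine mul_le_mul_of_nonpos_left ?_ (div_nonpos_of_nonpos_of_nonneg hκpneg.le hκmpos.le)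
      exact Real.log_le_log (by linarith [hr.1]) (by linarith [hr.2]))
  have limp : Tendsto rfun atTop (nhds rp) :=
    aux_lim κp atTop hlp rfun rp (-1) (by simp) Gp gp hgp (fun s => hgpb _ (hrmem s)) hEp
  obtain ⟨ap, hap, bp, c'p, p1, p2, p3, p4, p5, p6⟩ := aux_end κp atTop hlp hp2 rfun rp (-1) hrp limp
    (by norm_num) Gp Φp F hGpc (Real.exp_pos _) hEp hΦp (by rw [hΦp0]; linarith)
    (fun s => hΦpF _ (hrpos s)) m (q * Q) a b c ha hb hc
  subst hcm hcp
  exact ⟨am, ham, ap, hap, bm, bp, c'm, c'p, m1, m2, m3, m4, m5, m6, p1, p2, p3, p4, p5, p6⟩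
end

section
/- Set C = exp(∫_ℝ b(s) ds). Then: (i) for every n ∈ ℕ, every bounded continuous M : ℝ → M₂(ℂ) satisfying the Volterra integral equation M(x) = I₂ + ∫_{−∞}^x ( ∫_{−∞}^y e^{2iλ(t−y)} k(y,n) k(t,n)* M(t) dt ) dy for all x ∈ ℝ satisfies ‖M(x)‖ ≤ C·exp( n·∫_{−∞}^x a(s) ds ) for all x ∈ ℝ; (ii) the same bound ‖M(x)‖ ≤ C·exp( n·∫_{−∞}^x a(s) ds ) holds for every bounded continuous M : ℝ → M₂(ℂ) satisfying M(x) = i·∫_{−∞}^x e^{2iλ(x−y)} k(y,n) dy + ∫_{−∞}^x ( ∫_{−∞}^y e^{2iλ(x−y)} k(y,n) k(t,n)* M(t) dt ) dy for all x ∈ ℝ. -/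
open MeasureTheory Matrix

attribute [local instance] Matrix.normedAddCommGroup Matrix.normedSpace

/-- The matrix potential `k(x,n) = e^{2iC⁻(x)}·[[−ib(x), na(x)], [−na(x), ib(x)]]`. -/
noncomputable def kmat (a b Cm : ℝ → ℝ) (n : ℕ) (x : ℝ) : Matrix (Fin 2) (Fin 2) ℂ :=
  Complex.exp (2 * Complex.I * (Cm x : ℂ)) •
    !![-(Complex.I * (b x : ℂ)), (n : ℂ) * (a x : ℂ);
       -((n : ℂ) * (a x : ℂ)), Complex.I * (b x : ℂ)]

/-- The operator norm on 2×2 complex matrices induced by the `ℓ¹` norm on `ℂ²`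
(the maximum of the column sums of the moduli of the entries). -/
noncomputable def opNorm1 (M : Matrix (Fin 2) (Fin 2) ℂ) : ℝ :=
  max (‖M 0 0‖ + ‖M 1 0‖) (‖M 0 1‖ + ‖M 1 1‖)

lemma op_zero : opNorm1 0 = 0 := by simp [opNorm1]

lemma op_nonneg (M : Matrix (Fin 2) (Fin 2) ℂ) : 0 ≤ opNorm1 M :=
  le_max_of_le_left (by positivity)

lemma op_one : opNorm1 1 = 1 := by simp [opNorm1]

lemma op_add (P Q : Matrix (Fin 2) (Fin 2) ℂ) : opNorm1 (P + Q) ≤ opNorm1 P + opNorm1 Q := by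
  unfold opNorm1
  simp only [Matrix.add_apply]
  apply max_le
  · have h1 := norm_add_le (P 0 0) (Q 0 0)
    have h2 := norm_add_le (P 1 0) (Q 1 0)
    have h3 := le_max_left (‖P 0 0‖ + ‖P 1 0‖) (‖P 0 1‖ + ‖P 1 1‖)
    have h4 := le_max_left (‖Q 0 0‖ + ‖Q 1 0‖) (‖Q 0 1‖ + ‖Q 1 1‖)
    linarith
  · have h1 := norm_add_le (P 0 1) (Q 0 1)
    have h2 := norm_add_le (P 1 1) (Q 1 1)
    have h3 := le_max_right (‖P 0 0‖ + ‖P 1 0‖) (‖P 0 1‖ + ‖P 1 1‖)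
    have h4 := le_max_right (‖Q 0 0‖ + ‖Q 1 0‖) (‖Q 0 1‖ + ‖Q 1 1‖)
    linarith

lemma op_smul (c : ℂ) (P : Matrix (Fin 2) (Fin 2) ℂ) : opNorm1 (c • P) = ‖c‖ * opNorm1 P := by
  unfold opNorm1
  simp only [Matrix.smul_apply, smul_eq_mul, norm_mul]
  rw [mul_max_of_nonneg _ _ (norm_nonneg c), mul_add, mul_add]

lemma op_col (P : Matrix (Fin 2) (Fin 2) ℂ) (j : Fin 2) : ‖P 0 j‖ + ‖P 1 j‖ ≤ opNorm1 P := by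
  fin_cases j
  · exact le_max_left _ _
  · exact le_max_right _ _

lemma op_le (P : Matrix (Fin 2) (Fin 2) ℂ) (r : ℝ) (h : ∀ j, ‖P 0 j‖ + ‖P 1 j‖ ≤ r) :
    opNorm1 P ≤ r := max_le (h 0) (h 1)

lemma op_mul (P Q : Matrix (Fin 2) (Fin 2) ℂ) : opNorm1 (P * Q) ≤ opNorm1 P * opNorm1 Q := by
  apply op_le
  intro j
  have e : ∀ i, ‖(P * Q) i j‖ ≤ ‖P i 0‖ * ‖Q 0 j‖ + ‖P i 1‖ * ‖Q 1 j‖ := by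
    intro i
    rw [Matrix.mul_apply, Fin.sum_univ_two, ← norm_mul, ← norm_mul]
    exact norm_add_le _ _
  have h0 := mul_le_mul_of_nonneg_right (op_col P 0) (norm_nonneg (Q 0 j))
  have h1 := mul_le_mul_of_nonneg_right (op_col P 1) (norm_nonneg (Q 1 j))
  have h2 := mul_le_mul_of_nonneg_left (op_col Q j) (op_nonneg P)
  have := e 0
  have := e 1
  linarith

lemma norm_phase (r : ℝ) : ‖Complex.exp (2 * Complex.I * (r : ℂ))‖ = 1 := by
  rw [show 2 * Complex.I * (r : ℂ) = ((2 * r : ℝ) : ℂ) * Complex.I by push_cast; ring]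
  exact Complex.norm_exp_ofReal_mul_I _

lemma norm_phase' (l x y : ℝ) :
    ‖Complex.exp (2 * Complex.I * (l : ℂ) * ((x : ℂ) - (y : ℂ)))‖ = 1 := by
  rw [show 2 * Complex.I * (l : ℂ) * ((x : ℂ) - (y : ℂ)) = 2 * Complex.I * ((l * (x - y) : ℝ) : ℂ)
    by push_cast; ring]
  exact norm_phase _

lemma op_kmat (a b Cm : ℝ → ℝ) (ha0 : ∀ x, 0 ≤ a x) (hb0 : ∀ x, 0 ≤ b x) (n : ℕ) (x : ℝ) :
    opNorm1 (kmat a b Cm n x) = n * a x + b x := by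
  unfold kmat
  rw [op_smul, norm_phase, one_mul]
  simp [opNorm1, abs_of_nonneg (ha0 x), abs_of_nonneg (hb0 x), add_comm]

lemma op_kmat' (a b Cm : ℝ → ℝ) (ha0 : ∀ x, 0 ≤ a x) (hb0 : ∀ x, 0 ≤ b x) (n : ℕ) (x : ℝ) :
    opNorm1 (kmat a b Cm n x)ᴴ = n * a x + b x := by
  rw [← op_kmat a b Cm ha0 hb0 n x]
  unfold kmat
  rw [Matrix.conjTranspose_smul, op_smul, op_smul, norm_star]
  simp [opNorm1, abs_of_nonneg (ha0 x), abs_of_nonneg (hb0 x), add_comm]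

lemma col_integral {E : Type*} [NormedAddCommGroup E] [NormedSpace ℝ E] (L0 L1 : E →L[ℝ] ℂ)
    (f : ℝ → E) (g : ℝ → ℝ) (s : Set ℝ)
    (hg : IntegrableOn g s) (h : ∀ t, ‖L0 (f t)‖ + ‖L1 (f t)‖ ≤ g t) [CompleteSpace E] :
    ‖L0 (∫ t in s, f t)‖ + ‖L1 (∫ t in s, f t)‖ ≤ ∫ t in s, g t := by
  by_cases hf : IntegrableOn f s
  · have i0 : IntegrableOn (fun t => L0 (f t)) s := L0.integrable_comp hf
    have i1 : IntegrableOn (fun t => L1 (f t)) s := L1.integrable_comp hf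
    rw [← L0.integral_comp_comm hf, ← L1.integral_comp_comm hf]
    calc _ ≤ (∫ t in s, ‖L0 (f t)‖) + ∫ t in s, ‖L1 (f t)‖ :=
          add_le_add (norm_integral_le_integral_norm _) (norm_integral_le_integral_norm _)
      _ = ∫ t in s, (‖L0 (f t)‖ + ‖L1 (f t)‖) := (integral_add i0.norm i1.norm).symm
      _ ≤ _ := integral_mono (i0.norm.add i1.norm) hg h
  · rw [integral_undef hf, map_zero, map_zero, norm_zero, add_zero]
    exact integral_nonneg fun t => (by positivity : (0:ℝ) ≤ _).trans (h t)

lemma op_integral (f : ℝ → Matrix (Fin 2) (Fin 2) ℂ) (g : ℝ → ℝ) (s : Set ℝ)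
    (hg : IntegrableOn g s) (h : ∀ t, opNorm1 (f t) ≤ g t) :
    opNorm1 (∫ t in s, f t) ≤ ∫ t in s, g t := by
  apply op_le
  intro j
  let L : Fin 2 → (Fin 2 → Fin 2 → ℂ) →L[ℝ] ℂ := fun i =>
    (ContinuousLinearMap.proj (R := ℝ) (φ := fun _ : Fin 2 => ℂ) j).comp
      (ContinuousLinearMap.proj (R := ℝ) (φ := fun _ : Fin 2 => Fin 2 → ℂ) i)
  exact col_integral (E := Fin 2 → Fin 2 → ℂ) (L 0) (L 1) f g s hg
    (fun t => (op_col (f t) j).trans (h t))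

section kern
variable {k : ℝ → ℝ}

lemma A_deriv (hk : Continuous k) (hki : Integrable k) (x : ℝ) :
    HasDerivAt (fun x => ∫ s in Set.Iic x, k s) (k x) x := by
  have h : (fun x => ∫ s in Set.Iic x, k s)
      = fun x => (∫ s in Set.Iic 0, k s) + ∫ s in (0:ℝ)..x, k s := by
    funext x
    rw [← intervalIntegral.integral_Iic_sub_Iic hki.integrableOn hki.integrableOn]
    ring
  rw [h]
  exact (intervalIntegral.integral_hasDerivAt_right (hk.intervalIntegrable _ _)
    hk.stronglyMeasurable.stronglyMeasurableAtFilter hk.continuousAt).const_add _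

lemma A_tendsto (hki : Integrable k) :
    Filter.Tendsto (fun x => ∫ s in Set.Iic x, k s) Filter.atBot (nhds 0) := by
  have h : (fun x => ∫ s in Set.Iic x, k s)
      = fun x => (∫ s in Set.Iic 0, k s) - ∫ s in x..(0:ℝ), k s := by
    funext x
    rw [← intervalIntegral.integral_Iic_sub_Iic hki.integrableOn hki.integrableOn]
    ring
  rw [h]
  have := intervalIntegral_tendsto_integral_Iic (μ := volume) (f := k) (0:ℝ) hki.integrableOn
    Filter.tendsto_id
  simpa using this.const_sub (∫ s in Set.Iic 0, k s)

lemma A_nonneg (hk0 : ∀ x, 0 ≤ k x) (x : ℝ) : 0 ≤ ∫ s in Set.Iic x, k s :=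
  integral_nonneg hk0

lemma A_le (hk0 : ∀ x, 0 ≤ k x) (hki : Integrable k) (x : ℝ) :
    ∫ s in Set.Iic x, k s ≤ ∫ s, k s :=
  setIntegral_le_integral hki (Filter.Eventually.of_forall hk0)

lemma kexp_int (hk : Continuous k) (hk0 : ∀ x, 0 ≤ k x) (hki : Integrable k) :
    Integrable (fun t => k t * Real.exp (∫ s in Set.Iic t, k s)) := by
  have hc : Continuous (fun x => ∫ s in Set.Iic x, k s) :=
    continuous_iff_continuousAt.2 fun x => (A_deriv hk hki x).continuousAt
  refine hki.mul_bdd (c := Real.exp (∫ s, k s)) (Real.continuous_exp.comp hc).aestronglyMeasurable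
    (Filter.Eventually.of_forall fun t => ?_)
  rw [Real.norm_eq_abs, abs_of_pos (Real.exp_pos _)]
  exact Real.exp_le_exp.2 (A_le hk0 hki t)

lemma kexp_integral (hk : Continuous k) (hk0 : ∀ x, 0 ≤ k x) (hki : Integrable k) (y : ℝ) :
    ∫ t in Set.Iic y, k t * Real.exp (∫ s in Set.Iic t, k s)
      = Real.exp (∫ s in Set.Iic y, k s) - 1 := by
  have ht : Filter.Tendsto (fun x => Real.exp (∫ s in Set.Iic x, k s)) Filter.atBot (nhds 1) := by
    have := (Real.continuous_exp.tendsto 0).comp (A_tendsto hki)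
    simpa [Function.comp_def] using this
  refine integral_Iic_of_hasDerivAt_of_tendsto' (f := fun x => Real.exp (∫ s in Set.Iic x, k s))
    (fun x _ => ?_) (kexp_int hk hk0 hki).integrableOn ht
  have := (A_deriv hk hki x).exp
  rwa [mul_comm] at this

lemma gron (hk0 : ∀ x, 0 ≤ k x) (hki : Integrable k) (u : ℝ → ℝ) (hu : ∃ K, ∀ x, u x ≤ K)
    (step : ∀ S, 1 ≤ S → (∀ x, u x ≤ S * Real.exp (∫ s in Set.Iic x, k s)) →
      ∀ x, u x ≤ 1 + (∫ s in Set.Iic x, k s) +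
        S * (Real.exp (∫ s in Set.Iic x, k s) - 1 - ∫ s in Set.Iic x, k s)) (x : ℝ) :
    u x ≤ Real.exp (∫ s in Set.Iic x, k s) := by
  set A := fun x => ∫ s in Set.Iic x, k s with hA
  have hA0 : ∀ x, 0 ≤ A x := A_nonneg hk0
  have hA1 : ∀ x, A x ≤ ∫ s, k s := A_le hk0 hki
  set w := fun x => u x * Real.exp (-A x) with hw
  have conv : ∀ S x, u x ≤ S * Real.exp (A x) ↔ w x ≤ S := by
    intro S x
    simp only [hw, Real.exp_neg]
    rw [← div_eq_mul_inv, div_le_iff₀ (Real.exp_pos _)]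
  obtain ⟨K, hK⟩ := hu
  have hbd : BddAbove (Set.range w) := by
    refine ⟨max K 0, ?_⟩
    rintro _ ⟨x, rfl⟩
    refine (conv _ x).1 ((hK x).trans ?_)
    have h1 : 1 ≤ Real.exp (A x) := Real.one_le_exp (hA0 x)
    have h2 := le_max_left K 0
    have h3 := le_max_right K 0
    nlinarith
  set T := sSup (Set.range w) with hT
  have hwT : ∀ x, w x ≤ T := fun x => le_csSup hbd ⟨x, rfl⟩
  by_cases h1 : T ≤ 1
  · have := (conv 1 x).2 ((hwT x).trans h1)
    simpa using this
  · push Not at h1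
    exfalso
    have hs := step T h1.le (fun x => (conv T x).2 (hwT x))
    have : T ≤ T - (T - 1) * Real.exp (-∫ s, k s) := by
      refine csSup_le (Set.range_nonempty _) ?_
      rintro _ ⟨x, rfl⟩
      have h2 := hs x
      have h3 : w x ≤ (1 + A x + T * (Real.exp (A x) - 1 - A x)) * Real.exp (-A x) :=
        mul_le_mul_of_nonneg_right h2 (Real.exp_pos _).le
      have h4 : Real.exp (A x) * Real.exp (-A x) = 1 := by rw [← Real.exp_add]; simp
      have h5 : Real.exp (-∫ s, k s) ≤ Real.exp (-A x) :=
        Real.exp_le_exp.2 (neg_le_neg (hA1 x))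
      have h6 := hA0 x
      have h7 := Real.exp_pos (-A x)
      have h8 : (1 + A x + T * (Real.exp (A x) - 1 - A x)) * Real.exp (-A x)
          = T - (T - 1) * Real.exp (-A x) - (T - 1) * (A x * Real.exp (-A x)) := by
        linear_combination T * h4
      have h9 : 0 ≤ (T - 1) * (A x * Real.exp (-A x)) :=
        mul_nonneg (by linarith) (by positivity)
      have h10 := mul_le_mul_of_nonneg_left h5 (by linarith : 0 ≤ T - 1)
      linarith
    have := mul_pos (by linarith : 0 < T - 1) (Real.exp_pos (-∫ s, k s))
    linarith

lemma dbl (hk : Continuous k) (hk0 : ∀ x, 0 ≤ k x) (hki : Integrable k) (S : ℝ)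
    (P Q M : ℝ → Matrix (Fin 2) (Fin 2) ℂ) (hP : ∀ x, opNorm1 (P x) = k x)
    (hQ : ∀ x, opNorm1 (Q x) = k x)
    (hM : ∀ x, opNorm1 (M x) ≤ S * Real.exp (∫ s in Set.Iic x, k s))
    (e : ℝ → ℝ → ℂ) (he : ∀ y t, ‖e y t‖ = 1) (x : ℝ) :
    opNorm1 (∫ y in Set.Iic x, ∫ t in Set.Iic y, e y t • (P y * Q t * M t)) ≤
      S * (Real.exp (∫ s in Set.Iic x, k s) - 1 - ∫ s in Set.Iic x, k s) := by
  have hi := kexp_int hk hk0 hki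
  have inner : ∀ y, opNorm1 (∫ t in Set.Iic y, e y t • (P y * Q t * M t)) ≤
      S * (k y * Real.exp (∫ s in Set.Iic y, k s) - k y) := by
    intro y
    have := op_integral (fun t => e y t • (P y * Q t * M t))
      (fun t => (S * k y) * (k t * Real.exp (∫ s in Set.Iic t, k s))) (Set.Iic y)
      (hi.const_mul _).integrableOn (fun t => by
        rw [op_smul, he, one_mul]
        calc _ ≤ opNorm1 (P y * Q t) * opNorm1 (M t) := op_mul _ _
          _ ≤ (k y * k t) * opNorm1 (M t) := by
            refine mul_le_mul_of_nonneg_right ?_ (op_nonneg _)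
            rw [← hP y, ← hQ t]; exact op_mul _ _
          _ ≤ (k y * k t) * (S * Real.exp (∫ s in Set.Iic t, k s)) :=
            mul_le_mul_of_nonneg_left (hM t) (mul_nonneg (hk0 y) (hk0 t))
          _ = _ := by ring)
    rw [integral_const_mul, kexp_integral hk hk0 hki] at this
    linarith
  have := op_integral _ _ (Set.Iic x) ((hi.sub hki).const_mul S).integrableOn inner
  rw [integral_const_mul] at this
  simp only [Pi.sub_apply] at this
  rw [integral_sub hi.integrableOn hki.integrableOn, kexp_integral hk hk0 hki] at this
  exact this

end kern

/-- With `C = exp(∫_ℝ b)`, every bounded continuous solution of either of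
the two Volterra integral equations for the Faddeev blocks `M̂_{R1}`, `M̂_{R2}` satisfies
`‖M(x)‖ ≤ C·exp(n·∫_{−∞}^x a(s) ds)`. -/
theorem stmt_2 (a b : ℝ → ℝ) (hacont : Continuous a) (hbcont : Continuous b)
    (ha0 : ∀ x, 0 ≤ a x) (hb0 : ∀ x, 0 ≤ b x)
    (haint : Integrable a) (hbint : Integrable b)
    (Cm : ℝ → ℝ) (hCmcont : Continuous Cm) (lam : ℝ)
    (C : ℝ) (hC : C = Real.exp (∫ s, b s)) :
    (∀ n : ℕ, ∀ M : ℝ → Matrix (Fin 2) (Fin 2) ℂ,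
      Continuous M → (∃ K : ℝ, ∀ x, opNorm1 (M x) ≤ K) →
      (∀ x, M x = 1 + ∫ y in Set.Iic x, ∫ t in Set.Iic y,
          Complex.exp (2 * Complex.I * (lam : ℂ) * ((t : ℂ) - (y : ℂ))) •
            (kmat a b Cm n y * (kmat a b Cm n t)ᴴ * M t)) →
      ∀ x, opNorm1 (M x) ≤ C * Real.exp (n * ∫ s in Set.Iic x, a s)) ∧
    (∀ n : ℕ, ∀ M : ℝ → Matrix (Fin 2) (Fin 2) ℂ,
      Continuous M → (∃ K : ℝ, ∀ x, opNorm1 (M x) ≤ K) →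
      (∀ x, M x = (Complex.I •
            ∫ y in Set.Iic x,
              Complex.exp (2 * Complex.I * (lam : ℂ) * ((x : ℂ) - (y : ℂ))) • kmat a b Cm n y)
          + ∫ y in Set.Iic x, ∫ t in Set.Iic y,
              Complex.exp (2 * Complex.I * (lam : ℂ) * ((x : ℂ) - (y : ℂ))) •
                (kmat a b Cm n y * (kmat a b Cm n t)ᴴ * M t)) →
      ∀ x, opNorm1 (M x) ≤ C * Real.exp (n * ∫ s in Set.Iic x, a s)) := by
  have hkc : ∀ n : ℕ, Continuous (fun x => n * a x + b x) := fun n => by fun_prop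
  have hk0 : ∀ n : ℕ, ∀ x, 0 ≤ (n : ℝ) * a x + b x := fun n x =>
    add_nonneg (mul_nonneg n.cast_nonneg (ha0 x)) (hb0 x)
  have hki : ∀ n : ℕ, Integrable (fun x => n * a x + b x) := fun n =>
    (haint.const_mul _).add hbint
  have fin : ∀ n : ℕ, ∀ x, Real.exp (∫ s in Set.Iic x, ((n : ℝ) * a s + b s)) ≤
      C * Real.exp (n * ∫ s in Set.Iic x, a s) := by
    intro n x
    rw [integral_add (haint.const_mul _).integrableOn hbint.integrableOn, integral_const_mul, hC,
      ← Real.exp_add]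
    apply Real.exp_le_exp.2
    have := A_le hb0 hbint x
    linarith
  constructor
  · intro n M _ hb hM x
    refine (gron (hk0 n) (hki n) (fun x => opNorm1 (M x)) hb ?_ x).trans (fin n x)
    intro S _ hS x
    have h := dbl (hkc n) (hk0 n) (hki n) S (kmat a b Cm n) (fun t => (kmat a b Cm n t)ᴴ) M
      (op_kmat a b Cm ha0 hb0 n) (op_kmat' a b Cm ha0 hb0 n) hS
      (fun y t => Complex.exp (2 * Complex.I * (lam : ℂ) * ((t : ℂ) - (y : ℂ))))
      (fun y t => norm_phase' lam t y) x
    have h2 := A_nonneg (hk0 n) x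
    have h3 := congrArg opNorm1 (hM x)
    have h4 := h3.le.trans (op_add _ _)
    rw [op_one] at h4
    beta_reduce
    linarith
  · intro n M _ hb hM x
    refine (gron (hk0 n) (hki n) (fun x => opNorm1 (M x)) hb ?_ x).trans (fin n x)
    intro S _ hS x
    have h := dbl (hkc n) (hk0 n) (hki n) S (kmat a b Cm n) (fun t => (kmat a b Cm n t)ᴴ) M
      (op_kmat a b Cm ha0 hb0 n) (op_kmat' a b Cm ha0 hb0 n) hS
      (fun y t => Complex.exp (2 * Complex.I * (lam : ℂ) * ((x : ℂ) - (y : ℂ))))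
      (fun y t => norm_phase' lam x y) x
    have h2 := op_integral (fun y => Complex.exp (2 * Complex.I * (lam : ℂ) * ((x : ℂ) - (y : ℂ)))
      • kmat a b Cm n y) _ (Set.Iic x) (hki n).integrableOn (fun t => by
        rw [op_smul, norm_phase', one_mul, op_kmat a b Cm ha0 hb0 n])
    have h3 := congrArg opNorm1 (hM x)
    have h4 := h3.le.trans (op_add _ _)
    rw [op_smul, Complex.norm_I, one_mul] at h4
    beta_reduce
    linarith
end

section
/- As X → 0⁺ one has: a(h(X)) = κ_-·X + O(X³); a'(h(X)) = κ_-²·X + O(X³); b(h(X)) = (b_-·κ_- /a_-)·X + O(X³); b'(h(X)) = (b_-·κ_-²/a_-)·X + O(X³); c(h(X)) = c_- + c'_-·(κ_- /a_-)²·X² + O(X⁴); and c'(h(X)) = 2·c'_-·κ_-·(κ_- /a_-)²·X² + O(X⁴), where primes denote derivatives with respect to x. -/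
open Asymptotics Filter MeasureTheory

theorem aux_cubic {α β γ δ p q r s : ℝ} (hpq : p ≠ q) (hpr : p ≠ r) (hps : p ≠ s)
    (hqr : q ≠ r) (hqs : q ≠ s) (hrs : r ≠ s)
    (h1 : α * p ^ 3 + β * p ^ 2 + γ * p + δ = 0) (h2 : α * q ^ 3 + β * q ^ 2 + γ * q + δ = 0)
    (h3 : α * r ^ 3 + β * r ^ 2 + γ * r + δ = 0) (h4 : α * s ^ 3 + β * s ^ 2 + γ * s + δ = 0) :
    ∀ t, α * t ^ 3 + β * t ^ 2 + γ * t + δ = 0 := by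
  have e1 : α * (p ^ 2 + p * q + q ^ 2) + β * (p + q) + γ = 0 := by
    apply mul_left_cancel₀ (sub_ne_zero.2 hpq); linear_combination h1 - h2
  have e2 : α * (p ^ 2 + p * r + r ^ 2) + β * (p + r) + γ = 0 := by
    apply mul_left_cancel₀ (sub_ne_zero.2 hpr); linear_combination h1 - h3
  have e3 : α * (p ^ 2 + p * s + s ^ 2) + β * (p + s) + γ = 0 := by
    apply mul_left_cancel₀ (sub_ne_zero.2 hps); linear_combination h1 - h4
  have f1 : α * (p + q + r) + β = 0 := by
    apply mul_left_cancel₀ (sub_ne_zero.2 hqr); linear_combination e1 - e2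
  have f2 : α * (p + q + s) + β = 0 := by
    apply mul_left_cancel₀ (sub_ne_zero.2 hqs); linear_combination e1 - e3
  have g1 : α = 0 := by
    apply mul_left_cancel₀ (sub_ne_zero.2 hrs); linear_combination f1 - f2
  subst g1
  have g2 : β = 0 := by linarith
  subst g2
  have g3 : γ = 0 := by linarith
  subst g3
  have g4 : δ = 0 := by linarith
  subst g4
  intro t; ring

theorem aux_deriv_s4 {F H : ℝ → ℝ} {p : ℝ} (h : ∀ r, r ≠ 0 → F r = (r - p) * H r) (hp : p ≠ 0)
    (hH : DifferentiableAt ℝ H p) : HasDerivAt F (H p) p := by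
  have h1 : HasDerivAt (fun r => (r - p) * H r) (1 * H p + (p - p) * deriv H p) p :=
    ((hasDerivAt_id p).sub_const p).mul hH.hasDerivAt
  have h2 : F =ᶠ[nhds p] fun r => (r - p) * H r := by
    filter_upwards [isOpen_ne.mem_nhds hp] with r hr using h r hr
  have := h1.congr_of_eventuallyEq h2
  simpa using this

theorem aux_pf {L n c m p r : ℝ} (hL : L ≠ 0) (hn : n ≠ 0) (hc : c ≠ 0) (hm : m ≠ 0) (hp : p ≠ 0)
    (hr : r ≠ 0) (h1 : r - n ≠ 0) (h2 : r - c ≠ 0) (h3 : r - m ≠ 0) (h4 : p - r ≠ 0)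
    (d1 : n - c ≠ 0) (d2 : n - m ≠ 0) (d3 : n - p ≠ 0) (d4 : c - m ≠ 0) (d5 : c - p ≠ 0)
    (d6 : m - p ≠ 0) :
    1 / (-L * ((n - c) * (n - m) * (n - p)) / n ^ 2) * (1 / (r - n))
    + 1 / (-L * ((c - n) * (c - m) * (c - p)) / c ^ 2) * (1 / (r - c))
    + 1 / (-L * ((m - n) * (m - c) * (m - p)) / m ^ 2) * (1 / (r - m))
    + 1 / (-L * ((p - n) * (p - c) * (p - m)) / p ^ 2) * (-1 / (p - r))
    = (-L * ((r - n) * (r - c) * (r - m) * (r - p)) / r ^ 2)⁻¹ := by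
  have e1 : c - n ≠ 0 := by rw [← neg_sub]; exact neg_ne_zero.2 d1
  have e2 : m - n ≠ 0 := by rw [← neg_sub]; exact neg_ne_zero.2 d2
  have e3 : p - n ≠ 0 := by rw [← neg_sub]; exact neg_ne_zero.2 d3
  have e4 : m - c ≠ 0 := by rw [← neg_sub]; exact neg_ne_zero.2 d4
  have e5 : p - c ≠ 0 := by rw [← neg_sub]; exact neg_ne_zero.2 d5
  have e6 : p - m ≠ 0 := by rw [← neg_sub]; exact neg_ne_zero.2 d6
  have e7 : r - p ≠ 0 := by rw [← neg_sub]; exact neg_ne_zero.2 h4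
  rw [← neg_sub n c, ← neg_sub n m, ← neg_sub n p, ← neg_sub c m, ← neg_sub c p, ← neg_sub m p,
    ← neg_sub p r]
  field_simp
  ring

/-- Asymptotics of the potentials in the Liouville variable `X = g(x)`
as `X → 0⁺`: `a(h(X)) = κ₋X + O(X³)`, `a'(h(X)) = κ₋²X + O(X³)`,
`b(h(X)) = (b₋κ₋/a₋)X + O(X³)`, `b'(h(X)) = (b₋κ₋²/a₋)X + O(X³)`,
`c(h(X)) = c₋ + c'₋(κ₋/a₋)²X² + O(X⁴)`, `c'(h(X)) = 2c'₋κ₋(κ₋/a₋)²X² + O(X⁴)`. -/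
theorem stmt_4 (M Q Λ : ℝ) (hM : 0 < M) (hΛ : 0 < Λ)
    (rn rc rm rp : ℝ) (hrn : rn < 0) (hrc : 0 < rc) (hrcm : rc < rm) (hrmp : rm < rp)
    (F : ℝ → ℝ)
    (hF : ∀ r, F r = 1 - 2 * M / r + Q ^ 2 / r ^ 2 - Λ * r ^ 2 / 3)
    (hFn : F rn = 0) (hFc : F rc = 0) (hFm : F rm = 0) (hFp : F rp = 0)
    (hFpos : ∀ r ∈ Set.Ioo rm rp, 0 < F r)
    (κn κc κm κp : ℝ)
    (hκn : κn = deriv F rn / 2) (hκc : κc = deriv F rc / 2)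
    (hκm : κm = deriv F rm / 2) (hκp : κp = deriv F rp / 2)
    (hκmpos : 0 < κm) (hκpneg : κp < 0)
    (x : ℝ → ℝ)
    (hx : ∀ r, x r = 1 / (2 * κn) * Real.log (r - rn) + 1 / (2 * κc) * Real.log (r - rc)
      + 1 / (2 * κm) * Real.log (r - rm) + 1 / (2 * κp) * Real.log (rp - r))
    (rfun : ℝ → ℝ)
    (hrmem : ∀ s, rfun s ∈ Set.Ioo rm rp) (hrinv : ∀ s, x (rfun s) = s)
    (m q : ℝ) (a b c : ℝ → ℝ)
    (ha : ∀ s, a s = Real.sqrt (F (rfun s)) / rfun s)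
    (hb : ∀ s, b s = m * Real.sqrt (F (rfun s)))
    (hc : ∀ s, c s = q * Q / rfun s)
    (cm cp : ℝ) (hcm : cm = q * Q / rm) (hcp : cp = q * Q / rp)
    (am bm c'm : ℝ) (ham : 0 < am)
    (haas : (fun s => a s - am * Real.exp (κm * s)) =O[atBot] fun s => Real.exp (3 * κm * s))
    (hbas : (fun s => b s - bm * Real.exp (κm * s)) =O[atBot] fun s => Real.exp (3 * κm * s))
    (hcas : (fun s => c s - (cm + c'm * Real.exp (2 * κm * s)))
      =O[atBot] fun s => Real.exp (4 * κm * s))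
    (haint : Integrable a)
    (A : ℝ) (hA : A = ∫ s, a s) (hApos : 0 < A)
    (g : ℝ → ℝ) (hg : ∀ t, g t = ∫ s in Set.Iic t, a s)
    (hfun : ℝ → ℝ) (hgh : ∀ t, hfun (g t) = t)
    (hhg : ∀ X ∈ Set.Ioo (0 : ℝ) A, g (hfun X) = X) :
    ((fun X => a (hfun X) - κm * X) =O[nhdsWithin 0 (Set.Ioi 0)] fun X => X ^ 3) ∧
    ((fun X => deriv a (hfun X) - κm ^ 2 * X) =O[nhdsWithin 0 (Set.Ioi 0)] fun X => X ^ 3) ∧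
    ((fun X => b (hfun X) - bm * κm / am * X) =O[nhdsWithin 0 (Set.Ioi 0)] fun X => X ^ 3) ∧
    ((fun X => deriv b (hfun X) - bm * κm ^ 2 / am * X)
      =O[nhdsWithin 0 (Set.Ioi 0)] fun X => X ^ 3) ∧
    ((fun X => c (hfun X) - (cm + c'm * (κm / am) ^ 2 * X ^ 2))
      =O[nhdsWithin 0 (Set.Ioi 0)] fun X => X ^ 4) ∧
    ((fun X => deriv c (hfun X) - 2 * c'm * κm * (κm / am) ^ 2 * X ^ 2)
      =O[nhdsWithin 0 (Set.Ioi 0)] fun X => X ^ 4) := by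
  have hrm0 : 0 < rm := by linarith
  have hrp0 : 0 < rp := by linarith
  set L := Λ / 3 with hL
  have hL0 : 0 < L := by positivity
  have root : ∀ t, t ≠ 0 → F t = 0 → -L * t ^ 4 + t ^ 2 - 2 * M * t + Q ^ 2 = 0 := by
    intro t ht h
    rw [hF] at h
    field_simp at h
    rw [hL]; linarith
  have hprod : ∀ r, r ≠ 0 → F r = -L * ((r - rn) * (r - rc) * (r - rm) * (r - rp)) / r ^ 2 := by
    have r1 := root rn hrn.ne hFn
    have r2 := root rc hrc.ne' hFc
    have r3 := root rm hrm0.ne' hFm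
    have r4 := root rp hrp0.ne' hFp
    have key := aux_cubic (α := - L * (rn + rc + rm + rp))
      (β := 1 + L * (rn * rc + rn * rm + rn * rp + rc * rm + rc * rp + rm * rp))
      (γ := -2 * M - L * (rn * rc * rm + rn * rc * rp + rn * rm * rp + rc * rm * rp))
      (δ := Q ^ 2 + L * (rn * rc * rm * rp)) (p := rn) (q := rc) (r := rm) (s := rp)
      (by linarith) (by linarith) (by linarith) (by linarith) (by linarith) (by linarith)
      (by linear_combination r1) (by linear_combination r2) (by linear_combination r3)
      (by linear_combination r4)
    intro r hr
    have k := key r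
    rw [hF]
    field_simp
    rw [hL] at k
    rw [hL]
    linear_combination 3 * k
  have dn : deriv F rn = -L * ((rn - rc) * (rn - rm) * (rn - rp)) / rn ^ 2 :=
    (aux_deriv_s4 (H := fun r => -L * ((r - rc) * (r - rm) * (r - rp)) / r ^ 2)
      (fun r hr => by rw [hprod r hr]; ring) hrn.ne
      (by fun_prop (disch := exact pow_ne_zero _ hrn.ne))).deriv
  have dc : deriv F rc = -L * ((rc - rn) * (rc - rm) * (rc - rp)) / rc ^ 2 :=
    (aux_deriv_s4 (H := fun r => -L * ((r - rn) * (r - rm) * (r - rp)) / r ^ 2)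
      (fun r hr => by rw [hprod r hr]; ring) hrc.ne'
      (by fun_prop (disch := exact pow_ne_zero _ hrc.ne'))).deriv
  have dp : deriv F rp = -L * ((rp - rn) * (rp - rc) * (rp - rm)) / rp ^ 2 :=
    (aux_deriv_s4 (H := fun r => -L * ((r - rn) * (r - rc) * (r - rm)) / r ^ 2)
      (fun r hr => by rw [hprod r hr]; ring) hrp0.ne'
      (by fun_prop (disch := exact pow_ne_zero _ hrp0.ne'))).deriv
  obtain ⟨G, hG⟩ : ∃ G : ℝ → ℝ, G = fun r => -L * ((r - rn) * (r - rc) * (r - rp)) / r ^ 2 :=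
    ⟨_, rfl⟩
  have hGd : DifferentiableAt ℝ G rm := by
    rw [hG]; fun_prop (disch := exact pow_ne_zero _ hrm0.ne')
  have hFG : ∀ r, r ≠ 0 → F r = (r - rm) * G r := by
    intro r hr; rw [hprod r hr, hG]; ring
  have dm' := (aux_deriv_s4 hFG hrm0.ne' hGd)
  have hGm : G rm = 2 * κm := by rw [hκm, dm'.deriv]; ring
  have dm : deriv F rm = -L * ((rm - rn) * (rm - rc) * (rm - rp)) / rm ^ 2 := by
    rw [dm'.deriv, hG]
  -- derivative of x
  have hxd : ∀ r ∈ Set.Ioo rm rp, HasDerivAt x (F r)⁻¹ r := by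
    intro r hr
    obtain ⟨hr1, hr2⟩ := hr
    have hxe : x = fun r => 1 / (2 * κn) * Real.log (r - rn) + 1 / (2 * κc) * Real.log (r - rc)
      + 1 / (2 * κm) * Real.log (r - rm) + 1 / (2 * κp) * Real.log (rp - r) := funext hx
    have i1 : r - rn ≠ 0 := by linarith
    have i2 : r - rc ≠ 0 := by linarith
    have i3 : r - rm ≠ 0 := by linarith
    have i4 : rp - r ≠ 0 := by linarith
    have hr0 : r ≠ 0 := by linarith
    have h := (((((hasDerivAt_id r).sub_const rn).log i1).const_mul (1 / (2 * κn))).add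
      ((((hasDerivAt_id r).sub_const rc).log i2).const_mul (1 / (2 * κc)))).add
      ((((hasDerivAt_id r).sub_const rm).log i3).const_mul (1 / (2 * κm))) |>.add
      ((((hasDerivAt_id r).const_sub rp).log i4).const_mul (1 / (2 * κp)))
    rw [hxe]
    refine HasDerivAt.congr_deriv h ?_
    have k := aux_pf (L := L) (n := rn) (c := rc) (m := rm) (p := rp) (r := r) hL0.ne' hrn.ne
      hrc.ne' hrm0.ne' hrp0.ne' hr0 i1 i2 i3 i4 (by linarith) (by linarith) (by linarith)
      (by linarith) (by linarith) (by linarith)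
    rw [hprod r hr0, ← k, hκn, hκc, hκm, hκp, mul_div_cancel₀ _ (two_ne_zero),
      mul_div_cancel₀ _ (two_ne_zero), mul_div_cancel₀ _ (two_ne_zero),
      mul_div_cancel₀ _ (two_ne_zero), dn, dc, dm, dp]
    simp only [id]
  have hxmono : StrictMonoOn x (Set.Ioo rm rp) := by
    apply strictMonoOn_of_deriv_pos (convex_Ioo _ _)
    · intro r hr; exact (hxd r hr).continuousAt.continuousWithinAt
    · intro r hr
      rw [interior_Ioo] at hr
      rw [(hxd r hr).deriv]; exact inv_pos.2 (hFpos r hr)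
  have hrmono : StrictMono rfun := by
    intro s t hst
    rw [← hxmono.lt_iff_lt (hrmem s) (hrmem t), hrinv, hrinv]; exact hst
  have hrx : ∀ r ∈ Set.Ioo rm rp, rfun (x r) = r := fun r hr =>
    hxmono.injOn (hrmem _) hr (hrinv _)
  have hrcont : ∀ s, ContinuousAt rfun s := by
    intro s
    apply (hrmono.strictMonoOn Set.univ).continuousAt_of_image_mem_nhds Filter.univ_mem
    refine Filter.mem_of_superset (isOpen_Ioo.mem_nhds (hrmem s)) ?_
    intro r hr
    exact ⟨x r, trivial, hrx r hr⟩
  have hrd : ∀ s, HasDerivAt rfun (F (rfun s)) s := by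
    intro s
    have := HasDerivAt.of_local_left_inverse (hrcont s) (hxd _ (hrmem s))
      (inv_ne_zero (hFpos _ (hrmem s)).ne') (Eventually.of_forall hrinv)
    simpa using this
  have hrt : Tendsto rfun atBot (nhds rm) := by
    rw [tendsto_order]
    refine ⟨fun y hy => Eventually.of_forall fun s => hy.trans (hrmem s).1, fun y hy => ?_⟩
    obtain ⟨z, hz1, hz2⟩ := exists_between (lt_min hy hrmp)
    filter_upwards [eventually_lt_atBot (x z)] with s hs
    have := hrmono hs
    rw [hrx z ⟨hz1, hz2.trans_le (min_le_right _ _)⟩] at this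
    exact this.trans (hz2.trans_le (min_le_left _ _))
  have hrpos : ∀ s, 0 < rfun s := fun s => hrm0.trans (hrmem s).1
  have hapos : ∀ s, 0 < a s := fun s => by
    rw [ha]; exact div_pos (Real.sqrt_pos.2 (hFpos _ (hrmem s))) (hrpos s)
  -- derivatives of a, b, c
  have hFd : ∀ r, r ≠ 0 → HasDerivAt F (2 * M / r ^ 2 - 2 * Q ^ 2 / r ^ 3 - 2 * Λ * r / 3) r := by
    intro r hr
    have h : HasDerivAt (fun r : ℝ => 1 - 2 * M * r⁻¹ + Q ^ 2 * (r ^ 2)⁻¹ - Λ / 3 * r ^ 2)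
      (0 - 2 * M * (-(r ^ 2)⁻¹) + Q ^ 2 * (-(2 * r) / (r ^ 2) ^ 2) - Λ / 3 * (2 * r)) r := by
      have p2 : HasDerivAt (fun r : ℝ => r ^ 2) (2 * r) r := by simpa using hasDerivAt_pow 2 r
      exact (((hasDerivAt_const r (1 : ℝ)).sub ((hasDerivAt_inv hr).const_mul (2 * M))).add
        ((p2.fun_inv (pow_ne_zero 2 hr)).const_mul (Q ^ 2))).sub (p2.const_mul (Λ / 3))
    have hFe : F = fun r : ℝ => 1 - 2 * M * r⁻¹ + Q ^ 2 * (r ^ 2)⁻¹ - Λ / 3 * r ^ 2 := by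
      funext r; rw [hF]; ring
    rw [hFe]
    refine h.congr_deriv ?_
    field_simp
    ring
  obtain ⟨D, hD⟩ : ∃ D : ℝ → ℝ, D = fun r => 2 * M / r ^ 2 - 2 * Q ^ 2 / r ^ 3 - 2 * Λ * r / 3 :=
    ⟨_, rfl⟩
  have hFd' : ∀ r, r ≠ 0 → HasDerivAt F (D r) r := by rw [hD]; exact hFd
  have hDd : DifferentiableAt ℝ D rm := by
    rw [hD]; fun_prop (disch := exact pow_ne_zero _ hrm0.ne')
  have hDm : D rm = 2 * κm := by rw [hκm, (hFd' rm hrm0.ne').deriv]; ring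
  have hsq : ∀ s, HasDerivAt (fun s => Real.sqrt (F (rfun s)))
      (Real.sqrt (F (rfun s)) * (D (rfun s) / 2)) s := by
    intro s
    have h0 := hFpos _ (hrmem s)
    have h := ((hFd' _ (hrpos s).ne').comp s (hrd s)).sqrt h0.ne'
    refine h.congr_deriv ?_
    have h1 := Real.sq_sqrt h0.le
    have h2 := (Real.sqrt_pos.2 h0).ne'
    simp only [Function.comp]
    field_simp
    rw [h1]
  have had : ∀ s, deriv a s = a s * (D (rfun s) / 2 - F (rfun s) / rfun s) := by
    intro s
    have h := (hsq s).div (hrd s) (hrpos s).ne'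
    have h' := h.congr_of_eventuallyEq (f₁ := a) (Eventually.of_forall ha)
    rw [h'.deriv, ha]
    have := (hrpos s).ne'
    field_simp
  have hbd : ∀ s, deriv b s = b s * (D (rfun s) / 2) := by
    intro s
    have h' := ((hsq s).const_mul m).congr_of_eventuallyEq (f₁ := b) (Eventually.of_forall hb)
    rw [h'.deriv, hb]; ring
  have hcd : ∀ s, deriv c s = -(q * Q) * F (rfun s) / rfun s ^ 2 := by
    intro s
    have hce : c = fun s => q * Q * (rfun s)⁻¹ := by funext s; rw [hc]; ring
    have h' := (((hrd s).fun_inv (hrpos s).ne').const_mul (q * Q)).congr_of_eventuallyEq (f₁ := c)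
      (Eventually.of_forall (congrFun hce))
    rw [h'.deriv]; ring
  -- asymptotics in s
  obtain ⟨E, hE⟩ : ∃ E : ℝ → ℝ, E = fun s => Real.exp (κm * s) := ⟨_, rfl⟩
  have hEpos : ∀ s, 0 < E s := fun s => by rw [hE]; exact Real.exp_pos _
  have hEt : Tendsto E atBot (nhds 0) := by
    rw [hE]; exact Real.tendsto_exp_atBot.comp (tendsto_id.const_mul_atBot hκmpos)
  have hE2 : ∀ s, Real.exp (2 * κm * s) = E s ^ 2 := fun s => by
    rw [hE, ← Real.exp_nat_mul]; congr 1; push_cast; ring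
  have hE3 : ∀ s, Real.exp (3 * κm * s) = E s ^ 3 := fun s => by
    rw [hE, ← Real.exp_nat_mul]; congr 1; push_cast; ring
  have hE4 : ∀ s, Real.exp (4 * κm * s) = E s ^ 4 := fun s => by
    rw [hE, ← Real.exp_nat_mul]; congr 1; push_cast; ring
  have hgE : (fun t => g t - am / κm * E t) =O[atBot] fun t => E t ^ 3 := by
    obtain ⟨C, hC⟩ := haas.bound
    obtain ⟨T, hT⟩ := eventually_atBot.1 hC
    refine IsBigO.of_bound (C / (3 * κm)) ?_
    filter_upwards [eventually_le_atBot T] with t ht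
    have i1 : IntegrableOn (fun s => am * Real.exp (κm * s)) (Set.Iic t) :=
      (integrableOn_exp_mul_Iic hκmpos t).const_mul am
    have i2 : IntegrableOn (fun s => C * Real.exp (3 * κm * s)) (Set.Iic t) :=
      (integrableOn_exp_mul_Iic (by positivity) t).const_mul C
    have e1 : g t - am / κm * E t = ∫ s in Set.Iic t, (a s - am * Real.exp (κm * s)) := by
      rw [integral_sub haint.integrableOn i1, hg, integral_const_mul,
        integral_exp_mul_Iic hκmpos, hE]; ring
    have e2 : C / (3 * κm) * ‖E t ^ 3‖ = ∫ s in Set.Iic t, C * Real.exp (3 * κm * s) := by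
      rw [integral_const_mul, integral_exp_mul_Iic (by positivity), ← hE3,
        Real.norm_of_nonneg (Real.exp_pos _).le]; ring
    rw [e1, e2]
    apply norm_integral_le_of_norm_le i2
    filter_upwards [ae_restrict_mem measurableSet_Iic] with s hs
    have := hT s (le_trans hs ht)
    rwa [Real.norm_of_nonneg (Real.exp_pos (3 * κm * s)).le] at this
  simp only [hE2, hE3, hE4] at haas hbas hcas
  have haE : (fun s => a s - am * E s) =O[atBot] fun s => E s ^ 3 := by rw [hE] at *; exact haas
  have hbE : (fun s => b s - bm * E s) =O[atBot] fun s => E s ^ 3 := by rw [hE] at *; exact hbas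
  have hE31 : (fun s => E s ^ 3) =O[atBot] E := by
    have h := ((hEt.isBigO_one ℝ).pow 2).mul (isBigO_refl E atBot)
    refine h.congr (fun s => by ring) (fun s => by simp)
  have haO : a =O[atBot] E := by
    have := (haE.trans hE31).add ((isBigO_refl E atBot).const_mul_left am)
    simpa using this
  have hbO : b =O[atBot] E := by
    have := (hbE.trans hE31).add ((isBigO_refl E atBot).const_mul_left bm)
    simpa using this
  have hgO : g =O[atBot] E := by
    have := (hgE.trans hE31).add ((isBigO_refl E atBot).const_mul_left (am / κm))
    simpa using this
  -- E = O(g)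
  have hEg : E =O[atBot] g := by
    have hlit : (fun t => E t ^ 3) =o[atBot] E := by
      have h1 : (fun t => E t ^ 2) =o[atBot] fun _ => (1 : ℝ) := by
        rw [isLittleO_one_iff]; simpa using hEt.pow 2
      refine (h1.mul_isBigO (isBigO_refl E atBot)).congr (fun s => by ring) (fun s => by simp)
    have h2 : (fun t => g t - am / κm * E t) =o[atBot] fun t => am / κm * E t :=
      (hgE.trans_isLittleO hlit).const_mul_right (by positivity)
    have h3 : (fun t => am / κm * E t) =O[atBot] g := h2.right_isBigO_add.congr_right (fun t => by ring)
    exact (isBigO_const_mul_left_iff (by positivity : am / κm ≠ 0)).1 h3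
  have hGt : Tendsto (fun s => G (rfun s)) atBot (nhds (2 * κm)) := by
    rw [← hGm]; exact hGd.continuousAt.tendsto.comp hrt
  have hrO : (fun s => rfun s - rm) =O[atBot] fun s => E s ^ 2 := by
    have h1 : (fun s => rfun s ^ 2 / G (rfun s)) =O[atBot] fun _ => (1 : ℝ) :=
      ((hrt.pow 2).div hGt (by positivity)).isBigO_one ℝ
    refine ((haO.pow 2).mul h1).congr' ?_ (Eventually.of_forall fun s => by simp)
    filter_upwards [hGt.eventually_ne (by positivity : 2 * κm ≠ 0)] with s hs
    have h2 : a s ^ 2 = F (rfun s) / rfun s ^ 2 := by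
      rw [ha, div_pow, Real.sq_sqrt (hFpos _ (hrmem s)).le]
    rw [h2, hFG _ (hrpos s).ne']
    have := (hrpos s).ne'
    field_simp
  have hDO : (fun s => D (rfun s) - 2 * κm) =O[atBot] fun s => E s ^ 2 := by
    rw [← hDm]; exact (hDd.isBigO_sub.comp_tendsto hrt).trans hrO
  have hGO : (fun s => G (rfun s) - 2 * κm) =O[atBot] fun s => E s ^ 2 := by
    rw [← hGm]; exact (hGd.isBigO_sub.comp_tendsto hrt).trans hrO
  have hFO : (fun s => F (rfun s) / rfun s) =O[atBot] fun s => E s ^ 2 := by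
    refine ((haO.pow 2).mul (hrt.isBigO_one ℝ)).congr (fun s => ?_) (fun s => by simp)
    have := (hrpos s).ne'
    rw [ha, div_pow, Real.sq_sqrt (hFpos _ (hrmem s)).le]
    field_simp
  have hEp : ∀ n : ℕ, (fun s => E s ^ n) =O[atBot] fun s => g s ^ n := fun n => hEg.pow n
  -- the six estimates in terms of s
  have keyE : (fun s => am * E s - κm * g s) =O[atBot] fun s => E s ^ 3 := by
    refine (hgE.const_mul_left (-κm)).congr_left (fun s => ?_)
    field_simp; ring
  have A1 : (fun s => a s - κm * g s) =O[atBot] fun s => E s ^ 3 :=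
    (haE.add keyE).congr_left (fun s => by ring)
  have B1 : (fun s => b s - bm * κm / am * g s) =O[atBot] fun s => E s ^ 3 :=
    (hbE.add (keyE.const_mul_left (bm / am))).congr_left (fun s => by field_simp; ring)
  have A2 : (fun s => deriv a s - κm ^ 2 * g s) =O[atBot] fun s => E s ^ 3 := by
    have h := haO.mul ((hDO.const_mul_left (1 / 2)).sub hFO)
    have h' : (fun s => a s * (1 / 2 * (D (rfun s) - 2 * κm) - F (rfun s) / rfun s))
      =O[atBot] fun s => E s ^ 3 := h.congr_right (fun s => by ring)
    refine (h'.add (A1.const_mul_left κm)).congr_left (fun s => ?_)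
    rw [had]; ring
  have B2 : (fun s => deriv b s - bm * κm ^ 2 / am * g s) =O[atBot] fun s => E s ^ 3 := by
    have h := hbO.mul (hDO.const_mul_left (1 / 2))
    have h' : (fun s => b s * (1 / 2 * (D (rfun s) - 2 * κm)))
      =O[atBot] fun s => E s ^ 3 := h.congr_right (fun s => by ring)
    refine (h'.add (B1.const_mul_left κm)).congr_left (fun s => ?_)
    rw [hbd]; ring
  have C1 : (fun s => c s - (cm + c'm * (κm / am) ^ 2 * g s ^ 2)) =O[atBot] fun s => E s ^ 4 := by
    have h := keyE.mul (((isBigO_refl E atBot).const_mul_left am).add (hgO.const_mul_left κm))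
    have h' : (fun s => (am * E s - κm * g s) * (am * E s + κm * g s))
      =O[atBot] fun s => E s ^ 4 := h.congr_right (fun s => by ring)
    refine (hcas.add (h'.const_mul_left (c'm / am ^ 2))).congr_left (fun s => ?_)
    field_simp; ring
  have C2 : (fun s => deriv c s - 2 * c'm * κm * (κm / am) ^ 2 * g s ^ 2)
      =O[atBot] fun s => E s ^ 4 := by
    have h1 : (fun s => -(q * Q) / rfun s ^ 2) =O[atBot] fun _ => (1 : ℝ) :=
      ((tendsto_const_nhds (x := -(q * Q))).div (hrt.pow 2) (by positivity)).isBigO_one ℝ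
    have h := h1.mul (hrO.mul (hGO.sub (hrO.const_mul_left (2 * κm / rm))))
    have h' : (fun s => -(q * Q) / rfun s ^ 2 * ((rfun s - rm) *
        ((G (rfun s) - 2 * κm) - 2 * κm / rm * (rfun s - rm))))
      =O[atBot] fun s => E s ^ 4 := h.congr_right (fun s => by ring)
    refine (h'.add (C1.const_mul_left (2 * κm))).congr_left (fun s => ?_)
    have := (hrpos s).ne'
    rw [hcd, hc, hcm, hFG _ this]
    field_simp; ring
  -- transfer
  have hgmono : Monotone g := by
    intro s t hst
    rw [hg, hg]
    exact setIntegral_mono_set haint.integrableOn (Eventually.of_forall fun s => (hapos s).le)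
      (Set.Iic_subset_Iic.2 hst).eventuallyLE
  have hgnn : ∀ t, 0 ≤ g t := fun t => by
    rw [hg]; exact integral_nonneg fun s => (hapos s).le
  have hgpos : ∀ t, 0 < g t := fun t => by
    refine (hgnn (t - 1)).trans_lt (lt_of_le_of_ne (hgmono (by linarith)) fun h => ?_)
    have := congrArg hfun h
    rw [hgh, hgh] at this
    linarith
  have hX : ∀ᶠ X in nhdsWithin (0 : ℝ) (Set.Ioi 0), g (hfun X) = X := by
    filter_upwards [Ioo_mem_nhdsGT hApos] with X hX using hhg X hX
  have hht : Tendsto hfun (nhdsWithin 0 (Set.Ioi 0)) atBot := by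
    rw [tendsto_atBot]
    intro B
    filter_upwards [hX, Ioo_mem_nhdsGT (hgpos B)] with X h1 h2
    by_contra! h3
    have := hgmono h3.le
    rw [h1] at this
    exact absurd h2.2 (not_lt.2 this)
  have fin : ∀ (φ : ℝ → ℝ → ℝ) (n : ℕ), (fun s => φ s (g s)) =O[atBot] (fun s => E s ^ n) →
      (fun X => φ (hfun X) X) =O[nhdsWithin 0 (Set.Ioi 0)] fun X => X ^ n := by
    intro φ n h
    refine ((h.trans (hEp n)).comp_tendsto hht).congr' ?_ ?_
    · filter_upwards [hX] with X h
      simp only [Function.comp, h]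
    · filter_upwards [hX] with X h
      simp only [Function.comp, h]
  exact ⟨fin (fun s X => a s - κm * X) 3 A1, fin (fun s X => deriv a s - κm ^ 2 * X) 3 A2,
    fin (fun s X => b s - bm * κm / am * X) 3 B1,
    fin (fun s X => deriv b s - bm * κm ^ 2 / am * X) 3 B2,
    fin (fun s X => c s - (cm + c'm * (κm / am) ^ 2 * X ^ 2)) 4 C1,
    fin (fun s X => deriv c s - 2 * c'm * κm * (κm / am) ^ 2 * X ^ 2) 4 C2⟩
end

section
/- Fix λ ∈ ℝ and define, for X ∈ (0, A), q(X) = i·c'(h(X))/a(h(X))² + (c(h(X)) − λ)²/a(h(X))² − i·(c(h(X)) − λ)·a'(h(X))/a(h(X))³ − b(h(X))²/a(h(X))², where primes denote derivatives with respect to x. Set ω_- = (c_- − λ)²/κ_-² − i·(c_- − λ)/κ_- and ω_+ = (c_+ − λ)²/κ_+² − i·(c_+ − λ)/κ_+. Then the function X ↦ q(X) − ω_- /X² is bounded on some interval (0, δ) with δ > 0, and the function X ↦ q(X) − ω_+/(A − X)² is bounded on some interval (A − δ', A) with δ' > 0. -/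
open Filter MeasureTheory Asymptotics Topology

theorem aux_alg (L M Q a b c d : ℝ) (hab : a ≠ b) (hac : a ≠ c) (had : a ≠ d)
    (hbc : b ≠ c) (hbd : b ≠ d) (hcd : c ≠ d) (hL : L ≠ 0)
    (ha : -L * a^4 + a^2 - 2*M*a + Q^2 = 0) (hb : -L * b^4 + b^2 - 2*M*b + Q^2 = 0)
    (hc : -L * c^4 + c^2 - 2*M*c + Q^2 = 0) (hd : -L * d^4 + d^2 - 2*M*d + Q^2 = 0) :
    a + b + c + d = 0 ∧ 1 = -L * (a*b+a*c+a*d+b*c+b*d+c*d) ∧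
    2*M = -L*(a*b*c+a*b*d+a*c*d+b*c*d) ∧ Q^2 = -L*(a*b*c*d) := by
  have d2 : ∀ x y : ℝ, x ≠ y → -L * x^4 + x^2 - 2*M*x + Q^2 = 0 →
      -L * y^4 + y^2 - 2*M*y + Q^2 = 0 → -L*(x^3+x^2*y+x*y^2+y^3) + (x+y) - 2*M = 0 := by
    intro x y hxy h1 h2
    apply mul_left_cancel₀ (sub_ne_zero.2 hxy)
    linear_combination h1 - h2
  have d3 : ∀ x y z : ℝ, x ≠ y → x ≠ z → y ≠ z → -L * x^4 + x^2 - 2*M*x + Q^2 = 0 →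
      -L * y^4 + y^2 - 2*M*y + Q^2 = 0 → -L * z^4 + z^2 - 2*M*z + Q^2 = 0 →
      -L*(x^2+y^2+z^2+x*y+x*z+y*z) + 1 = 0 := by
    intro x y z hxy hxz hyz h1 h2 h3
    apply mul_left_cancel₀ (sub_ne_zero.2 hyz)
    linear_combination d2 x y hxy h1 h2 - d2 x z hxz h1 h3
  have e1 : a + b + c + d = 0 := by
    apply mul_left_cancel₀ hL
    apply mul_left_cancel₀ (sub_ne_zero.2 hcd)
    linear_combination -(d3 a b c hab hac hbc ha hb hc) + (d3 a b d hab had hbd ha hb hd)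
  have h3 := d3 a b c hab hac hbc ha hb hc
  have h2 := d2 a b hab ha hb
  obtain rfl : d = -(a+b+c) := by linarith
  have f2 : 1 = -L * (a*b+a*c+a*(-(a+b+c))+b*c+b*(-(a+b+c))+c*(-(a+b+c))) := by
    linear_combination h3
  have f3 : 2*M = -L*(a*b*c+a*b*(-(a+b+c))+a*c*(-(a+b+c))+b*c*(-(a+b+c))) := by
    linear_combination -h2 + (a+b) * f2
  refine ⟨e1, f2, f3, ?_⟩
  linear_combination ha + a * f3 - a^2 * f2

theorem aux_kappa (L M Q a b c d : ℝ) (h0 : a ≠ 0) (e1 : a + b + c + d = 0)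
    (f3 : 2*M = -L*(a*b*c+a*b*d+a*c*d+b*c*d)) (f4 : Q^2 = -L*(a*b*c*d)) :
    2*M/a^2 - 2*Q^2/a^3 - 2*L*a = -L*((a-b)*(a-c)*(a-d))/a^2 := by
  rw [f3, f4]
  obtain rfl : d = -(a+b+c) := by linarith
  field_simp
  ring

theorem aux_pf_s5 (L a b c d r : ℝ) (hL : L ≠ 0) (hab : a ≠ b) (hac : a ≠ c) (had : a ≠ d)
    (hbc : b ≠ c) (hbd : b ≠ d) (hcd : c ≠ d) (h0 : r ≠ 0) (ra : r ≠ a) (rb : r ≠ b)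
    (rc : r ≠ c) (rd : r ≠ d) (a0 : a ≠ 0) (b0 : b ≠ 0) (c0 : c ≠ 0) (d0 : d ≠ 0) :
    1/(-L*((a-b)*(a-c)*(a-d))/a^2) * (1/(r-a)) + 1/(-L*((b-a)*(b-c)*(b-d))/b^2) * (1/(r-b))
    + 1/(-L*((c-a)*(c-b)*(c-d))/c^2) * (1/(r-c)) + 1/(-L*((d-a)*(d-b)*(d-c))/d^2) * (-1/(d-r))
    = 1/(-L*((r-a)*(r-b)*(r-c)*(r-d))/r^2) := by
  have := sub_ne_zero.2 hab
  have := sub_ne_zero.2 hac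
  have := sub_ne_zero.2 had
  have := sub_ne_zero.2 hbc
  have := sub_ne_zero.2 hbd
  have := sub_ne_zero.2 hcd
  have := sub_ne_zero.2 ra
  have := sub_ne_zero.2 rb
  have := sub_ne_zero.2 rc
  have := sub_ne_zero.2 rd
  rw [show b - a = -(a-b) by ring, show c - a = -(a-c) by ring, show c - b = -(b-c) by ring,
    show d - a = -(a-d) by ring, show d - b = -(b-d) by ring, show d - c = -(c-d) by ring,
    show d - r = -(r-d) by ring]
  field_simp
  ring

theorem aux_deriv_s5 (M Q Λ r : ℝ) (F : ℝ → ℝ)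
    (hF : ∀ r, F r = 1 - 2 * M / r + Q ^ 2 / r ^ 2 - Λ * r ^ 2 / 3) (hr : r ≠ 0) :
    HasDerivAt F (2*M/r^2 - 2*Q^2/r^3 - 2*(Λ/3)*r) r := by
  obtain rfl : F = fun r => 1 - 2 * M / r + Q ^ 2 / r ^ 2 - Λ * r ^ 2 / 3 := funext hF
  have h1 := ((hasDerivAt_const r (2*M)).div (hasDerivAt_id' r) hr)
  have h2 := ((hasDerivAt_const r (Q^2)).div ((hasDerivAt_id' r).pow 2) (pow_ne_zero 2 hr))
  have h3 := (((hasDerivAt_id' r).pow 2).const_mul Λ).div_const 3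
  refine ((((hasDerivAt_const r (1:ℝ)).sub h1).add h2).sub h3).congr_deriv ?_
  simp
  field_simp
  ring

theorem aux_compare (a g e : ℝ → ℝ) (κ : ℝ) (hκ : 0 < κ) (ha : ∀ s, 0 < a s)
    (hda : ∀ s, HasDerivAt a (a s * (κ + e s)) s) (hdg : ∀ s, HasDerivAt g (a s) s)
    (hta : Tendsto a atBot (𝓝 0)) (htg : Tendsto g atBot (𝓝 0))
    (he : e =O[atBot] fun s => a s ^ 2) :
    (fun s => 1 / a s ^ 2 - 1 / (κ ^ 2 * g s ^ 2)) =O[atBot] fun _ => (1:ℝ) := by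
  obtain ⟨C, hC0, hC⟩ := he.exists_pos
  have hC' := hC.bound
  have hsm : ∀ ε > 0, ∀ᶠ s in atBot, a s ^ 2 < ε := by
    intro ε hε
    have : Tendsto (fun s => a s ^ 2) atBot (𝓝 0) := by simpa using hta.pow 2
    exact this.eventually (gt_mem_nhds hε)
  set D : ℝ := 2 * C / (3 * κ) with hD
  have hDpos : 0 < D := by positivity
  have key : ∀ᶠ s in atBot, |a s - κ * g s| ≤ D * a s ^ 3 := by
    have h1 : ∀ᶠ s in atBot, C * a s ^ 2 ≤ κ / 2 := by
      filter_upwards [hsm (κ / 2 / C) (by positivity)] with s hs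
      rw [lt_div_iff₀ hC0] at hs; linarith
    obtain ⟨s0, hs0⟩ := eventually_atBot.1 (h1.and hC')
    have hb : ∀ s ≤ s0, |e s| ≤ C * a s ^ 2 := by
      intro s hs
      have := (hs0 s hs).2
      simpa using this
    have gen : ∀ σ : ℝ, |σ| = 1 → ∀ s ≤ s0, 0 ≤ D * a s ^ 3 + σ * (a s - κ * g s) := by
      intro σ hσ s hs
      set φ : ℝ → ℝ := fun s => D * a s ^ 3 + σ * (a s - κ * g s) with hφ
      have hdφ : ∀ s, HasDerivAt φ (D * (3 * a s ^ 2 * (a s * (κ + e s))) + σ * (a s * (κ + e s) - κ * a s)) s := by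
        intro s
        have := (((hda s).pow 3).const_mul D).add (((hda s).sub ((hdg s).const_mul κ)).const_mul σ)
        refine this.congr_deriv ?_
        norm_num
      have hmono : MonotoneOn φ (Set.Iic s0) := by
        apply monotoneOn_of_deriv_nonneg (convex_Iic s0)
        · exact fun s _ => (hdφ s).continuousAt.continuousWithinAt
        · exact fun s _ => (hdφ s).differentiableAt.differentiableWithinAt
        · intro t ht
          rw [interior_Iic] at ht
          have ht' : t ≤ s0 := le_of_lt ht
          rw [(hdφ t).deriv]
          have hbt := hb t ht'
          have hst := (hs0 t ht').1
          have hat := ha t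
          have h2 : κ / 2 ≤ κ + e t := by
            have := neg_abs_le (e t); linarith
          have h3 : -(C * a t ^ 2) ≤ σ * e t := by
            have : |σ * e t| ≤ C * a t ^ 2 := by rw [abs_mul, hσ, one_mul]; exact hbt
            exact (abs_le.1 this).1
          have h4 : C ≤ D * 3 * (κ + e t) := by
            calc C = D * 3 * (κ / 2) := by rw [hD]; field_simp
              _ ≤ _ := by gcongr
          have h5 : 0 ≤ a t * (a t ^ 2 * (D * 3 * (κ + e t) - C)) := by
            have : 0 ≤ D * 3 * (κ + e t) - C := by linarith
            positivity
          have h6 := mul_le_mul_of_nonneg_left h3 hat.le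
          nlinarith
      have hlim : Tendsto φ atBot (𝓝 0) := by
        have := ((hta.pow 3).const_mul D).add ((hta.sub (htg.const_mul κ)).const_mul σ)
        simpa using this
      exact le_of_tendsto hlim (eventually_atBot.2 ⟨s, fun t ht => hmono (Set.mem_Iic.2 (ht.trans hs)) (Set.mem_Iic.2 hs) ht⟩)
    filter_upwards [eventually_le_atBot s0] with s hs
    have p := gen 1 (by simp) s hs
    have n := gen (-1) (by simp) s hs
    rw [abs_le]; constructor <;> linarith
  apply IsBigO.of_bound (D * 3 * 4)
  filter_upwards [key, hsm (1 / 2 / D) (by positivity)] with s hk hs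
  have hat := ha s
  rw [lt_div_iff₀ hDpos] at hs
  have h3 : D * a s ^ 3 ≤ a s / 2 := by nlinarith
  obtain ⟨k1, k2⟩ := abs_le.1 (hk.trans h3)
  set y := κ * g s with hy
  have hy1 : a s / 2 ≤ y := by linarith
  have hy2 : y ≤ 2 * a s := by linarith
  have hy0 : 0 < y := by linarith
  have : 1 / a s ^ 2 - 1 / (κ ^ 2 * g s ^ 2) = (y - a s) * (y + a s) / (a s ^ 2 * y ^ 2) := by
    rw [show κ ^ 2 * g s ^ 2 = y ^ 2 by rw [hy]; ring]
    field_simp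
    ring
  rw [this, norm_one, mul_one, Real.norm_eq_abs, abs_div, abs_mul,
    abs_of_pos (show 0 < a s ^ 2 * y ^ 2 by positivity), abs_of_pos (show 0 < y + a s by positivity),
    div_le_iff₀ (by positivity), abs_sub_comm]
  calc |a s - y| * (y + a s) ≤ (D * a s ^ 3) * (3 * a s) := by gcongr; linarith
    _ = D * 3 * 4 * (a s ^ 2 * (a s / 2) ^ 2) := by ring
    _ ≤ _ := by gcongr

theorem aux_final (l : Filter ℝ) (a da c dc b r X e : ℝ → ℝ) (κ c0 lam m : ℝ) (hκ : κ ≠ 0)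
    (ha : ∀ s, 0 < a s) 
    (hda : ∀ s, da s = a s * (κ + e s))
    (hu : (fun s => 1 / a s ^ 2 - 1 / (κ ^ 2 * X s ^ 2)) =O[l] fun _ => (1:ℝ))
    (he : e =O[l] fun s => a s ^ 2)
    (hc : (fun s => c s - c0) =O[l] fun s => a s ^ 2)
    (hcb : c =O[l] fun _ => (1:ℝ))
    (hdc : dc =O[l] fun s => a s ^ 2)
    (hr : r =O[l] fun _ => (1:ℝ))
    (hb : ∀ s, b s ^ 2 = m ^ 2 * r s ^ 2 * a s ^ 2) :
    (fun s => Complex.I * ((dc s : ℝ) : ℂ) / (a s : ℂ) ^ 2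
      + ((c s : ℂ) - (lam : ℂ)) ^ 2 / (a s : ℂ) ^ 2
      - Complex.I * ((c s : ℂ) - (lam : ℂ)) * ((da s : ℝ) : ℂ) / (a s : ℂ) ^ 3
      - (b s : ℂ) ^ 2 / (a s : ℂ) ^ 2 -
      (((c0 : ℂ) - lam) ^ 2 / (κ : ℂ) ^ 2 - Complex.I * ((c0 : ℂ) - lam) / (κ : ℂ)) / (X s : ℂ) ^ 2)
      =O[l] fun _ => (1:ℝ) := by
  have dv : ∀ f : ℝ → ℝ, f =O[l] (fun s => a s ^ 2) →
      (fun s => ((f s / a s ^ 2 : ℝ) : ℂ)) =O[l] fun _ => (1:ℝ) := by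
    intro f hf
    rw [Complex.isBigO_ofReal_left]
    have := hf.mul (isBigO_refl (fun s => (a s ^ 2)⁻¹) l)
    refine this.congr (fun s => by simp [div_eq_mul_inv]) (fun s => ?_)
    have := (ha s).ne'
    field_simp
  have cst : ∀ z : ℂ, (fun _ : ℝ => z) =O[l] fun _ => (1:ℝ) := fun z =>
    isBigO_const_const z one_ne_zero l
  have up : ∀ f : ℝ → ℝ, f =O[l] (fun _ => (1:ℝ)) → (fun s => (f s : ℂ)) =O[l] fun _ => (1:ℝ) :=
    fun f hf => Complex.isBigO_ofReal_left.2 hf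
  have ml : ∀ f h : ℝ → ℂ, f =O[l] (fun _ => (1:ℝ)) → h =O[l] (fun _ => (1:ℝ)) →
      (fun s => f s * h s) =O[l] (fun _ => (1:ℝ)) := fun f h hf hh => by
    simpa using hf.mul hh
  have t1 := ml _ _ (cst Complex.I) (dv _ hdc)
  have t2 := ml _ _ (cst (((c0:ℂ) - lam)^2 - Complex.I * ((c0:ℂ) - lam) * κ)) (up _ hu)
  have t3 := ml _ _ (dv _ hc) (((up _ hcb).add (cst ((c0:ℂ) - 2 * lam - Complex.I * κ))))
  have t4 := ml _ _ (cst Complex.I) (ml _ _ ((up _ hcb).sub (cst (lam:ℂ))) (dv _ he))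
  have t5 := ml _ _ (cst ((m:ℂ)^2)) (ml _ _ (up _ hr) (up _ hr))
  refine ((((t1.add t2).add t3).sub t4).sub t5).congr_left (fun s => ?_)
  have hb' : (b s : ℂ)^2 = (m:ℂ)^2 * (r s:ℂ)^2 * (a s:ℂ)^2 := by exact_mod_cast hb s
  have ha' : (a s : ℂ) ≠ 0 := by exact_mod_cast (ha s).ne'
  have hκ' : (κ : ℂ) ≠ 0 := by exact_mod_cast hκ
  rw [hb', hda]
  push_cast
  by_cases hX : (X s : ℂ) = 0
  · rw [hX]; field_simp; ring_nf
  · field_simp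
    ring

/-- The Sturm–Liouville potential
`q(X) = i c'(h(X))/a(h(X))² + (c(h(X))−λ)²/a(h(X))² − i(c(h(X))−λ)a'(h(X))/a(h(X))³ − b(h(X))²/a(h(X))²`
has quadratic singularities at the two endpoints of `(0,A)`: with
`ω₋ = (c₋−λ)²/κ₋² − i(c₋−λ)/κ₋` and `ω₊ = (c₊−λ)²/κ₊² − i(c₊−λ)/κ₊`,
the functions `X ↦ q(X) − ω₋/X²` and `X ↦ q(X) − ω₊/(A−X)²` are bounded near `0⁺` and `A⁻`
respectively. -/
theorem stmt_5 (M Q Λ : ℝ) (hM : 0 < M) (hΛ : 0 < Λ)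
    (rn rc rm rp : ℝ) (hrn : rn < 0) (hrc : 0 < rc) (hrcm : rc < rm) (hrmp : rm < rp)
    (F : ℝ → ℝ)
    (hF : ∀ r, F r = 1 - 2 * M / r + Q ^ 2 / r ^ 2 - Λ * r ^ 2 / 3)
    (hFn : F rn = 0) (hFc : F rc = 0) (hFm : F rm = 0) (hFp : F rp = 0)
    (hFpos : ∀ r ∈ Set.Ioo rm rp, 0 < F r)
    (κn κc κm κp : ℝ)
    (hκn : κn = deriv F rn / 2) (hκc : κc = deriv F rc / 2)
    (hκm : κm = deriv F rm / 2) (hκp : κp = deriv F rp / 2)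
    (hκmpos : 0 < κm) (hκpneg : κp < 0)
    (x : ℝ → ℝ)
    (hx : ∀ r, x r = 1 / (2 * κn) * Real.log (r - rn) + 1 / (2 * κc) * Real.log (r - rc)
      + 1 / (2 * κm) * Real.log (r - rm) + 1 / (2 * κp) * Real.log (rp - r))
    (rfun : ℝ → ℝ)
    (hrmem : ∀ s, rfun s ∈ Set.Ioo rm rp) (hrinv : ∀ s, x (rfun s) = s)
    (m q : ℝ) (a b c : ℝ → ℝ)
    (ha : ∀ s, a s = Real.sqrt (F (rfun s)) / rfun s)
    (hb : ∀ s, b s = m * Real.sqrt (F (rfun s)))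
    (hc : ∀ s, c s = q * Q / rfun s)
    (cm cp : ℝ) (hcm : cm = q * Q / rm) (hcp : cp = q * Q / rp)
    (haint : Integrable a)
    (A : ℝ) (hA : A = ∫ s, a s) (hApos : 0 < A)
    (g : ℝ → ℝ) (hg : ∀ t, g t = ∫ s in Set.Iic t, a s)
    (hfun : ℝ → ℝ) (hgh : ∀ t, hfun (g t) = t)
    (hhg : ∀ X ∈ Set.Ioo (0 : ℝ) A, g (hfun X) = X)
    (lam : ℝ) (qpot : ℝ → ℂ)
    (hqpot : ∀ X, qpot X =
      Complex.I * ((deriv c (hfun X) : ℝ) : ℂ) / (a (hfun X) : ℂ) ^ 2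
      + ((c (hfun X) : ℂ) - (lam : ℂ)) ^ 2 / (a (hfun X) : ℂ) ^ 2
      - Complex.I * ((c (hfun X) : ℂ) - (lam : ℂ)) * ((deriv a (hfun X) : ℝ) : ℂ) / (a (hfun X) : ℂ) ^ 3
      - (b (hfun X) : ℂ) ^ 2 / (a (hfun X) : ℂ) ^ 2)
    (ωm ωp : ℂ)
    (hωm : ωm = ((cm : ℂ) - lam) ^ 2 / (κm : ℂ) ^ 2 - Complex.I * ((cm : ℂ) - lam) / (κm : ℂ))
    (hωp : ωp = ((cp : ℂ) - lam) ^ 2 / (κp : ℂ) ^ 2 - Complex.I * ((cp : ℂ) - lam) / (κp : ℂ)) :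
    (∃ δ > (0 : ℝ), δ ≤ A ∧ ∃ Cb : ℝ, ∀ X ∈ Set.Ioo (0 : ℝ) δ,
      ‖qpot X - ωm / (X : ℂ) ^ 2‖ ≤ Cb) ∧
    (∃ δ' > (0 : ℝ), δ' ≤ A ∧ ∃ Cb : ℝ, ∀ X ∈ Set.Ioo (A - δ') A,
      ‖qpot X - ωp / ((A : ℂ) - (X : ℂ)) ^ 2‖ ≤ Cb) := by
  have hrm0 : 0 < rm := hrc.trans hrcm
  have hrp0 : 0 < rp := hrm0.trans hrmp
  have hL : Λ / 3 ≠ 0 := by positivity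
  have poly : ∀ r, r ≠ 0 → F r = 0 → -(Λ/3) * r^4 + r^2 - 2*M*r + Q^2 = 0 := by
    intro r hr h
    rw [hF] at h
    have : r^2 * (1 - 2 * M / r + Q ^ 2 / r ^ 2 - Λ * r ^ 2 / 3) = 0 := by rw [h, mul_zero]
    rw [← this]; field_simp; ring
  have n1 : rn ≠ rc := by linarith
  have n2 : rn ≠ rm := by linarith
  have n3 : rn ≠ rp := by linarith
  have n4 : rc ≠ rm := by linarith
  have n5 : rc ≠ rp := by linarith
  have n6 : rm ≠ rp := by linarith
  obtain ⟨e1, f2, f3, f4⟩ := aux_alg (Λ/3) M Q rn rc rm rp n1 n2 n3 n4 n5 n6 hL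
    (poly _ hrn.ne hFn) (poly _ hrc.ne' hFc) (poly _ hrm0.ne' hFm) (poly _ hrp0.ne' hFp)
  have dF := fun r (hr : r ≠ 0) => aux_deriv_s5 M Q Λ r F hF hr
  have Ffac : ∀ r, r ≠ 0 → F r = -(Λ/3)*((r-rn)*(r-rc)*(r-rm)*(r-rp))/r^2 := by
    intro r hr
    rw [hF, eq_div_iff (by positivity)]
    have : (1 - 2 * M / r + Q ^ 2 / r ^ 2 - Λ * r ^ 2 / 3) * r ^ 2
        = 1 * r^2 - (2 * M) * r + Q^2 - Λ/3 * r^4 := by field_simp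
    rw [this]
    linear_combination r^2 * f2 - r * f3 + f4 - (Λ/3) * r^3 * e1
  have k1 : 2 * κn = -(Λ/3)*((rn-rc)*(rn-rm)*(rn-rp))/rn^2 := by
    rw [← aux_kappa (Λ/3) M Q rn rc rm rp hrn.ne e1 f3 f4, hκn, (dF rn hrn.ne).deriv]; ring
  have k2 : 2 * κc = -(Λ/3)*((rc-rn)*(rc-rm)*(rc-rp))/rc^2 := by
    rw [← aux_kappa (Λ/3) M Q rc rn rm rp hrc.ne' (by linarith) (by linarith) (by linarith), hκc,
      (dF rc hrc.ne').deriv]; ring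
  have k3 : 2 * κm = -(Λ/3)*((rm-rn)*(rm-rc)*(rm-rp))/rm^2 := by
    rw [← aux_kappa (Λ/3) M Q rm rn rc rp hrm0.ne' (by linarith) (by linarith) (by linarith), hκm,
      (dF rm hrm0.ne').deriv]; ring
  have k4 : 2 * κp = -(Λ/3)*((rp-rn)*(rp-rc)*(rp-rm))/rp^2 := by
    rw [← aux_kappa (Λ/3) M Q rp rn rc rm hrp0.ne' (by linarith) (by linarith) (by linarith), hκp,
      (dF rp hrp0.ne').deriv]; ring
  have dx : ∀ r ∈ Set.Ioo rm rp, HasDerivAt x (1 / F r) r := by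
    rintro r ⟨h1, h2⟩
    have x1 : r - rn ≠ 0 := by linarith
    have x2 : r - rc ≠ 0 := by linarith
    have x3 : r - rm ≠ 0 := by linarith
    have x4 : rp - r ≠ 0 := by linarith
    have i := hasDerivAt_id' r
    have D := (((((i.sub_const rn).log x1).const_mul (1 / (2 * κn))).add
      (((i.sub_const rc).log x2).const_mul (1 / (2 * κc)))).add
      (((i.sub_const rm).log x3).const_mul (1 / (2 * κm)))).add
      (((i.const_sub rp).log x4).const_mul (1 / (2 * κp)))
    have hr0 : r ≠ 0 := by linarith
    rw [Ffac r hr0, ← aux_pf_s5 (Λ/3) rn rc rm rp r hL n1 n2 n3 n4 n5 n6 hr0 (sub_ne_zero.1 x1)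
      (sub_ne_zero.1 x2) (sub_ne_zero.1 x3) (by linarith) hrn.ne hrc.ne' hrm0.ne' hrp0.ne',
      ← k1, ← k2, ← k3, ← k4]
    rw [funext hx]
    exact D
  have xmono : StrictMonoOn x (Set.Ioo rm rp) := by
    apply strictMonoOn_of_deriv_pos (convex_Ioo _ _)
    · exact fun r hr => (dx r hr).continuousAt.continuousWithinAt
    · intro r hr
      rw [interior_Ioo] at hr
      rw [(dx r hr).deriv]
      exact one_div_pos.2 (hFpos r hr)
  have rx : ∀ r ∈ Set.Ioo rm rp, rfun (x r) = r := fun r hr =>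
    xmono.injOn (hrmem _) hr (hrinv _)
  have rmono : StrictMono rfun := by
    intro s t hst
    rw [← xmono.lt_iff_lt (hrmem s) (hrmem t), hrinv, hrinv]
    exact hst
  have rcont : ∀ s, ContinuousAt rfun s := by
    intro s
    apply continuousAt_of_monotoneOn_of_image_mem_nhds (s := Set.univ) (rmono.monotone.monotoneOn _)
      univ_mem
    refine mem_of_superset (Ioo_mem_nhds (hrmem s).1 (hrmem s).2) ?_
    intro r hr
    exact ⟨x r, trivial, rx r hr⟩
  have rpos : ∀ s, 0 < rfun s := fun s => hrm0.trans (hrmem s).1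
  have Fpos : ∀ s, 0 < F (rfun s) := fun s => hFpos _ (hrmem s)
  have dr : ∀ s, HasDerivAt rfun (F (rfun s)) s := by
    intro s
    have := HasDerivAt.of_local_left_inverse (rcont s) (dx _ (hrmem s))
      (one_div_pos.2 (Fpos s)).ne' (Eventually.of_forall hrinv)
    simpa using this
  have apos : ∀ s, 0 < a s := fun s => by
    rw [ha]; exact div_pos (Real.sqrt_pos.2 (Fpos s)) (rpos s)
  have asq : ∀ s, a s ^ 2 = F (rfun s) / rfun s ^ 2 := fun s => by
    rw [ha, div_pow, Real.sq_sqrt (Fpos s).le]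
  set F' : ℝ → ℝ := fun r => 2*M/r^2 - 2*Q^2/r^3 - 2*(Λ/3)*r with hF'
  have da : ∀ s, HasDerivAt a (a s * (F' (rfun s) / 2 - F (rfun s) / rfun s)) s := by
    intro s
    have h1 := ((dF _ (rpos s).ne').comp s (dr s)).sqrt (Fpos s).ne'
    have h2 := h1.div (dr s) (rpos s).ne'
    have h3 : a = (fun s => √((F ∘ rfun) s)) / rfun := by
      funext s; simp [ha]
    rw [h3]
    refine h2.congr_deriv ?_
    have hp := rpos s
    have hq := Real.sqrt_pos.2 (Fpos s)
    have hsq := Real.sq_sqrt (Fpos s).le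
    simp only [Pi.div_apply, Function.comp]
    change _ = √(F (rfun s)) / rfun s * (F' (rfun s) / 2 - F (rfun s) / rfun s)
    change (F' (rfun s) * F (rfun s) / (2 * √(F (rfun s))) * rfun s - √(F (rfun s)) * F (rfun s)) / rfun s ^ 2 = _
    generalize F' (rfun s) = G
    generalize √(F (rfun s)) = w at *
    rw [← hsq]
    field_simp
  have dc : ∀ s, HasDerivAt c (-(q * Q) * a s ^ 2) s := by
    intro s
    have h := (hasDerivAt_const s (q * Q)).div (dr s) (rpos s).ne'
    have h3 : c = (fun _ => q * Q) / rfun := by funext s; simp [hc]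
    rw [h3]
    refine h.congr_deriv ?_
    rw [asq]; ring
  have acont : Continuous a := continuous_iff_continuousAt.2 fun s => (da s).continuousAt
  have dg : ∀ s, HasDerivAt g (a s) s := by
    intro s
    have h1 : g = fun t => g 0 + ∫ u in (0:ℝ)..t, a u := by
      funext t
      rw [← intervalIntegral.integral_Iic_sub_Iic haint.integrableOn haint.integrableOn, hg, hg]
      ring
    rw [h1]
    exact (acont.integral_hasStrictDerivAt 0 s).hasDerivAt.const_add _
  have gtop : Tendsto g atTop (𝓝 A) := by
    rw [funext hg, hA]
    exact (aecover_Iic tendsto_id).integral_tendsto_of_countably_generated haint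
  have gbot : Tendsto g atBot (𝓝 0) := by
    have h := (aecover_Ioi (μ := (volume : Measure ℝ)) (tendsto_id (x := atBot))).integral_tendsto_of_countably_generated haint
    have h1 : g = fun t => A - ∫ s in Set.Ioi t, a s := by
      funext t
      rw [hA, hg, ← integral_add_compl (measurableSet_Iic (a := t)) haint, Set.compl_Iic]
      ring
    rw [h1]
    have := h.const_sub A
    rw [← hA, sub_self] at this
    exact this
  have gmono : StrictMono g := strictMono_of_deriv_pos fun s => by
    rw [(dg s).deriv]; exact apos s
  have gpos : ∀ s, 0 < g s := fun s =>
    (gmono.monotone.le_of_tendsto gbot (s - 1)).trans_lt (gmono (by linarith))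
  have gltA : ∀ s, g s < A := fun s =>
    (gmono (show s < s + 1 by linarith)).trans_le (gmono.monotone.ge_of_tendsto gtop (s + 1))
  have rbot : Tendsto rfun atBot (𝓝 rm) := by
    rw [tendsto_order]
    constructor
    · intro y hy; exact Eventually.of_forall fun s => hy.trans (hrmem s).1
    · intro y hy
      obtain ⟨z, hz1, hz2⟩ := exists_between (lt_min hy hrmp)
      filter_upwards [eventually_lt_atBot (x z)] with s hs
      have := rmono hs
      rw [rx z ⟨hz1, hz2.trans_le (min_le_right _ _)⟩] at this
      exact this.trans (hz2.trans_le (min_le_left _ _))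
  have rtop : Tendsto rfun atTop (𝓝 rp) := by
    rw [tendsto_order]
    constructor
    · intro y hy
      obtain ⟨z, hz1, hz2⟩ := exists_between (max_lt hy hrmp)
      filter_upwards [eventually_gt_atTop (x z)] with s hs
      have := rmono hs
      rw [rx z ⟨(le_max_right _ _).trans_lt hz1, hz2⟩] at this
      exact ((le_max_left _ _).trans_lt hz1).trans this
    · intro y hy; exact Eventually.of_forall fun s => (hrmem s).2.trans hy
  have loc : ∀ (l : Filter ℝ) (p κ : ℝ), 0 < p → F p = 0 → κ = F' p / 2 → κ ≠ 0 →
      Tendsto rfun l (𝓝 p) → Tendsto a l (𝓝 0) ∧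
      ((fun s => F' (rfun s) / 2 - F (rfun s) / rfun s - κ) =O[l] fun s => a s ^ 2) ∧
      ((fun s => c s - q * Q / p) =O[l] fun s => a s ^ 2) ∧ (c =O[l] fun _ => (1:ℝ)) ∧
      (rfun =O[l] fun _ => (1:ℝ)) := by
    intro l p κ hp hFp0 hκ hκ0 ht
    have hp0 := hp.ne'
    have hdFp := dF p hp0
    have hr1 : rfun =O[l] fun _ => (1:ℝ) := ht.isBigO_one ℝ
    have base : (fun s => rfun s - p) =O[l] fun s => a s ^ 2 := by
      have h1 : (fun r => r - p) =O[𝓝 p] fun r => F r := by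
        have hne : F' p ≠ 0 := by
          intro h; rw [h] at hκ; simp at hκ; exact hκ0 hκ
        have h0 := (HasDerivAtFilter.isTheta_sub hdFp hne).isBigO_symm
        have ht0 : Tendsto (fun r : ℝ => (r, p)) (𝓝 p) (𝓝 p ×ˢ pure p) :=
          tendsto_id.prodMk (tendsto_pure.2 (Eventually.of_forall fun _ => rfl))
        simpa [Function.comp_def, hFp0] using h0.comp_tendsto ht0
      have h2 := h1.comp_tendsto ht
      have h3 : (fun s => F (rfun s)) =O[l] fun s => a s ^ 2 := by
        have h4 : (fun s => rfun s ^ 2 * a s ^ 2) =O[l] fun s => a s ^ 2 := by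
          simpa using (hr1.pow 2).mul (isBigO_refl (fun s => a s ^ 2) l)
        refine h4.congr_left fun s => ?_
        have := rpos s
        rw [asq]; field_simp
      exact h2.trans h3
    have lip : ∀ (f : ℝ → ℝ), DifferentiableAt ℝ f p → (fun s => f (rfun s) - f p) =O[l] fun s => a s ^ 2 := by
      intro f hf
      have h1 : (fun r => f r - f p) =O[𝓝 p] fun r => r - p := hf.isBigO_sub
      exact (h1.comp_tendsto ht).trans base
    have hFd := hdFp.differentiableAt
    have hF'd : DifferentiableAt ℝ F' p := by
      rw [hF']; fun_prop (disch := positivity)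
    refine ⟨?_, ?_, ?_, ?_, hr1⟩
    · have h1 : Tendsto (fun s => √(F (rfun s)) / rfun s) l (𝓝 (√(F p) / p)) :=
        ((Real.continuous_sqrt.tendsto _).comp (hFd.continuousAt.tendsto.comp ht)).div ht hp0
      rw [hFp0] at h1
      rw [funext ha]; simpa using h1
    · have := lip (fun r => F' r / 2 - F r / r) ((hF'd.div_const 2).sub (hFd.div differentiableAt_id hp0))
      simpa [hFp0, ← hκ] using this
    · have := lip (fun r => q * Q / r) (by fun_prop (disch := positivity))
      rw [funext hc]; exact this
    · rw [funext hc]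
      exact (tendsto_const_nhds.div ht hp0).isBigO_one ℝ
  have hκm' : κm = F' rm / 2 := by rw [hκm, (dF rm hrm0.ne').deriv]
  have hκp' : κp = F' rp / 2 := by rw [hκp, (dF rp hrp0.ne').deriv]
  have hb2 : ∀ s, b s ^ 2 = m ^ 2 * rfun s ^ 2 * a s ^ 2 := by
    intro s
    have := rpos s
    rw [asq, hb, mul_pow, Real.sq_sqrt (Fpos s).le]; field_simp
  have hdc : ∀ l : Filter ℝ, deriv c =O[l] fun s => a s ^ 2 := by
    intro l
    have : deriv c = fun s => -(q * Q) * a s ^ 2 := funext fun s => (dc s).deriv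
    rw [this]
    exact isBigO_const_mul_self _ _ _
  constructor
  · obtain ⟨l1, l2, l3, l4, l5⟩ := loc atBot rm κm hrm0 hFm hκm' hκmpos.ne' rbot
    have hu := aux_compare a g (fun s => F' (rfun s) / 2 - F (rfun s) / rfun s - κm) κm hκmpos apos
      (fun s => (da s).congr_deriv (by ring)) dg l1 gbot l2
    have fin := aux_final atBot a (deriv a) c (deriv c) b rfun g
      (fun s => F' (rfun s) / 2 - F (rfun s) / rfun s - κm) κm cm lam m hκmpos.ne' apos
      (fun s => by rw [(da s).deriv]; ring) hu l2 (by rw [hcm]; exact l3) l4 (hdc _) l5 hb2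
    obtain ⟨C, hC⟩ := fin.bound
    obtain ⟨s0, hs0⟩ := eventually_atBot.1 hC
    refine ⟨g s0, gpos s0, (gltA s0).le, C, ?_⟩
    rintro X ⟨hX1, hX2⟩
    have hgX := hhg X ⟨hX1, hX2.trans (gltA s0)⟩
    have hlt : hfun X ≤ s0 := by
      rw [← gmono.le_iff_le, hgX]; exact hX2.le
    have := hs0 _ hlt
    rw [hgX, ← hωm, norm_one, mul_one] at this
    rw [hqpot]
    exact this
  · obtain ⟨l1, l2, l3, l4, l5⟩ := loc atTop rp κp hrp0 hFp hκp' hκpneg.ne rtop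
    have hu0 := aux_compare (fun s => a (-s)) (fun s => A - g (-s))
      (fun s => -(F' (rfun (-s)) / 2 - F (rfun (-s)) / rfun (-s) - κp)) (-κp) (by linarith)
      (fun s => apos _)
      (fun s => ((da (-s)).comp s (hasDerivAt_neg s)).congr_deriv (by ring))
      (fun s => (((dg (-s)).comp s (hasDerivAt_neg s)).const_sub A).congr_deriv (by ring))
      (l1.comp tendsto_neg_atBot_atTop)
      (by simpa using (gtop.comp tendsto_neg_atBot_atTop).const_sub A)
      (l2.comp_tendsto tendsto_neg_atBot_atTop).neg_left
    have hu : (fun s => 1 / a s ^ 2 - 1 / (κp ^ 2 * (A - g s) ^ 2)) =O[atTop] fun _ => (1:ℝ) := by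
      have := hu0.comp_tendsto tendsto_neg_atTop_atBot
      simpa [Function.comp_def] using this
    have fin := aux_final atTop a (deriv a) c (deriv c) b rfun (fun s => A - g s)
      (fun s => F' (rfun s) / 2 - F (rfun s) / rfun s - κp) κp cp lam m hκpneg.ne apos
      (fun s => by rw [(da s).deriv]; ring) hu l2 (by rw [hcp]; exact l3) l4 (hdc _) l5 hb2
    obtain ⟨C, hC⟩ := fin.bound
    obtain ⟨s0, hs0⟩ := eventually_atTop.1 hC
    refine ⟨A - g s0, by linarith [gltA s0], by linarith [gpos s0], C, ?_⟩
    rintro X ⟨hX1, hX2⟩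
    have hX1' : g s0 < X := by linarith
    have hgX := hhg X ⟨(gpos s0).trans hX1', hX2⟩
    have hlt : s0 ≤ hfun X := by
      rw [← gmono.le_iff_le, hgX]; exact hX1'.le
    have := hs0 _ hlt
    rw [hgX, ← hωp, norm_one, mul_one, Complex.ofReal_sub] at this
    rw [hqpot]
    exact this
end

section
/- As X → 0⁺ one has e^{iλ·h(X)} = (κ/a₀)^{iλ/κ}·X^{iλ/κ} + O(X²). -/
open Asymptotics Filter MeasureTheory

lemma aux_log {r : ℝ} (hr : |r - 1| ≤ 1 / 2) : |Real.log r| ≤ 2 * |r - 1| := by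
  have h1 := abs_le.mp hr
  have hr0 : 0 < r := by linarith [h1.1]
  have h2 := Real.log_le_sub_one_of_pos hr0
  have h3 := Real.one_sub_inv_le_log_of_pos hr0
  have h4 : 1 - r⁻¹ = (r - 1) * r⁻¹ := by field_simp
  have h5 : r⁻¹ ≤ 2 := by
    rw [inv_le_comm₀ hr0 (by norm_num)]; linarith [h1.1]
  have h6 : |(r - 1) * r⁻¹| ≤ |r - 1| * 2 := by
    rw [abs_mul, abs_of_pos (inv_pos.mpr hr0)]
    exact mul_le_mul_of_nonneg_left h5 (abs_nonneg _)
  rw [abs_le]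
  constructor
  · have := neg_abs_le ((r - 1) * r⁻¹)
    linarith
  · linarith [le_abs_self (r - 1), abs_nonneg (r - 1)]

lemma aux_D (κ a₀ C G t : ℝ) (hκ : 0 < κ) (ha₀ : 0 < a₀) (hC : 0 < C) (hG : 0 < G)
    (hb : |G - a₀ * (Real.exp (κ * t) / κ)| ≤ C * (Real.exp (κ * t) ^ 3 / (3 * κ)))
    (hs : C * Real.exp (κ * t) ^ 2 ≤ 3 / 2 * a₀) :
    |Real.log (κ / a₀) + Real.log G - κ * t| ≤
      (2 * C / (3 * a₀) * (2 * κ / a₀) ^ 2) * G ^ 2 := by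
  have hE0 : 0 < Real.exp (κ * t) := Real.exp_pos _
  have hlog : Real.log (κ / a₀) + Real.log G - κ * t
      = Real.log (κ / a₀ * G / Real.exp (κ * t)) := by
    rw [Real.log_div (by positivity) hE0.ne', Real.log_mul (by positivity) hG.ne', Real.log_exp]
  rw [hlog]
  generalize Real.exp (κ * t) = E at *
  have h1 : |κ / a₀ * G / E - 1| ≤ C * E ^ 2 / (3 * a₀) := by
    have : κ / a₀ * G / E - 1 = κ / (a₀ * E) * (G - a₀ * (E / κ)) := by field_simp
    rw [this, abs_mul, abs_of_pos (by positivity)]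
    refine (mul_le_mul_of_nonneg_left hb (by positivity)).trans (le_of_eq ?_)
    field_simp
  have h2 : C * E ^ 2 / (3 * a₀) ≤ 1 / 2 := by
    rw [div_le_iff₀ (by positivity)]; linarith
  have h3 := aux_log (h1.trans h2)
  have h4 : E ≤ 2 * κ / a₀ * G := by
    have := (abs_le.mp (h1.trans h2)).1
    have h5 : 1 / 2 ≤ κ / a₀ * G / E := by linarith
    rw [le_div_iff₀ hE0] at h5
    have : 2 * κ / a₀ * G = 2 * (κ / a₀ * G) := by ring
    linarith
  have h5 : E ^ 2 ≤ (2 * κ / a₀ * G) ^ 2 := pow_le_pow_left₀ hE0.le h4 2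
  calc _ ≤ 2 * (C * E ^ 2 / (3 * a₀)) := by linarith
    _ = 2 * C / (3 * a₀) * E ^ 2 := by ring
    _ ≤ 2 * C / (3 * a₀) * (2 * κ / a₀ * G) ^ 2 := mul_le_mul_of_nonneg_left h5 (by positivity)
    _ = _ := by ring

/-- In the Liouville variable `X = g(x) = ∫_{−∞}^x a(s) ds`, with inverse `h`,
one has `e^{iλh(X)} = (κ/a₀)^{iλ/κ}·X^{iλ/κ} + O(X²)` as `X → 0⁺`, where `X^w = e^{w log X}`. -/
theorem stmt_6 (κ a₀ : ℝ) (hκ : 0 < κ) (ha₀ : 0 < a₀)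
    (a : ℝ → ℝ) (hacont : Continuous a) (hapos : ∀ s, 0 < a s)
    (haint : ∀ x₀ : ℝ, IntegrableOn a (Set.Iic x₀))
    (haas : (fun s => a s - a₀ * Real.exp (κ * s)) =O[atBot] fun s => Real.exp (3 * κ * s))
    (lam : ℝ)
    (g : ℝ → ℝ) (hg : ∀ t, g t = ∫ s in Set.Iic t, a s)
    (h : ℝ → ℝ) (hgh : ∀ t, h (g t) = t)
    (hhg : ∀ᶠ X in nhdsWithin 0 (Set.Ioi 0), g (h X) = X) :
    (fun X : ℝ => Complex.exp (Complex.I * (lam : ℂ) * ((h X : ℝ) : ℂ))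
        - Complex.exp ((Complex.I * (lam : ℂ) / (κ : ℂ)) * ((Real.log (κ / a₀) : ℝ) : ℂ))
          * Complex.exp ((Complex.I * (lam : ℂ) / (κ : ℂ)) * ((Real.log X : ℝ) : ℂ)))
      =O[nhdsWithin 0 (Set.Ioi 0)] fun X => X ^ 2 := by
  have hpos : ∀ t, 0 < g t := by
    intro t
    rw [hg, setIntegral_pos_iff_support_of_nonneg_ae (ae_of_all _ fun s => (hapos s).le) (haint t)]
    have : Function.support a = Set.univ := Set.eq_univ_of_forall fun s => (hapos s).ne'
    rw [this]; simp
  have hmono : Monotone g := by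
    intro s t hst
    rw [hg, hg]
    exact setIntegral_mono_set (haint t) (ae_of_all _ fun s => (hapos s).le)
      (Set.Iic_subset_Iic.mpr hst).eventuallyLE
  have hlim : Tendsto h (nhdsWithin 0 (Set.Ioi 0)) atBot := by
    rw [tendsto_atBot]
    intro M
    filter_upwards [hhg, nhdsWithin_le_nhds (Iio_mem_nhds (hpos M))] with X hX hXM
    by_contra hcon
    have := hmono (not_le.mp hcon).le
    rw [hX] at this
    exact absurd hXM (not_lt.mpr this)
  obtain ⟨C, hC, hCb⟩ := haas.exists_pos
  have hCb' := hCb.bound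
  obtain ⟨T, hT⟩ := eventually_atBot.mp hCb'
  have hsmall : ∀ᶠ t in atBot, C * Real.exp (κ * t) ^ 2 ≤ 3 / 2 * a₀ := by
    have h1 : Tendsto (fun t : ℝ => C * Real.exp (κ * t) ^ 2) atBot (nhds (C * 0 ^ 2)) :=
      ((Real.tendsto_exp_atBot.comp (tendsto_id.const_mul_atBot hκ)).pow 2).const_mul C
    have h2 : C * 0 ^ 2 < 3 / 2 * a₀ := by
      have : 0 < 3 / 2 * a₀ := by positivity
      simpa using this
    exact (h1.eventually (Iio_mem_nhds h2)).mono fun t ht => le_of_lt ht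
  have hD : ∀ᶠ t in atBot, |Real.log (κ / a₀) + Real.log (g t) - κ * t| ≤
      (2 * C / (3 * a₀) * (2 * κ / a₀) ^ 2) * g t ^ 2 := by
    filter_upwards [hsmall, eventually_le_atBot T] with t ht htT
    refine aux_D κ a₀ C (g t) t hκ ha₀ hC (hpos t) ?_ ht
    have i1 := integrableOn_exp_mul_Iic hκ t
    have h3κ : 0 < 3 * κ := by positivity
    have i3 := integrableOn_exp_mul_Iic h3κ t
    have e1 : g t - a₀ * (Real.exp (κ * t) / κ)
        = ∫ s in Set.Iic t, (a s - a₀ * Real.exp (κ * s)) := by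
      rw [integral_sub (haint t) (i1.const_mul a₀), integral_const_mul, integral_exp_mul_Iic hκ, hg]
    have e3 : C * (Real.exp (κ * t) ^ 3 / (3 * κ))
        = ∫ s in Set.Iic t, C * Real.exp (3 * κ * s) := by
      rw [integral_const_mul, integral_exp_mul_Iic h3κ, ← Real.exp_nat_mul]
      congr 3; push_cast; ring
    rw [e1, e3, ← Real.norm_eq_abs]
    refine norm_integral_le_of_norm_le (i3.const_mul C) ?_
    refine (ae_restrict_iff' measurableSet_Iic).mpr (ae_of_all _ fun s hs => ?_)
    have := hT s (le_trans hs htT)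
    rwa [Real.norm_of_nonneg (Real.exp_pos _).le] at this
  refine IsBigO.of_bound (|lam / κ| * (2 * C / (3 * a₀) * (2 * κ / a₀) ^ 2)) ?_
  filter_upwards [hlim.eventually hD, hhg] with X hX hgX
  rw [hgX] at hX
  set y : ℝ := lam / κ * (Real.log (κ / a₀) + Real.log X) with hy
  have hκc : (κ : ℂ) ≠ 0 := by exact_mod_cast hκ.ne'
  have e1 : Complex.exp ((Complex.I * (lam : ℂ) / (κ : ℂ)) * ((Real.log (κ / a₀) : ℝ) : ℂ))
          * Complex.exp ((Complex.I * (lam : ℂ) / (κ : ℂ)) * ((Real.log X : ℝ) : ℂ))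
      = Complex.exp (Complex.I * (lam : ℂ) * ((h X : ℝ) : ℂ))
        * Complex.exp (Complex.I * ((lam / κ * (Real.log (κ / a₀) + Real.log X - κ * h X) : ℝ) : ℂ)) := by
    rw [← Complex.exp_add, ← Complex.exp_add]
    congr 1
    push_cast
    field_simp
    ring
  have e2 : ‖Complex.exp (Complex.I * (lam : ℂ) * ((h X : ℝ) : ℂ))‖ = 1 := by
    rw [Complex.norm_exp]; simp
  rw [e1, norm_sub_rev, ← mul_sub_one, norm_mul, e2, one_mul]
  refine Real.norm_exp_I_mul_ofReal_sub_one_le.trans ?_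
  rw [Real.norm_eq_abs, abs_mul, Real.norm_of_nonneg (sq_nonneg X), mul_assoc]
  exact mul_le_mul_of_nonneg_left hX (abs_nonneg _)
end

section
/- There exists a constant C > 0 such that for all z ∈ ℂ with Re(z) ≥ 0 and |z| ≥ 1, and all t, X with 0 < t < X < A, one has |G(t, X, z)| ≤ C·e^{Re(z)·(X − t)} / ( (1 + |zX|^{1/2})·(1 + |zt|^{1/2}) ). -/
/-- The modified Bessel function `I_ν(w) = Σ_{k≥0} (w/2)^{ν+2k} / (Γ(k+ν+1)·k!)`,
with principal-branch complex powers. -/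
noncomputable def besselI (ν w : ℂ) : ℂ :=
  ∑' k : ℕ, (w / 2) ^ (ν + 2 * (k : ℂ)) / (Complex.Gamma ((k : ℂ) + ν + 1) * (Nat.factorial k : ℂ))

/-- The modified Bessel function `K_ν(w) = (π/2)(I_{−ν}(w) − I_ν(w))/sin(νπ)` for `ν ∉ ℤ`. -/
noncomputable def besselK (ν w : ℂ) : ℂ :=
  (Real.pi : ℂ) / 2 * (besselI (-ν) w - besselI ν w) / Complex.sin (ν * (Real.pi : ℂ))

/-- The Green kernel `G(t,X,z) = √(tX)·(I_ν(zt)K_ν(zX) − I_ν(zX)K_ν(zt))`. -/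
noncomputable def greenG (ν : ℂ) (t X : ℝ) (z : ℂ) : ℂ :=
  (Real.sqrt (t * X) : ℂ) *
    (besselI ν (z * t) * besselK ν (z * X) - besselI ν (z * X) * besselK ν (z * t))

/-- coefficients `1/Γ(k+ν+1)` -/
noncomputable def bCoef (ν : ℂ) (k : ℕ) : ℂ := (Complex.Gamma ((k : ℂ) + ν + 1))⁻¹

lemma bCoef_succ (ν : ℂ) (k : ℕ) : bCoef ν (k + 1) = bCoef (ν + 1) k := by
  unfold bCoef; congr 2; push_cast; ring

lemma bCoef_pred (ν : ℂ) (k : ℕ) : bCoef (ν - 1) k = (k + ν) * bCoef ν k := by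
  unfold bCoef
  have := Complex.one_div_Gamma_eq_self_mul_one_div_Gamma_add_one ((k : ℂ) + ν)
  rw [← this]
  have e : (k : ℂ) + (ν - 1) + 1 = k + ν := by ring
  rw [e]

lemma bCoef_bdd (ν : ℂ) : ∃ M : ℝ, 0 ≤ M ∧ ∀ k, ‖bCoef ν k‖ ≤ M := by
  obtain ⟨N, hN⟩ := exists_nat_ge (‖ν‖ + 1)
  have hstep : ∀ k, N ≤ k → ‖bCoef ν (k + 1)‖ ≤ ‖bCoef ν k‖ := by
    intro k hk
    have h1 : bCoef ν k = ((k : ℂ) + (ν + 1)) * bCoef ν (k + 1) := by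
      rw [bCoef_succ, ← bCoef_pred, add_sub_cancel_right]
    have h2 : 1 ≤ ‖(k : ℂ) + (ν + 1)‖ := by
      have h3 : ‖((k : ℂ) + 1)‖ ≤ ‖(k : ℂ) + (ν + 1)‖ + ‖ν‖ := by
        have := norm_sub_le ((k : ℂ) + (ν + 1)) ν
        have e : (k : ℂ) + (ν + 1) - ν = k + 1 := by ring
        rwa [e] at this
      have h4 : ‖((k : ℂ) + 1)‖ = (k : ℝ) + 1 := by
        have : ((k : ℂ) + 1) = ((k + 1 : ℕ) : ℂ) := by push_cast; ring
        rw [this, Complex.norm_natCast]; push_cast; ring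
      have h5 : (N : ℝ) ≤ k := by exact_mod_cast hk
      linarith
    rw [h1, norm_mul]
    nlinarith [norm_nonneg (bCoef ν (k + 1))]
  refine ⟨∑ i ∈ Finset.range (N + 1), ‖bCoef ν i‖, by positivity, ?_⟩
  have hsmall : ∀ k, k ≤ N → ‖bCoef ν k‖ ≤ ∑ i ∈ Finset.range (N + 1), ‖bCoef ν i‖ := by
    intro k hk
    exact Finset.single_le_sum (f := fun i => ‖bCoef ν i‖) (fun _ _ => norm_nonneg _)
      (Finset.mem_range.2 (by omega))
  intro k
  rcases le_total k N with h | h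
  · exact hsmall k h
  · induction k, h using Nat.le_induction with
    | base => exact hsmall N le_rfl
    | succ k hk ih => exact (hstep k hk).trans ih

/-- the entire function `F_ν(s) = Σ s^k/(k! Γ(k+ν+1))` -/
noncomputable def Fser (ν s : ℂ) : ℂ := ∑' k : ℕ, s ^ k / (k.factorial : ℂ) * bCoef ν k

lemma Fser_summable (ν s : ℂ) : Summable fun k : ℕ => s ^ k / (k.factorial : ℂ) * bCoef ν k := by
  obtain ⟨M, hM0, hM⟩ := bCoef_bdd ν
  refine Summable.of_norm_bounded (g := fun k : ℕ => ‖s‖ ^ k / (k.factorial : ℝ) * M)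
    ((Real.summable_pow_div_factorial ‖s‖).mul_right M) ?_
  intro k
  rw [norm_mul, norm_div, norm_pow, Complex.norm_natCast]
  gcongr
  exact hM k

lemma succ_div_fact (x : ℂ) (k : ℕ) :
    ((k + 1 : ℕ) : ℂ) * x / ((k + 1).factorial : ℂ) = x / (k.factorial : ℂ) := by
  rw [Nat.factorial_succ]; push_cast
  have h1 : (k : ℂ) + 1 ≠ 0 := by exact_mod_cast Nat.succ_ne_zero k
  have h2 : (k.factorial : ℂ) ≠ 0 := by exact_mod_cast k.factorial_ne_zero
  field_simp

lemma Fser_hasDerivAt (ν s : ℂ) : HasDerivAt (Fser ν) (Fser (ν + 1) s) s := by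
  obtain ⟨M, hM0, hM⟩ := bCoef_bdd ν
  set R : ℝ := ‖s‖ + 1 with hR
  have hR0 : 0 ≤ R := by positivity
  have hu : Summable fun k : ℕ => (k : ℝ) * R ^ (k - 1) / (k.factorial : ℝ) * M := by
    apply Summable.mul_right
    rw [← summable_nat_add_iff 1]
    refine (Real.summable_pow_div_factorial R).congr ?_
    intro k
    rw [Nat.factorial_succ]; push_cast
    have h2 : (k.factorial : ℝ) ≠ 0 := by exact_mod_cast k.factorial_ne_zero
    field_simp
  have key := hasDerivAt_tsum_of_isPreconnected (𝕜 := ℂ) (F := ℂ) hu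
    (t := Metric.ball (0 : ℂ) R) Metric.isOpen_ball
    (convex_ball (0 : ℂ) R).isPreconnected
    (g := fun (k : ℕ) (y : ℂ) => y ^ k / (k.factorial : ℂ) * bCoef ν k)
    (g' := fun (k : ℕ) (y : ℂ) => (k : ℂ) * y ^ (k - 1) / (k.factorial : ℂ) * bCoef ν k)
    (fun k y _ => ((hasDerivAt_pow k y).div_const _).mul_const _)
    (by
      intro k y hy
      rw [norm_mul, norm_div, norm_mul, norm_pow, Complex.norm_natCast, Complex.norm_natCast]
      have hy' : ‖y‖ ≤ R := by simpa using (le_of_lt (mem_ball_zero_iff.1 hy))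
      gcongr
      exact hM k)
    (y₀ := s) (y := s) (by simp [hR]) (Fser_summable ν s) (by simp [hR])
  refine HasDerivAt.congr_deriv key ?_
  have hs : Summable fun k : ℕ => (k : ℂ) * s ^ (k - 1) / (k.factorial : ℂ) * bCoef ν k := by
    rw [← summable_nat_add_iff 1]
    refine (Fser_summable (ν + 1) s).congr ?_
    intro k
    rw [Nat.add_sub_cancel, succ_div_fact, bCoef_succ]
  rw [hs.tsum_eq_zero_add]
  simp only [Nat.cast_zero, zero_mul, zero_div, zero_add, Fser]
  refine tsum_congr fun k => ?_
  rw [Nat.add_sub_cancel, succ_div_fact, bCoef_succ]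

lemma Fser_rec (ν s : ℂ) : Fser (ν - 1) s = ν * Fser ν s + s * Fser (ν + 1) s := by
  have hs : Summable fun k : ℕ => (k : ℂ) * s ^ k / (k.factorial : ℂ) * bCoef ν k := by
    rw [← summable_nat_add_iff 1]
    refine ((Fser_summable (ν + 1) s).mul_left s).congr ?_
    intro k
    rw [succ_div_fact, bCoef_succ]; ring
  have h2 : s * Fser (ν + 1) s = ∑' k : ℕ, (k : ℂ) * s ^ k / (k.factorial : ℂ) * bCoef ν k := by
    rw [hs.tsum_eq_zero_add]
    simp only [Nat.cast_zero, zero_mul, zero_div, zero_add, Fser]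
    rw [← tsum_mul_left]
    refine tsum_congr fun k => ?_
    rw [succ_div_fact, bCoef_succ]; ring
  rw [h2]
  unfold Fser
  rw [← tsum_mul_left, ← ((Fser_summable ν s).mul_left ν).tsum_add hs]
  refine tsum_congr fun k => ?_
  rw [bCoef_pred]; ring

lemma wronsk_const (ν s : ℂ) :
    s * (Fser ν s * Fser (1 - ν) s) - Fser (-ν) s * Fser (ν - 1) s
      = - (Fser (-ν) 0 * Fser (ν - 1) 0) := by
  have hd : ∀ s, HasDerivAt
      (fun s => s * (Fser ν s * Fser (1 - ν) s) - Fser (-ν) s * Fser (ν - 1) s) 0 s := by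
    intro s
    have h1 := Fser_hasDerivAt ν s
    have h2 := Fser_hasDerivAt (1 - ν) s
    have h3 := Fser_hasDerivAt (-ν) s
    have h4 := Fser_hasDerivAt (ν - 1) s
    have e3 : -ν + 1 = 1 - ν := by ring
    have e4 : ν - 1 + 1 = ν := by ring
    rw [e3] at h3
    rw [e4] at h4
    refine HasDerivAt.congr_deriv (((hasDerivAt_id s).mul (h1.mul h2)).sub (h3.mul h4)) ?_
    have r1 := Fser_rec ν s
    have r2 := Fser_rec (1 - ν) s
    have e5 : 1 - ν - 1 = -ν := by ring
    rw [e5] at r2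
    rw [r1, r2]
    simp only [id, Pi.mul_apply]
    ring
  have := is_const_of_deriv_eq_zero (fun s => (hd s).differentiableAt) (fun s => (hd s).deriv) s 0
  simpa using this

lemma energy (μ : ℝ) (z : ℂ) (hz : 0 ≤ z.re) (u v : ℝ → ℂ)
    (hu : ∀ x : ℝ, 0 < x → HasDerivAt u (Complex.I * μ / x * u x + z * v x) x)
    (hv : ∀ x : ℝ, 0 < x → HasDerivAt v (-(Complex.I * μ / x) * v x + z * u x) x)
    (t X : ℝ) (ht : 0 < t) (htX : t ≤ X) (hut : u t = 0) :
    ‖u X‖ ≤ Real.exp (z.re * (X - t)) * ‖v t‖ := by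
  have hE : ∀ x : ℝ, 0 < x → ∃ d : ℝ, d ≤ 0 ∧ HasDerivAt
      (fun x => (‖u x‖ ^ 2 + ‖v x‖ ^ 2) * Real.exp (-(2 * z.re) * x)) d x := by
    intro x hx
    have h1 := (hu x hx).norm_sq.add (hv x hx).norm_sq
    have h2 : HasDerivAt (fun x : ℝ => Real.exp (-(2 * z.re) * x))
        (Real.exp (-(2 * z.re) * x) * (-(2 * z.re) * 1)) x :=
      ((hasDerivAt_id x).const_mul _).exp
    refine ⟨_, ?_, h1.mul h2⟩
    have hq : Complex.I * μ / x = Complex.I * ((μ / x : ℝ) : ℂ) := by push_cast; ring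
    have hc : 2 * inner ℝ (u x) (Complex.I * μ / x * u x + z * v x) +
        2 * inner ℝ (v x) (-(Complex.I * μ / x) * v x + z * u x)
        = 4 * z.re * ((u x).re * (v x).re + (u x).im * (v x).im) := by
      rw [hq]
      generalize μ / x = q
      simp only [Complex.inner, Complex.mul_re, Complex.add_re, Complex.add_im, Complex.mul_im,
        Complex.conj_re, Complex.conj_im, Complex.I_re, Complex.I_im, Complex.ofReal_re,
        Complex.ofReal_im, Complex.neg_re, Complex.neg_im]
      ring
    have hp := Real.exp_pos (-(2 * z.re) * x)
    simp only [Pi.add_apply]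
    rw [hc]
    have hn1 : ‖u x‖ ^ 2 = (u x).re ^ 2 + (u x).im ^ 2 := by
      rw [Complex.sq_norm, Complex.normSq_apply]; ring
    have hn2 : ‖v x‖ ^ 2 = (v x).re ^ 2 + (v x).im ^ 2 := by
      rw [Complex.sq_norm, Complex.normSq_apply]; ring
    rw [hn1, hn2]
    have : 0 ≤ Real.exp (-(2 * z.re) * x) * (2 * z.re) *
        (((u x).re - (v x).re) ^ 2 + ((u x).im - (v x).im) ^ 2) := by positivity
    linarith
  have hanti : AntitoneOn
      (fun x => (‖u x‖ ^ 2 + ‖v x‖ ^ 2) * Real.exp (-(2 * z.re) * x)) (Set.Ioi 0) := by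
    apply antitoneOn_of_deriv_nonpos (convex_Ioi 0)
    · intro x hx
      obtain ⟨d, _, h⟩ := hE x hx
      exact h.continuousAt.continuousWithinAt
    · intro x hx
      rw [interior_Ioi] at hx
      obtain ⟨d, _, h⟩ := hE x hx
      exact h.differentiableAt.differentiableWithinAt
    · intro x hx
      rw [interior_Ioi] at hx
      obtain ⟨d, hd, h⟩ := hE x hx
      rw [h.deriv]; exact hd
  have h := hanti (Set.mem_Ioi.2 ht) (Set.mem_Ioi.2 (ht.trans_le htX)) htX
  simp only [hut, norm_zero] at h
  have hfin : ‖u X‖ ^ 2 ≤ (Real.exp (z.re * (X - t)) * ‖v t‖) ^ 2 := by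
    have e1 : Real.exp (-(2 * z.re) * t) * Real.exp (2 * z.re * X)
        = Real.exp (z.re * (X - t)) ^ 2 := by
      rw [← Real.exp_add, ← Real.exp_nat_mul]; congr 1; push_cast; ring
    have e2 : Real.exp (-(2 * z.re) * X) * Real.exp (2 * z.re * X) = 1 := by
      rw [← Real.exp_add, ← Real.exp_zero]; congr 1; ring
    have h' := mul_le_mul_of_nonneg_right h (Real.exp_pos (2 * z.re * X)).le
    rw [mul_assoc, e2, mul_assoc, e1] at h'
    nlinarith [sq_nonneg ‖v X‖]
  exact le_of_abs_le (abs_le_of_sq_le_sq hfin (by positivity))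

lemma Fcomp_hasDerivAt (ν z : ℂ) (x : ℝ) :
    HasDerivAt (fun x : ℝ => Fser ν (z ^ 2 * (x : ℂ) ^ 2 / 4))
      (Fser (ν + 1) (z ^ 2 * (x : ℂ) ^ 2 / 4) * (z ^ 2 * x / 2)) x := by
  have h1 : HasDerivAt (fun y : ℂ => z ^ 2 * y ^ 2 / 4) (z ^ 2 * x / 2) (x : ℂ) := by
    refine HasDerivAt.congr_deriv (((hasDerivAt_pow 2 (x : ℂ)).const_mul (z ^ 2)).div_const 4) ?_
    push_cast; ring
  exact ((Fser_hasDerivAt ν _).comp (x : ℂ) h1).comp_ofReal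

lemma cpow_real_hasDerivAt (r : ℂ) (x : ℝ) (hx : 0 < x) :
    HasDerivAt (fun x : ℝ => (x : ℂ) ^ r) (r * (x : ℂ) ^ r / x) x := by
  have hx' : (x : ℂ) ≠ 0 := by exact_mod_cast hx.ne'
  have h1 := ((hasDerivAt_id (x : ℂ)).cpow_const (c := r)
    (Or.inl (by simpa using hx))).comp_ofReal
  refine HasDerivAt.congr_deriv h1 ?_
  simp only [id]
  rw [Complex.cpow_sub _ _ hx', Complex.cpow_one]
  ring

noncomputable def phi1 (a z : ℂ) (x : ℝ) : ℂ :=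
  x * (x : ℂ) ^ (-a) * Fser (1 / 2 - a) (z ^ 2 * (x : ℂ) ^ 2 / 4)
noncomputable def phi2 (a z : ℂ) (x : ℝ) : ℂ :=
  (x : ℂ) ^ a * Fser (-(1 / 2 - a)) (z ^ 2 * (x : ℂ) ^ 2 / 4)
noncomputable def psi1 (a z : ℂ) (x : ℝ) : ℂ :=
  2 / z * (x : ℂ) ^ (-a) * Fser (1 / 2 - a - 1) (z ^ 2 * (x : ℂ) ^ 2 / 4)
noncomputable def psi2 (a z : ℂ) (x : ℝ) : ℂ :=
  z / 2 * (x * (x : ℂ) ^ a) * Fser (1 - (1 / 2 - a)) (z ^ 2 * (x : ℂ) ^ 2 / 4)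

lemma phi1_deriv (a z : ℂ) (hz : z ≠ 0) (x : ℝ) (hx : 0 < x) :
    HasDerivAt (phi1 a z) (a / x * phi1 a z x + z * psi1 a z x) x := by
  have hx' : (x : ℂ) ≠ 0 := by exact_mod_cast hx.ne'
  have h := (((hasDerivAt_id (x : ℂ)).comp_ofReal).mul (cpow_real_hasDerivAt (-a) x hx)).mul
    (Fcomp_hasDerivAt (1 / 2 - a) z x)
  refine HasDerivAt.congr_deriv h ?_
  simp only [phi1, psi1, id, Pi.mul_apply]
  rw [Fser_rec (1 / 2 - a)]
  field_simp
  ring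

lemma phi2_deriv (a z : ℂ) (x : ℝ) (hx : 0 < x) :
    HasDerivAt (phi2 a z) (a / x * phi2 a z x + z * psi2 a z x) x := by
  have hx' : (x : ℂ) ≠ 0 := by exact_mod_cast hx.ne'
  have h := (cpow_real_hasDerivAt a x hx).mul (Fcomp_hasDerivAt (-(1 / 2 - a)) z x)
  refine HasDerivAt.congr_deriv h ?_
  simp only [phi2, psi2]
  have e : -(1 / 2 - a) + 1 = 1 - (1 / 2 - a) := by ring
  rw [e]
  field_simp

lemma psi1_deriv (a z : ℂ) (hz : z ≠ 0) (x : ℝ) (hx : 0 < x) :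
    HasDerivAt (psi1 a z) (-(a / x) * psi1 a z x + z * phi1 a z x) x := by
  have hx' : (x : ℂ) ≠ 0 := by exact_mod_cast hx.ne'
  have h := ((cpow_real_hasDerivAt (-a) x hx).const_mul (2 / z)).mul
    (Fcomp_hasDerivAt (1 / 2 - a - 1) z x)
  refine HasDerivAt.congr_deriv h ?_
  simp only [phi1, psi1]
  rw [sub_add_cancel]
  field_simp

lemma psi2_deriv (a z : ℂ) (x : ℝ) (hx : 0 < x) :
    HasDerivAt (psi2 a z) (-(a / x) * psi2 a z x + z * phi2 a z x) x := by
  have hx' : (x : ℂ) ≠ 0 := by exact_mod_cast hx.ne'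
  have h := ((((hasDerivAt_id (x : ℂ)).comp_ofReal).mul
    (cpow_real_hasDerivAt a x hx)).const_mul (z / 2)).mul
    (Fcomp_hasDerivAt (1 - (1 / 2 - a)) z x)
  refine HasDerivAt.congr_deriv h ?_
  simp only [phi2, psi2, id, Pi.mul_apply]
  have r := Fser_rec (1 - (1 / 2 - a)) (z ^ 2 * (x : ℂ) ^ 2 / 4)
  have e : 1 - (1 / 2 - a) - 1 = -(1 / 2 - a) := by ring
  rw [e] at r
  rw [r]
  field_simp
  ring

lemma wronsk_t (a z : ℂ) (hz : z ≠ 0) (t : ℝ) (ht : 0 < t) :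
    phi1 a z t * psi2 a z t - phi2 a z t * psi1 a z t
      = -(2 / z * (Fser (-(1 / 2 - a)) 0 * Fser (1 / 2 - a - 1) 0)) := by
  have ht' : (t : ℂ) ≠ 0 := by exact_mod_cast ht.ne'
  have hw := wronsk_const (1 / 2 - a) (z ^ 2 * (t : ℂ) ^ 2 / 4)
  have hpq : (t : ℂ) ^ (-a) = ((t : ℂ) ^ a)⁻¹ := Complex.cpow_neg _ _
  have hp : (t : ℂ) ^ a ≠ 0 := by simp [Complex.cpow_eq_zero_iff, ht']
  rw [← mul_neg, ← hw]
  simp only [phi1, phi2, psi1, psi2]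
  rw [hpq]
  field_simp
  ring

lemma core_bound (μ : ℝ) (z : ℂ) (hz0 : z ≠ 0) (hz : 0 ≤ z.re) (t X : ℝ) (ht : 0 < t)
    (htX : t ≤ X) :
    ‖phi1 (Complex.I * μ) z t * phi2 (Complex.I * μ) z X
      - phi2 (Complex.I * μ) z t * phi1 (Complex.I * μ) z X‖ ≤
    Real.exp (z.re * (X - t)) * (2 / ‖z‖ * ‖Fser (-(1 / 2 - Complex.I * μ)) 0
      * Fser (1 / 2 - Complex.I * μ - 1) 0‖) := by
  set a := Complex.I * (μ : ℂ) with ha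
  have h := energy μ z hz (fun x => phi1 a z t * phi2 a z x - phi2 a z t * phi1 a z x)
    (fun x => phi1 a z t * psi2 a z x - phi2 a z t * psi1 a z x)
    (fun x hx => by
      refine HasDerivAt.congr_deriv (((phi2_deriv a z x hx).const_mul _).sub
        ((phi1_deriv a z hz0 x hx).const_mul _)) ?_
      ring)
    (fun x hx => by
      refine HasDerivAt.congr_deriv (((psi2_deriv a z x hx).const_mul _).sub
        ((psi1_deriv a z hz0 x hx).const_mul _)) ?_
      ring) t X ht htX (by ring)
  refine h.trans (le_of_eq ?_)
  rw [wronsk_t a z hz0 t ht, norm_neg, norm_mul, norm_div]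
  simp

lemma besselI_eq (ν z : ℂ) (hz : z ≠ 0) (x : ℝ) (hx : 0 < x) :
    besselI ν (z * x) = (z / 2) ^ ν * (x : ℂ) ^ ν * Fser ν (z ^ 2 * (x : ℂ) ^ 2 / 4) := by
  have hx' : (x : ℂ) ≠ 0 := by exact_mod_cast hx.ne'
  have hz2 : z / 2 ≠ 0 := div_ne_zero hz two_ne_zero
  have hw : z * x / 2 ≠ 0 := div_ne_zero (mul_ne_zero hz hx') two_ne_zero
  have h1 : (z * x / 2) ^ ν = (z / 2) ^ ν * (x : ℂ) ^ ν := by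
    have e : z * x / 2 = (x : ℂ) * (z / 2) := by ring
    rw [e, Complex.cpow_def_of_ne_zero (mul_ne_zero hx' hz2), Complex.cpow_def_of_ne_zero hz2,
      Complex.cpow_def_of_ne_zero hx', Complex.log_ofReal_mul hx hz2, ← Complex.exp_add,
      Complex.ofReal_log hx.le]
    congr 1; ring
  rw [← h1]
  unfold besselI Fser bCoef
  rw [← tsum_mul_left]
  refine tsum_congr fun k => ?_
  have h2 : (z * x / 2) ^ (2 * (k : ℂ)) = (z ^ 2 * (x : ℂ) ^ 2 / 4) ^ k := by
    have : (2 * (k : ℂ)) = ((2 * k : ℕ) : ℂ) := by push_cast; ring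
    rw [this, Complex.cpow_natCast, pow_mul]
    congr 1; ring
  rw [Complex.cpow_add _ _ hw, h2]
  rw [div_eq_mul_inv, mul_inv]
  ring

lemma green_neg (ν z : ℂ) (t X : ℝ) : greenG (-ν) t X z = greenG ν t X z := by
  unfold greenG besselK
  rw [neg_mul, Complex.sin_neg, neg_neg]
  simp only [div_eq_mul_inv, inv_neg]
  ring

lemma sqrt_mul_cpow (a : ℂ) (x : ℝ) (hx : 0 < x) :
    (Real.sqrt x : ℂ) * (x : ℂ) ^ (1 / 2 - a) = x * (x : ℂ) ^ (-a) ∧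
    (Real.sqrt x : ℂ) * (x : ℂ) ^ (-(1 / 2 - a)) = (x : ℂ) ^ a := by
  have hx' : (x : ℂ) ≠ 0 := by exact_mod_cast hx.ne'
  have hs : (Real.sqrt x : ℂ) = (x : ℂ) ^ (1 / 2 : ℂ) := by
    rw [Real.sqrt_eq_rpow, Complex.ofReal_cpow hx.le]; norm_num
  rw [hs, ← Complex.cpow_add _ _ hx', ← Complex.cpow_add _ _ hx']
  constructor
  · nth_rewrite 2 [← Complex.cpow_one (x : ℂ)]
    rw [← Complex.cpow_add _ _ hx']; congr 1; ring
  · congr 1; ring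

lemma green_eq (a z : ℂ) (hz : z ≠ 0) (t X : ℝ) (ht : 0 < t) (hX : 0 < X) :
    greenG (1 / 2 - a) t X z =
      (Real.pi : ℂ) / 2 / Complex.sin ((1 / 2 - a) * (Real.pi : ℂ)) *
        (phi1 a z t * phi2 a z X - phi2 a z t * phi1 a z X) := by
  have hz2 : z / 2 ≠ 0 := div_ne_zero hz two_ne_zero
  obtain ⟨t1, t2⟩ := sqrt_mul_cpow a t ht
  obtain ⟨X1, X2⟩ := sqrt_mul_cpow a X hX
  have hc : (z / 2) ^ (1 / 2 - a) * (z / 2) ^ (-(1 / 2 - a)) = 1 := by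
    rw [← Complex.cpow_add _ _ hz2]; simp
  unfold greenG besselK phi1 phi2
  rw [← t1, ← t2, ← X1, ← X2, besselI_eq _ z hz t ht, besselI_eq _ z hz X hX,
    besselI_eq _ z hz t ht, besselI_eq _ z hz X hX, Real.sqrt_mul ht.le]
  push_cast
  simp only [div_eq_mul_inv] at hc ⊢
  generalize (Complex.sin ((1 * 2⁻¹ - a) * (Real.pi : ℂ)))⁻¹ = S
  generalize (z * 2⁻¹) ^ (1 * 2⁻¹ - a) = P at *
  generalize (z * 2⁻¹) ^ (-(1 * 2⁻¹ - a)) = Q at *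
  linear_combination (↑√t * ↑√X * (↑Real.pi * 2⁻¹ * S) *
    ((t : ℂ) ^ (1 * 2⁻¹ - a) * Fser (1 * 2⁻¹ - a) (z ^ 2 * (t : ℂ) ^ 2 * 4⁻¹) *
      ((X : ℂ) ^ (-(1 * 2⁻¹ - a)) * Fser (-(1 * 2⁻¹ - a)) (z ^ 2 * (X : ℂ) ^ 2 * 4⁻¹)) -
     (X : ℂ) ^ (1 * 2⁻¹ - a) * Fser (1 * 2⁻¹ - a) (z ^ 2 * (X : ℂ) ^ 2 * 4⁻¹) *
      ((t : ℂ) ^ (-(1 * 2⁻¹ - a)) * Fser (-(1 * 2⁻¹ - a)) (z ^ 2 * (t : ℂ) ^ 2 * 4⁻¹)))) * hc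



/-- Estimate on the Green kernel: for `ν = σ(1/2 − iμ)` with `μ ∈ ℝ`,
`σ = ±1`, there is a constant `C > 0` such that for all `z` with `Re z ≥ 0`, `|z| ≥ 1` and
all `0 < t < X < A`,
`|G(t,X,z)| ≤ C e^{Re(z)(X−t)} / ((1+|zX|^{1/2})(1+|zt|^{1/2}))`. -/
theorem stmt_7 (μ σ : ℝ) (hσ : σ = 1 ∨ σ = -1)
    (ν : ℂ) (hν : ν = (σ : ℂ) * (1 / 2 - Complex.I * (μ : ℂ)))
    (A : ℝ) (hA : 0 < A) :
    ∃ C > (0 : ℝ), ∀ z : ℂ, 0 ≤ z.re → 1 ≤ ‖z‖ →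
      ∀ t X : ℝ, 0 < t → t < X → X < A →
        ‖greenG ν t X z‖ ≤
          C * Real.exp (z.re * (X - t)) /
            ((1 + Real.sqrt (‖z * (X : ℂ)‖)) *
              (1 + Real.sqrt (‖z * (t : ℂ)‖))) := by
  set a : ℂ := Complex.I * (μ : ℂ) with ha
  set c1 : ℝ := ‖(Real.pi : ℂ) / 2 / Complex.sin ((1 / 2 - a) * (Real.pi : ℂ))‖ with hc1
  set c2 : ℝ := ‖Fser (-(1 / 2 - a)) 0 * Fser (1 / 2 - a - 1) 0‖ with hc2
  have hc1n : 0 ≤ c1 := norm_nonneg _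
  have hc2n : 0 ≤ c2 := norm_nonneg _
  refine ⟨(c1 * (2 * c2) + 1) * (1 + Real.sqrt A) ^ 2, by positivity, ?_⟩
  intro z hz hz1 t X ht htX hXA
  have hzpos : 0 < ‖z‖ := by linarith
  have hz0 : z ≠ 0 := norm_pos_iff.1 hzpos
  have hX : 0 < X := ht.trans htX
  have hG : greenG ν t X z = greenG (1 / 2 - a) t X z := by
    rcases hσ with h | h
    · rw [hν, h]; simp
    · rw [hν, h, ← green_neg]; simp
  have hb : ‖greenG ν t X z‖ ≤ c1 * (2 * c2) * Real.exp (z.re * (X - t)) / ‖z‖ := by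
    rw [hG, green_eq a z hz0 t X ht hX, norm_mul]
    have h := mul_le_mul_of_nonneg_left (core_bound μ z hz0 hz t X ht htX.le) hc1n
    refine h.trans (le_of_eq ?_)
    rw [← ha, ← hc2]
    field_simp
  have hs : ∀ x : ℝ, 0 < x → x < A →
      1 + Real.sqrt ‖z * (x : ℂ)‖ ≤ Real.sqrt ‖z‖ * (1 + Real.sqrt A) := by
    intro x hx hxA
    rw [norm_mul, Complex.norm_real, Real.norm_of_nonneg hx.le, Real.sqrt_mul hzpos.le]
    have h1 : 1 ≤ Real.sqrt ‖z‖ := Real.one_le_sqrt.2 hz1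
    have h2 : Real.sqrt x ≤ Real.sqrt A := Real.sqrt_le_sqrt hxA.le
    nlinarith
  have hD : (1 + Real.sqrt ‖z * (X : ℂ)‖) * (1 + Real.sqrt ‖z * (t : ℂ)‖)
      ≤ ‖z‖ * (1 + Real.sqrt A) ^ 2 := by
    have h := mul_le_mul (hs X hX hXA) (hs t ht (htX.trans hXA)) (by positivity) (by positivity)
    refine h.trans (le_of_eq ?_)
    have := Real.mul_self_sqrt hzpos.le
    linear_combination (1 + Real.sqrt A) ^ 2 * this
  refine hb.trans ?_
  have hE := Real.exp_pos (z.re * (X - t))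
  rw [div_le_div_iff₀ hzpos (by positivity)]
  calc c1 * (2 * c2) * Real.exp (z.re * (X - t)) *
        ((1 + Real.sqrt ‖z * (X : ℂ)‖) * (1 + Real.sqrt ‖z * (t : ℂ)‖))
      ≤ (c1 * (2 * c2) + 1) * Real.exp (z.re * (X - t)) * (‖z‖ * (1 + Real.sqrt A) ^ 2) := by
        gcongr
        linarith
    _ = _ := by ring
end

section
/- Let h be a holomorphic function on Π⁺ and suppose there exist constants A ≥ 0 and C ≥ 0 such that |h(z)| ≤ C·e^{A·Re(z)} for all z ∈ Π⁺. Then h belongs to the Nevanlinna class N(Π⁺). -/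
/-- The right half plane `Π⁺ = {z ∈ ℂ : Re z > 0}`. -/
def PiPlus : Set ℂ := {z : ℂ | 0 < z.re}

/-- `ln⁺(x) = ln x` if `ln x ≥ 0` and `0` otherwise. -/
noncomputable def lnPlus (x : ℝ) : ℝ := max (Real.log x) 0

/-- The Nevanlinna class `N(Π⁺)`: holomorphic functions `f` on `Π⁺` such that
`sup_{0<r<1} ∫_{−π}^{π} ln⁺ |f((1 − re^{iφ})/(1 + re^{iφ}))| dφ < ∞`. -/
def MemNevanlinna (f : ℂ → ℂ) : Prop :=
  DifferentiableOn ℂ f PiPlus ∧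
  ∃ B : ℝ, ∀ r ∈ Set.Ioo (0 : ℝ) 1,
    (∫ φ in (-Real.pi)..Real.pi,
        lnPlus (norm (f ((1 - (r : ℂ) * Complex.exp (Complex.I * (φ : ℂ))) /
          (1 + (r : ℂ) * Complex.exp (Complex.I * (φ : ℂ))))))) ≤ B

open Complex in
theorem nev_denom_ne (z : ℂ) (hz : ‖z‖ < 1) : 1 + z ≠ 0 := by
  intro h0
  have : z = -1 := by linear_combination h0
  rw [this] at hz
  simp at hz

theorem nev_re_pos (z : ℂ) (hz : ‖z‖ < 1) : 0 < ((1 - z) / (1 + z)).re := by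
  have h0 := nev_denom_ne z hz
  have hn : 0 < Complex.normSq (1 + z) := Complex.normSq_pos.2 h0
  have h1 : Complex.normSq z < 1 := by
    rw [Complex.normSq_eq_norm_sq]
    nlinarith [norm_nonneg z]
  rw [Complex.div_re, ← add_div]
  apply div_pos _ hn
  rw [Complex.normSq_apply] at h1
  simp only [Complex.sub_re, Complex.add_re, Complex.one_re, Complex.sub_im, Complex.add_im,
    Complex.one_im]
  nlinarith

theorem nev_mean (r : ℝ) (hr : r ∈ Set.Ioo (0 : ℝ) 1) :
    Continuous (fun φ : ℝ => (1 - circleMap 0 r φ) / (1 + circleMap 0 r φ)) ∧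
    (∫ φ in (-Real.pi)..Real.pi,
      ((1 - circleMap 0 r φ) / (1 + circleMap 0 r φ)).re) = 2 * Real.pi := by
  have hnorm : ∀ φ : ℝ, ‖circleMap 0 r φ‖ < 1 := by
    intro φ
    rw [norm_circleMap_zero, abs_of_pos hr.1]; exact hr.2
  have hc : Continuous (fun φ : ℝ => (1 - circleMap 0 r φ) / (1 + circleMap 0 r φ)) := by
    have := continuous_circleMap 0 r
    exact (continuous_const.sub this).div (continuous_const.add this)
      (fun φ => nev_denom_ne _ (hnorm φ))
  refine ⟨hc, ?_⟩
  have hd : DiffContOnCl ℂ (fun z : ℂ => (1 - z) / (1 + z)) (Metric.ball 0 |r|) := by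
    apply DifferentiableOn.diffContOnCl
    intro z hz
    have hz' : ‖z‖ ≤ r := by
      have := Metric.closure_ball_subset_closedBall hz
      rwa [mem_closedBall_zero_iff, abs_of_pos hr.1] at this
    have := nev_denom_ne z (hz'.trans_lt hr.2)
    apply DifferentiableAt.differentiableWithinAt
    fun_prop (disch := assumption)
  have hm := hd.circleAverage
  rw [Real.circleAverage_def] at hm
  have hper : Function.Periodic
      (fun φ : ℝ => (1 - circleMap 0 r φ) / (1 + circleMap 0 r φ)) (2 * Real.pi) := by
    intro φ
    simp only [periodic_circleMap 0 r φ]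
  have hs := hper.intervalIntegral_add_eq (-Real.pi) 0
  rw [show -Real.pi + 2 * Real.pi = Real.pi by ring, zero_add] at hs
  rw [← hs] at hm
  have hpi : (2 * Real.pi) ≠ 0 := by positivity
  have hm2 : (∫ φ in (-Real.pi)..Real.pi,
      (1 - circleMap 0 r φ) / (1 + circleMap 0 r φ)) = ((2 * Real.pi : ℝ) : ℂ) := by
    rw [inv_smul_eq_iff₀ hpi] at hm
    rw [hm]; simp
  have := Complex.reCLM.intervalIntegral_comp_comm
    (hc.intervalIntegrable (μ := MeasureTheory.volume) (-Real.pi) Real.pi)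
  simp only [Complex.reCLM_apply] at this
  rw [this, hm2, Complex.ofReal_re]

/-- A holomorphic function on `Π⁺` satisfying
`|h(z)| ≤ C·e^{A·Re z}` belongs to the Nevanlinna class `N(Π⁺)`. -/
theorem stmt_10 (h : ℂ → ℂ) (hhol : DifferentiableOn ℂ h PiPlus)
    (A C : ℝ) (hA : 0 ≤ A) (hC : 0 ≤ C)
    (hbd : ∀ z ∈ PiPlus, norm (h z) ≤ C * Real.exp (A * z.re)) :
    MemNevanlinna h := by
  refine ⟨hhol, 2 * Real.pi * lnPlus C + A * (2 * Real.pi), ?_⟩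
  intro r hr
  obtain ⟨hc, hint⟩ := nev_mean r hr
  have hcm : ∀ φ : ℝ, (r : ℂ) * Complex.exp (Complex.I * (φ : ℂ)) = circleMap 0 r φ := by
    intro φ
    simp [circleMap, mul_comm]
  simp only [hcm]
  have hpt : ∀ z ∈ PiPlus, lnPlus ‖h z‖ ≤ lnPlus C + A * z.re := by
    intro z hz
    have h0 : 0 ≤ A * z.re := mul_nonneg hA (le_of_lt hz)
    have hl : 0 ≤ lnPlus C := le_max_right _ _
    apply max_le _ (by positivity)
    rcases (norm_nonneg (h z)).eq_or_lt with hn | hn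
    · rw [← hn, Real.log_zero]; positivity
    · have hb := hbd z hz
      have hCp : C ≠ 0 := by
        rintro rfl
        simp only [zero_mul] at hb
        linarith
      have := Real.log_le_log hn hb
      rw [Real.log_mul hCp (Real.exp_ne_zero _), Real.log_exp] at this
      have : Real.log C ≤ lnPlus C := le_max_left _ _
      linarith
  have hre : Continuous (fun φ : ℝ => ((1 - circleMap 0 r φ) / (1 + circleMap 0 r φ)).re) :=
    Complex.continuous_re.comp hc
  have hle : -Real.pi ≤ Real.pi := by linarith [Real.pi_pos]
  have hg : Continuous (fun φ : ℝ => lnPlus C +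
      A * ((1 - circleMap 0 r φ) / (1 + circleMap 0 r φ)).re) :=
    continuous_const.add (continuous_const.mul hre)
  have hAre : Continuous (fun φ : ℝ =>
      A * ((1 - circleMap 0 r φ) / (1 + circleMap 0 r φ)).re) := continuous_const.mul hre
  calc _ ≤ ∫ φ in (-Real.pi)..Real.pi, (lnPlus C +
        A * ((1 - circleMap 0 r φ) / (1 + circleMap 0 r φ)).re) := by
        rw [intervalIntegral.integral_of_le hle, intervalIntegral.integral_of_le hle]
        apply MeasureTheory.integral_mono_of_nonneg
        · exact Filter.Eventually.of_forall (fun φ => le_max_right _ _)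
        · exact (hg.intervalIntegrable _ _).1
        · refine Filter.Eventually.of_forall (fun φ => hpt _ ?_)
          apply nev_re_pos
          rw [norm_circleMap_zero, abs_of_pos hr.1]; exact hr.2
    _ = _ := by
        rw [intervalIntegral.integral_add (continuous_const.intervalIntegrable _ _)
          (hAre.intervalIntegrable _ _),
          intervalIntegral.integral_const_mul, hint, intervalIntegral.integral_const, smul_eq_mul]
        ring
end

section
/- Let h ∈ N(Π⁺) and let L be a subset of the positive integers ℕ* satisfying the Müntz condition Σ_{n∈L} 1/n = ∞. If h(n) = 0 for every n ∈ L, then h is identically zero on Π⁺. -/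
open Complex in
/-- The pulled back function on the unit disc. -/
noncomputable def discFun (h : ℂ → ℂ) : ℂ → ℂ := fun w => h ((1 - w) / (1 + w))

lemma discFun_one_add_ne {w : ℂ} (hw : w ∈ Metric.ball (0 : ℂ) 1) : 1 + w ≠ 0 := by
  intro h0
  have : w = -1 := by linear_combination h0
  simp [this] at hw

lemma discFun_maps {w : ℂ} (hw : w ∈ Metric.ball (0 : ℂ) 1) : (1 - w) / (1 + w) ∈ PiPlus := by
  have h1 := discFun_one_add_ne hw
  have h2 : 0 < Complex.normSq (1 + w) := Complex.normSq_pos.mpr h1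
  have h3 : Complex.normSq w < 1 := by
    rw [mem_ball_zero_iff] at hw
    rw [Complex.normSq_eq_norm_sq]
    nlinarith [norm_nonneg w]
  rw [Complex.normSq_apply] at h3
  show 0 < ((1 - w) / (1 + w)).re
  rw [Complex.div_re, ← add_div]
  apply div_pos _ h2
  simp
  nlinarith

lemma discFun_analytic {h : ℂ → ℂ} (hd : DifferentiableOn ℂ h PiPlus) :
    AnalyticOnNhd ℂ (discFun h) (Metric.ball 0 1) := by
  apply DifferentiableOn.analyticOnNhd _ Metric.isOpen_ball
  apply hd.comp (t := PiPlus) _ (fun w hw => discFun_maps hw)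
  intro w hw
  have := discFun_one_add_ne hw
  fun_prop (disch := assumption)

lemma discFun_avg {h : ℂ → ℂ} (hd : DifferentiableOn ℂ h PiPlus) {B r : ℝ}
    (hr : r ∈ Set.Ioo (0 : ℝ) 1)
    (hB : (∫ φ in (-Real.pi)..Real.pi,
        lnPlus (norm (h ((1 - (r : ℂ) * Complex.exp (Complex.I * (φ : ℂ))) /
          (1 + (r : ℂ) * Complex.exp (Complex.I * (φ : ℂ))))))) ≤ B) :
    Real.circleAverage (fun w => Real.log ‖discFun h w‖) 0 r ≤ (2 * Real.pi)⁻¹ * B := by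
  have hsub : Metric.sphere (0 : ℂ) |r| ⊆ Metric.ball 0 1 := by
    intro w hw
    rw [mem_sphere_zero_iff_norm, abs_of_pos hr.1] at hw
    rw [mem_ball_zero_iff, hw]; exact hr.2
  have hm : MeromorphicOn (discFun h) (Metric.sphere 0 |r|) :=
    ((discFun_analytic hd).mono hsub).meromorphicOn
  calc Real.circleAverage (fun w => Real.log ‖discFun h w‖) 0 r
      ≤ Real.circleAverage (fun w => Real.posLog ‖discFun h w‖) 0 r := by
        apply Real.circleAverage_mono hm.circleIntegrable_log_norm
          hm.circleIntegrable_posLog_norm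
        intro x _
        exact le_max_right _ _
    _ ≤ _ := by
        rw [Real.circleAverage_eq_integral_add (-Real.pi),
          intervalIntegral.integral_comp_add_right
            (fun θ => Real.posLog ‖discFun h (circleMap 0 r θ)‖), smul_eq_mul]
        apply mul_le_mul_of_nonneg_left _ (by positivity)
        refine le_trans (le_of_eq ?_) hB
        rw [show 0 + -Real.pi = -Real.pi by ring, show 2 * Real.pi + -Real.pi = Real.pi by ring]
        congr 1
        ext θ
        simp only [Real.posLog, lnPlus, discFun, circleMap, zero_add, mul_comm, max_comm]

/-- A function of the Nevanlinna class `N(Π⁺)` vanishing on a subset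
`L ⊆ ℕ*` satisfying the Müntz condition `Σ_{n∈L} 1/n = ∞` vanishes identically on `Π⁺`. -/
theorem stmt_11 (h : ℂ → ℂ) (hh : MemNevanlinna h)
    (L : Set ℕ) (hL0 : ∀ n ∈ L, 0 < n)
    (hMuntz : ¬ Summable fun n : L => (1 : ℝ) / ((n : ℕ) : ℝ))
    (hzero : ∀ n ∈ L, h (n : ℕ) = 0) :
    ∀ z ∈ PiPlus, h z = 0 := by
  classical
  obtain ⟨hd, B, hB⟩ := hh
  by_contra! hne
  obtain ⟨z₀, hz₀, hz₀ne⟩ := hne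
  apply hMuntz
  set f := discFun h with hf
  have hfa : AnalyticOnNhd ℂ f (Metric.ball 0 1) := discFun_analytic hd
  -- some nonzero value
  have hw₀ : (1 - z₀) / (1 + z₀) ∈ Metric.ball (0 : ℂ) 1 ∧
      f ((1 - z₀) / (1 + z₀)) ≠ 0 := by
    have hre : 0 < z₀.re := hz₀
    have h1 : 1 + z₀ ≠ 0 := by
      intro h0
      have := congrArg Complex.re h0
      simp at this
      linarith
    constructor
    · rw [mem_ball_zero_iff, norm_div, div_lt_one (norm_pos_iff.mpr h1)]
      apply lt_of_pow_lt_pow_left₀ 2 (norm_nonneg _)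
      rw [← Complex.normSq_eq_norm_sq, ← Complex.normSq_eq_norm_sq, Complex.normSq_apply,
        Complex.normSq_apply]
      simp
      nlinarith
    · have : (1 - (1 - z₀) / (1 + z₀)) / (1 + (1 - z₀) / (1 + z₀)) = z₀ := by
        have h2 : 1 + (1 - z₀) / (1 + z₀) = 2 / (1 + z₀) := by field_simp; ring
        rw [h2]
        field_simp
        ring
      simp only [hf, discFun, this]
      exact hz₀ne
  have hord : ∀ u ∈ Metric.ball (0 : ℂ) 1, analyticOrderAt f u ≠ ⊤ := by
    intro u hu htop
    rw [analyticOrderAt_eq_top] at htop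
    exact hw₀.2 (hfa.eqOn_zero_of_preconnected_of_eventuallyEq_zero
      (convex_ball 0 1).isPreconnected hu htop hw₀.1)
  set m : ℤ := (meromorphicOrderAt f 0).untop₀ with hm
  set C : ℝ := Real.log ‖meromorphicTrailingCoeffAt f 0‖ with hC
  have hsubset : ∀ r ∈ Set.Ioo (0 : ℝ) 1, Metric.closedBall (0 : ℂ) |r| ⊆ Metric.ball 0 1 := by
    intro r hr
    rw [abs_of_pos hr.1]
    exact Metric.closedBall_subset_ball hr.2
  -- Jensen
  have hJ : ∀ r ∈ Set.Ioo (0 : ℝ) 1,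
      ∑ᶠ u, MeromorphicOn.divisor f (Metric.closedBall 0 |r|) u * Real.log (r * ‖0 - u‖⁻¹)
        + m * Real.log r + C ≤ (2 * Real.pi)⁻¹ * B := by
    intro r hr
    have h1 := discFun_avg hd hr (hB r hr)
    have hmer := (hfa.mono (hsubset r hr)).meromorphicOn
    have h2 := MeromorphicOn.circleAverage_log_norm hr.1.ne' hmer
    rw [MeromorphicOn.divisor_apply hmer (by simp)] at h2
    rw [← h2]
    exact h1
  let p : ℕ → ℂ := fun n => (1 - n) / (1 + n)
  have hpnorm : ∀ n : ℕ, 2 ≤ n → ‖p n‖ = ((n : ℝ) - 1) / (n + 1) := by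
    intro n hn
    have hn' : (2 : ℝ) ≤ n := by exact_mod_cast hn
    have : p n = ((-((n - 1) / (n + 1)) : ℝ) : ℂ) := by
      simp only [p]; push_cast; rw [← neg_div]; ring_nf
    rw [this, Complex.norm_real, norm_neg, Real.norm_of_nonneg]
    apply div_nonneg <;> linarith
  have hpinj : Function.Injective p := by
    intro a b hab
    simp only [p] at hab
    have ha : (1 + (a : ℂ)) ≠ 0 := by
      have : ((1 + a : ℕ) : ℂ) ≠ 0 := by exact_mod_cast (by omega : 1 + a ≠ 0)
      simpa using this
    have hb : (1 + (b : ℂ)) ≠ 0 := by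
      have : ((1 + b : ℕ) : ℂ) ≠ 0 := by exact_mod_cast (by omega : 1 + b ≠ 0)
      simpa using this
    rw [div_eq_div_iff ha hb] at hab
    have : (a : ℂ) = b := by linear_combination (-1/2) * hab
    exact_mod_cast this
  have hpzero : ∀ n ∈ L, f (p n) = 0 := by
    intro n hn
    have hn1 : (1 + (n : ℂ)) ≠ 0 := by
      have : ((1 + n : ℕ) : ℂ) ≠ 0 := by exact_mod_cast (by omega : 1 + n ≠ 0)
      simpa using this
    have : (1 - p n) / (1 + p n) = n := by
      simp only [p]
      have h2 : 1 + (1 - (n : ℂ)) / (1 + n) = 2 / (1 + n) := by field_simp; ring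
      rw [h2]
      field_simp
      ring
    simp only [hf, discFun, this]
    exact hzero n hn
  -- finite sums bound, radius r
  have hfin : ∀ F : Finset ℕ, (∀ n ∈ F, n ∈ L ∧ 2 ≤ n) → ∀ r ∈ Set.Ioo (0 : ℝ) 1,
      (∀ n ∈ F, ‖p n‖ < r) →
      ∑ n ∈ F, Real.log (r * ‖p n‖⁻¹) ≤ (2 * Real.pi)⁻¹ * B - C - m * Real.log r := by
    intro F hF r hr hpr
    have h1 := hJ r hr
    set D := MeromorphicOn.divisor f (Metric.closedBall 0 |r|) with hD
    have hmer := (hfa.mono (hsubset r hr)).meromorphicOn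
    have hDnn : ∀ u, 0 ≤ D u :=
      fun u => MeromorphicOn.AnalyticOnNhd.divisor_nonneg (hfa.mono (hsubset r hr)) u
    have hfs := D.finiteSupport (isCompact_closedBall _ _)
    have hterm : ∀ u, 0 ≤ (D u : ℝ) * Real.log (r * ‖0 - u‖⁻¹) := by
      intro u
      by_cases hu : u ∈ Metric.closedBall (0 : ℂ) |r|
      · rcases eq_or_ne u 0 with rfl | hu0
        · simp
        · apply mul_nonneg (by exact_mod_cast hDnn u)
          apply Real.log_nonneg
          rw [mem_closedBall_zero_iff, abs_of_pos hr.1] at hu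
          rw [zero_sub, norm_neg, ← div_eq_mul_inv, one_le_div (norm_pos_iff.mpr hu0)]
          exact hu
      · have : D u = 0 := by simp [hD, MeromorphicOn.divisor_def, hu]
        simp [this]
    have hge : ∀ n ∈ F, (1 : ℤ) ≤ D (p n) := by
      intro n hn
      have hin : p n ∈ Metric.closedBall (0 : ℂ) |r| := by
        rw [mem_closedBall_zero_iff, abs_of_pos hr.1]
        exact (hpr n hn).le
      have hin' := hsubset r hr hin
      have han := hfa _ hin'
      have hne0 : D (p n) ≠ 0 := by
        rw [hD, MeromorphicOn.divisor_apply hmer hin, han.meromorphicOrderAt_eq]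
        have hz : analyticOrderAt f (p n) ≠ 0 := by
          rw [Ne, han.analyticOrderAt_eq_zero]
          simp [hpzero n (hF n hn).1]
        obtain ⟨k, hk⟩ := ENat.ne_top_iff_exists.mp (hord _ hin')
        rw [← hk] at hz ⊢
        simpa using hz
      have := hDnn (p n)
      omega
    have hsum : ∑ n ∈ F, Real.log (r * ‖p n‖⁻¹) ≤
        ∑ᶠ u, (D u : ℝ) * Real.log (r * ‖0 - u‖⁻¹) := by
      have hsupp : (Function.support fun u => (D u : ℝ) * Real.log (r * ‖0 - u‖⁻¹)) ⊆
          ((hfs.toFinset ∪ F.image p : Finset ℂ) : Set ℂ) := by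
        intro u hu
        simp only [Function.mem_support, ne_eq, mul_eq_zero, not_or] at hu
        have h0 : D u ≠ 0 := by exact_mod_cast hu.1
        simp only [Finset.coe_union, Set.mem_union]
        left
        simpa using h0
      rw [finsum_eq_sum_of_support_subset _ hsupp]
      calc ∑ n ∈ F, Real.log (r * ‖p n‖⁻¹)
          ≤ ∑ n ∈ F, (D (p n) : ℝ) * Real.log (r * ‖0 - p n‖⁻¹) := by
            apply Finset.sum_le_sum
            intro n hn
            have hpos : 0 < ‖p n‖ := by
              have h2 : (2 : ℝ) ≤ n := by exact_mod_cast (hF n hn).2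
              rw [hpnorm n (hF n hn).2]
              apply div_pos <;> linarith
            have hlog : 0 ≤ Real.log (r * ‖p n‖⁻¹) := by
              apply Real.log_nonneg
              rw [← div_eq_mul_inv, one_le_div hpos]
              exact (hpr n hn).le
            rw [zero_sub, norm_neg]
            have : (1 : ℝ) ≤ D (p n) := by exact_mod_cast hge n hn
            nlinarith
        _ = ∑ u ∈ F.image p, (D u : ℝ) * Real.log (r * ‖0 - u‖⁻¹) := by
            rw [Finset.sum_image (fun a _ b _ hab => hpinj hab)]
        _ ≤ _ := by
            apply Finset.sum_le_sum_of_subset_of_nonneg Finset.subset_union_right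
            intro u _ _
            exact hterm u
    linarith
  -- let r tend to 1
  have hlim : ∀ F : Finset ℕ, (∀ n ∈ F, n ∈ L ∧ 2 ≤ n) →
      ∑ n ∈ F, Real.log (‖p n‖⁻¹) ≤ (2 * Real.pi)⁻¹ * B - C := by
    intro F hF
    have hpn : ∀ n ∈ F, 0 < ‖p n‖ ∧ ‖p n‖ < 1 := by
      intro n hn
      have h2 : (2 : ℝ) ≤ n := by exact_mod_cast (hF n hn).2
      rw [hpnorm n (hF n hn).2]
      constructor
      · apply div_pos <;> linarith
      · rw [div_lt_one (by linarith)]; linarith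
    have hcl : Filter.Tendsto Real.log (nhdsWithin 1 (Set.Iio 1)) (nhds 0) := by
      have := (Real.continuousAt_log (one_ne_zero)).tendsto
      rw [Real.log_one] at this
      exact this.mono_left nhdsWithin_le_nhds
    have hT1 : Filter.Tendsto (fun r : ℝ => ∑ n ∈ F, Real.log (r * ‖p n‖⁻¹))
        (nhdsWithin 1 (Set.Iio 1)) (nhds (∑ n ∈ F, Real.log (‖p n‖⁻¹))) := by
      apply tendsto_finsetSum
      intro n hn
      have hc : ContinuousAt (fun r : ℝ => Real.log (r * ‖p n‖⁻¹)) 1 := by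
        apply ContinuousAt.log (by fun_prop)
        have := (hpn n hn).1
        positivity
      have := hc.tendsto
      rw [one_mul] at this
      exact this.mono_left nhdsWithin_le_nhds
    have hT2 : Filter.Tendsto (fun r : ℝ => (2 * Real.pi)⁻¹ * B - C - m * Real.log r)
        (nhdsWithin 1 (Set.Iio 1)) (nhds ((2 * Real.pi)⁻¹ * B - C - m * 0)) :=
      tendsto_const_nhds.sub (hcl.const_mul _)
    rw [mul_zero, sub_zero] at hT2
    apply le_of_tendsto_of_tendsto hT1 hT2
    have hev : ∀ᶠ r in nhdsWithin (1 : ℝ) (Set.Iio 1), ∀ n ∈ F, ‖p n‖ < r := by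
      rw [Filter.eventually_all_finset]
      intro n hn
      exact (eventually_gt_nhds (hpn n hn).2).filter_mono nhdsWithin_le_nhds
    filter_upwards [hev, self_mem_nhdsWithin,
      (eventually_gt_nhds (zero_lt_one' ℝ)).filter_mono nhdsWithin_le_nhds] with r h1 h2 h3
    exact hfin F hF r ⟨h3, h2⟩ h1
  have hterm : ∀ n : ℕ, 2 ≤ n → 1 / (n : ℝ) ≤ Real.log (‖p n‖⁻¹) := by
    intro n hn
    have h2 : (2 : ℝ) ≤ n := by exact_mod_cast hn
    have hpos : 0 < ((n : ℝ) - 1) / (n + 1) := by apply div_pos <;> linarith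
    rw [hpnorm n hn, Real.log_inv]
    have h3 := Real.log_le_sub_one_of_pos hpos
    have h4 : ((n : ℝ) - 1) / (n + 1) - 1 = - (2 / (n + 1)) := by field_simp; ring
    have h5 : 1 / (n : ℝ) ≤ 2 / (n + 1) := by
      rw [div_le_div_iff₀ (by linarith) (by linarith)]; linarith
    linarith
  apply summable_of_sum_le (c := 1 + ((2 * Real.pi)⁻¹ * B - C))
  · intro n; positivity
  · intro u
    have e1 : ∑ x ∈ u, (1 : ℝ) / ((x : ℕ) : ℝ) =
        ∑ n ∈ u.map (Function.Embedding.subtype _), (1 : ℝ) / (n : ℝ) := by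
      rw [Finset.sum_map]; rfl
    rw [e1]
    set G := u.map (Function.Embedding.subtype (· ∈ L)) with hG
    have hGL : ∀ n ∈ G, n ∈ L := by
      intro n hn
      simp only [hG, Finset.mem_map] at hn
      obtain ⟨x, _, rfl⟩ := hn
      exact x.2
    have hF := hlim (G.filter (2 ≤ ·)) (by
      intro n hn
      rw [Finset.mem_filter] at hn
      exact ⟨hGL n hn.1, hn.2⟩)
    rw [← Finset.sum_filter_add_sum_filter_not G (2 ≤ ·)]
    have s1 : ∑ n ∈ G.filter (2 ≤ ·), (1 : ℝ) / n ≤ (2 * Real.pi)⁻¹ * B - C :=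
      le_trans (Finset.sum_le_sum fun n hn => hterm n (Finset.mem_filter.mp hn).2) hF
    have s2 : ∑ n ∈ G.filter (¬ 2 ≤ ·), (1 : ℝ) / n ≤ 1 := by
      calc _ ≤ ∑ n ∈ ({1} : Finset ℕ), (1 : ℝ) / n := by
            apply Finset.sum_le_sum_of_subset_of_nonneg
            · intro n hn
              rw [Finset.mem_filter] at hn
              have := hL0 n (hGL n hn.1)
              simp
              omega
            · intro n _ _; positivity
        _ = 1 := by simp
    linarith
end

section
/- Let f and g be holomorphic functions on Π⁺ and suppose there exist constants A ≥ 0 and C ≥ 0 such that |f(z)| ≤ C·e^{A·Re(z)} and |g(z)| ≤ C·e^{A·Re(z)} for all z ∈ Π⁺. Let L ⊆ ℕ* satisfy Σ_{n∈L} 1/n = ∞. If f(n) = g(n) for every n ∈ L, then f(z) = g(z) for every z ∈ Π⁺. -/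
/-- Schwarz lemma in the right half plane. -/
theorem aux_schwarz (h : ℂ → ℂ) (hd : DifferentiableOn ℂ h {z : ℂ | 0 < z.re}) (M : ℝ)
    (hb : ∀ z : ℂ, 0 < z.re → ‖h z‖ ≤ M) (a : ℝ) (ha : 0 < a) (h0 : h a = 0)
    (z : ℂ) (hz : 0 < z.re) : ‖h z‖ ≤ M * ‖(z - a) / (z + a)‖ := by
  have hza : z + a ≠ 0 := by
    intro e
    have := congrArg Complex.re e
    simp at this
    linarith
  have hac : (a : ℂ) ≠ 0 := by exact_mod_cast ha.ne'
  have hball : ∀ w ∈ Metric.ball (0 : ℂ) 1, (1 - w ≠ 0) ∧ 0 < ((a : ℂ) * ((1 + w) / (1 - w))).re := by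
    intro w hw
    have hw1 : ‖w‖ < 1 := by simpa using hw
    have hne : 1 - w ≠ 0 := by
      intro e
      have : w = 1 := (sub_eq_zero.mp e).symm
      rw [this] at hw1
      simp at hw1
    refine ⟨hne, ?_⟩
    rw [Complex.re_ofReal_mul, Complex.div_re, ← add_div]
    apply mul_pos ha
    apply div_pos _ (Complex.normSq_pos.mpr hne)
    have h2 : Complex.normSq w < 1 := by
      rw [Complex.normSq_eq_norm_sq]
      nlinarith [norm_nonneg w]
    rw [Complex.normSq_apply] at h2
    simp
    nlinarith
  have key := Complex.dist_le_div_mul_dist_of_mapsTo_ball (R₁ := 1) (R₂ := M) (c := (0 : ℂ))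
    (f := fun w => h ((a : ℂ) * ((1 + w) / (1 - w)))) (z := (z - a) / (z + a)) ?_ ?_ ?_
  · have e : (a : ℂ) * ((1 + (z - a) / (z + a)) / (1 - (z - a) / (z + a))) = z := by
      have h1 : 1 + (z - a) / (z + a) = 2 * z / (z + a) := by field_simp; ring
      have h2 : 1 - (z - a) / (z + a) = 2 * a / (z + a) := by field_simp; ring
      rw [h1, h2]
      field_simp
    simp only [e] at key
    simpa [h0] using key
  · refine hd.comp (t := {z : ℂ | 0 < z.re}) ?_ (fun w hw => (hball w hw).2)
    intro w hw
    have := (hball w hw).1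
    apply DifferentiableAt.differentiableWithinAt
    fun_prop (disch := assumption)
  · intro w hw
    simpa [h0] using hb _ (hball w hw).2
  · simp only [mem_ball_zero_iff, norm_div]
    rw [div_lt_one (norm_pos_iff.mpr hza)]
    rw [← sq_lt_sq₀ (norm_nonneg _) (norm_nonneg _), ← Complex.normSq_eq_norm_sq,
      ← Complex.normSq_eq_norm_sq, Complex.normSq_apply, Complex.normSq_apply]
    simp
    nlinarith [mul_pos ha hz]

theorem aux_factor (h : ℂ → ℂ) (hd : DifferentiableOn ℂ h {z : ℂ | 0 < z.re}) (M : ℝ)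
    (hb : ∀ z : ℂ, 0 < z.re → ‖h z‖ ≤ M) (a : ℝ) (ha : 0 < a) (h0 : h a = 0) :
    ∃ k : ℂ → ℂ, DifferentiableOn ℂ k {z : ℂ | 0 < z.re} ∧ (∀ z : ℂ, 0 < z.re → ‖k z‖ ≤ M) ∧
      ∀ z : ℂ, 0 < z.re → h z = (z - a) / (z + a) * k z := by
  have hopen : IsOpen {z : ℂ | 0 < z.re} := isOpen_lt continuous_const Complex.continuous_re
  have hmem : {z : ℂ | 0 < z.re} ∈ nhds (a : ℂ) := hopen.mem_nhds (by simpa using ha)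
  have hk : DifferentiableOn ℂ (fun z => (z + a) * dslope h a z) {z : ℂ | 0 < z.re} :=
    (by fun_prop : DifferentiableOn ℂ (fun z : ℂ => z + a) {z : ℂ | 0 < z.re}).mul
      ((Complex.differentiableOn_dslope hmem).mpr hd)
  have hne : ∀ z : ℂ, 0 < z.re → z + a ≠ 0 := by
    intro z hz e
    have := congrArg Complex.re e
    simp at this
    linarith
  have hfac : ∀ z : ℂ, 0 < z.re → h z = (z - a) / (z + a) * ((z + a) * dslope h a z) := by
    intro z hz
    have h1 := sub_smul_dslope h (a : ℂ) z
    rw [h0, sub_zero, smul_eq_mul] at h1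
    rw [← h1]
    have := hne z hz
    field_simp
  have hbd : ∀ z : ℂ, 0 < z.re → z ≠ a → ‖(z + a) * dslope h a z‖ ≤ M := by
    intro z hz hza
    have h1 := aux_schwarz h hd M hb a ha h0 z hz
    rw [hfac z hz, norm_mul, mul_comm M] at h1
    refine le_of_mul_le_mul_left h1 (norm_pos_iff.mpr ?_)
    exact div_ne_zero (sub_ne_zero.mpr hza) (hne z hz)
  refine ⟨_, hk, ?_, hfac⟩
  intro z hz
  by_cases hza : z = a
  · subst hza
    have hc : Filter.Tendsto (fun z => ‖(z + a) * dslope h a z‖) (nhdsWithin (a : ℂ) {(a : ℂ)}ᶜ)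
        (nhds ‖((a : ℂ) + a) * dslope h a a‖) :=
      (((hk.differentiableAt hmem).continuousAt.norm).tendsto).mono_left nhdsWithin_le_nhds
    refine le_of_tendsto hc ?_
    filter_upwards [mem_nhdsWithin_of_mem_nhds hmem, self_mem_nhdsWithin] with w hw hw'
    exact hbd w hw hw'
  · exact hbd z hz hza

theorem aux_prod (S : Finset ℕ) (M : ℝ) : ∀ (h : ℂ → ℂ),
    DifferentiableOn ℂ h {z : ℂ | 0 < z.re} → (∀ z : ℂ, 0 < z.re → ‖h z‖ ≤ M) →
    (∀ n ∈ S, 0 < n ∧ h (n : ℕ) = 0) →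
    ∀ z : ℂ, 0 < z.re → ‖h z‖ ≤ M * ∏ n ∈ S, ‖(z - n) / (z + n)‖ := by
  induction S using Finset.induction_on with
  | empty => intro h _ hb _ z hz; simpa using hb z hz
  | insert n S hn ih =>
    intro h hd hb h0 z hz
    have hnn := h0 n (Finset.mem_insert_self _ _)
    obtain ⟨k, hkd, hkb, hk⟩ := aux_factor h hd M hb (n : ℝ) (by exact_mod_cast hnn.1)
      (by simpa using hnn.2)
    have := ih k hkd hkb (by
      intro m hm
      have hmm := h0 m (Finset.mem_insert_of_mem hm)
      refine ⟨hmm.1, ?_⟩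
      have hmn : m ≠ n := fun e => hn (e ▸ hm)
      have h1 := hk (m : ℕ) (by simpa using hmm.1)
      rw [hmm.2] at h1
      rcases mul_eq_zero.mp h1.symm with h2 | h2
      · exfalso
        rcases div_eq_zero_iff.mp h2 with h3 | h3
        · apply hmn
          have := sub_eq_zero.mp h3
          exact_mod_cast this
        · have h4 : m + n = 0 := by exact_mod_cast h3
          omega
      · exact h2) z hz
    rw [Finset.prod_insert hn, hk z hz, norm_mul, Complex.ofReal_natCast]
    calc _ ≤ ‖(z - n) / (z + n)‖ * (M * ∏ n ∈ S, ‖(z - n) / (z + n)‖) := by gcongr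
      _ = _ := by ring

theorem aux_exp (z : ℂ) (hz : 0 < z.re) (n : ℕ) (hn : 0 < n) :
    ‖(z - n) / (z + n)‖ ≤ Real.exp (-(2 * z.re / (‖z‖ + 1) ^ 2) * (1 / n)) := by
  have hn1 : (1 : ℝ) ≤ n := by exact_mod_cast hn
  have hne : z + n ≠ 0 := by
    intro e
    have := congrArg Complex.re e
    simp at this
    linarith
  have hpos : 0 < ‖z + n‖ := norm_pos_iff.mpr hne
  have hle : ‖z + n‖ ≤ n * (‖z‖ + 1) := by
    calc ‖z + n‖ ≤ ‖z‖ + ‖(n : ℂ)‖ := norm_add_le _ _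
      _ = ‖z‖ + n := by simp
      _ ≤ _ := by nlinarith [norm_nonneg z]
  rw [← sq_le_sq₀ (norm_nonneg _) (Real.exp_pos _).le, ← Real.exp_nat_mul]
  have e1 : ‖(z - n) / (z + n)‖ ^ 2 = 1 - 4 * n * z.re / ‖z + n‖ ^ 2 := by
    rw [norm_div, div_pow, eq_sub_iff_add_eq, ← add_div, div_eq_one_iff_eq (by positivity),
      ← Complex.normSq_eq_norm_sq, ← Complex.normSq_eq_norm_sq, Complex.normSq_apply,
      Complex.normSq_apply]
    simp
    ring
  rw [e1]
  have e2 : 4 * z.re / (‖z‖ + 1) ^ 2 * (1 / n) ≤ 4 * n * z.re / ‖z + n‖ ^ 2 := by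
    have : 4 * z.re / (‖z‖ + 1) ^ 2 * (1 / n) = 4 * n * z.re / (n * (‖z‖ + 1)) ^ 2 := by
      have : (‖z‖ + 1) ≠ 0 := by positivity
      field_simp
    rw [this]
    gcongr
  have e3 := Real.add_one_le_exp (((2 : ℕ) : ℝ) * (-(2 * z.re / (‖z‖ + 1) ^ 2) * (1 / n)))
  have e4 : ((2 : ℕ) : ℝ) * (-(2 * z.re / (‖z‖ + 1) ^ 2) * (1 / n))
      = - (4 * z.re / (‖z‖ + 1) ^ 2 * (1 / n)) := by push_cast; ring
  rw [e4] at e3 ⊢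
  linarith

/-- Two holomorphic functions on `Π⁺ = {Re z > 0}` of exponential growth
`≤ C·e^{A·Re z}` which agree on a Müntz subset `L ⊆ ℕ*` (i.e. `Σ_{n∈L} 1/n = ∞`)
agree on all of `Π⁺`. -/
theorem stmt_12 (f g : ℂ → ℂ)
    (hf : DifferentiableOn ℂ f {z : ℂ | 0 < z.re})
    (hg : DifferentiableOn ℂ g {z : ℂ | 0 < z.re})
    (A C : ℝ) (hA : 0 ≤ A) (hC : 0 ≤ C)
    (hfb : ∀ z : ℂ, 0 < z.re → ‖f z‖ ≤ C * Real.exp (A * z.re))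
    (hgb : ∀ z : ℂ, 0 < z.re → ‖g z‖ ≤ C * Real.exp (A * z.re))
    (L : Set ℕ) (hL0 : ∀ n ∈ L, 0 < n)
    (hMuntz : ¬ Summable fun n : L => (1 : ℝ) / ((n : ℕ) : ℝ))
    (heq : ∀ n ∈ L, f (n : ℕ) = g (n : ℕ)) :
    ∀ z : ℂ, 0 < z.re → f z = g z := by
  intro z hz
  by_contra hne
  apply hMuntz
  set h : ℂ → ℂ := fun w => (f w - g w) * Complex.exp (-(A * w)) with hh
  have hd : DifferentiableOn ℂ h {z : ℂ | 0 < z.re} :=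
    (hf.sub hg).mul (by fun_prop)
  have hb : ∀ w : ℂ, 0 < w.re → ‖h w‖ ≤ 2 * C := by
    intro w hw
    have h1 : ‖f w - g w‖ ≤ 2 * C * Real.exp (A * w.re) := by
      have := norm_sub_le (f w) (g w)
      have := hfb w hw
      have := hgb w hw
      linarith
    have h2 : ‖Complex.exp (-(A * w))‖ = Real.exp (-(A * w.re)) := by
      rw [Complex.norm_exp]
      simp
    simp only [hh]
    rw [norm_mul, h2]
    calc _ ≤ 2 * C * Real.exp (A * w.re) * Real.exp (-(A * w.re)) := by gcongr
      _ = 2 * C := by rw [mul_assoc, ← Real.exp_add]; simp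
  have hz0 : 0 < ‖h z‖ :=
    norm_pos_iff.mpr (mul_ne_zero (sub_ne_zero.mpr hne) (Complex.exp_ne_zero _))
  have hCp : 0 < 2 * C := hz0.trans_le (hb z hz)
  set c : ℝ := 2 * z.re / (‖z‖ + 1) ^ 2 with hc
  have hcp : 0 < c := by positivity
  refine summable_of_sum_le (c := Real.log (2 * C / ‖h z‖) / c) (fun n => by positivity) ?_
  intro u
  have h1 := aux_prod (u.map (Function.Embedding.subtype _)) (2 * C) h hd hb (by
    intro n hn
    have hnL : n ∈ L := by
      obtain ⟨m, _, rfl⟩ := Finset.mem_map.mp hn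
      exact m.2
    refine ⟨hL0 n hnL, ?_⟩
    simp [hh, heq n hnL]) z hz
  rw [Finset.prod_map] at h1
  have h2 : ∏ n ∈ u, ‖(z - ((n : ℕ) : ℂ)) / (z + ((n : ℕ) : ℂ))‖
      ≤ Real.exp (-c * ∑ n ∈ u, (1 : ℝ) / ((n : ℕ) : ℝ)) := by
    rw [Finset.mul_sum, Real.exp_sum]
    exact Finset.prod_le_prod (fun _ _ => norm_nonneg _)
      (fun n _ => aux_exp z hz n (hL0 n n.2))
  have h3 : ‖h z‖ ≤ 2 * C * Real.exp (-c * ∑ n ∈ u, (1 : ℝ) / ((n : ℕ) : ℝ)) :=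
    h1.trans (mul_le_mul_of_nonneg_left h2 hCp.le)
  rw [le_div_iff₀ hcp, Real.le_log_iff_exp_le (by positivity), le_div_iff₀ hz0]
  set s := ∑ n ∈ u, (1 : ℝ) / ((n : ℕ) : ℝ)
  calc Real.exp (s * c) * ‖h z‖ ≤ Real.exp (s * c) * (2 * C * Real.exp (-c * s)) := by gcongr
    _ = 2 * C * (Real.exp (s * c) * Real.exp (-c * s)) := by ring
    _ = 2 * C := by rw [← Real.exp_add]; ring_nf; simp
end

section
/- Let M, M̃ > 0, Q, Q̃ ∈ ℝ, Λ, Λ̃ > 0, and let λ, q ∈ ℝ with λ ≠ 0 and q ≠ 0. Write F = F_{M,Q,Λ} and F̃ = F_{M̃,Q̃,Λ̃}. Suppose there is a nonempty open interval I ⊂ (0, ∞) such that F(r) > 0 and F̃(r) > 0 for all r ∈ I and (qQ − λr)/√(F(r)) = (qQ̃ − λr)/√(F̃(r)) for all r ∈ I. Then M = M̃, Q = Q̃ and Λ = Λ̃. -/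
/-- The de Sitter–Reissner–Nordström potential `F_{M,Q,Λ}(r) = 1 − 2M/r + Q²/r² − Λr²/3`. -/
noncomputable def Fpot (M Q Λ r : ℝ) : ℝ := 1 - 2 * M / r + Q ^ 2 / r ^ 2 - Λ * r ^ 2 / 3

theorem coeffs_zero (c0 c1 c2 c3 c4 c5 c6 r₀ r₁ : ℝ) (h01 : r₀ < r₁)
    (h : ∀ r ∈ Set.Ioo r₀ r₁, c0 + c1 * r + c2 * r ^ 2 + c3 * r ^ 3 + c4 * r ^ 4 + c5 * r ^ 5
      + c6 * r ^ 6 = 0) : c3 = 0 ∧ c5 = 0 ∧ c6 = 0 := by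
  let p : Polynomial ℝ := Polynomial.C c0 + Polynomial.C c1 * Polynomial.X
    + Polynomial.C c2 * Polynomial.X ^ 2 + Polynomial.C c3 * Polynomial.X ^ 3
    + Polynomial.C c4 * Polynomial.X ^ 4 + Polynomial.C c5 * Polynomial.X ^ 5
    + Polynomial.C c6 * Polynomial.X ^ 6
  have hp : p = 0 := by
    apply Polynomial.eq_zero_of_infinite_isRoot
    apply (Set.Ioo_infinite h01).mono
    intro r hr
    simp only [Set.mem_setOf_eq, Polynomial.IsRoot.def, p]
    simpa using h r hr
  have h3 := congrArg (fun f => Polynomial.coeff f 3) hp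
  have h5 := congrArg (fun f => Polynomial.coeff f 5) hp
  have h6 := congrArg (fun f => Polynomial.coeff f 6) hp
  simp [p, Polynomial.coeff_X, Polynomial.coeff_C, Polynomial.coeff_X_pow] at h3 h5 h6
  exact ⟨h3, h5, h6⟩

/-- If `λ ≠ 0`, `q ≠ 0` and `(qQ − λr)/√F(r) = (qQ̃ − λr)/√F̃(r)` on a
nonempty open subinterval of `(0,∞)` where both `F` and `F̃` are positive, then the
parameters coincide: `M = M̃`, `Q = Q̃`, `Λ = Λ̃`. -/
theorem stmt_13 (M M' Q Q' Λ Λ' lam q : ℝ)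
    (hM : 0 < M) (hM' : 0 < M') (hΛ : 0 < Λ) (hΛ' : 0 < Λ')
    (hlam : lam ≠ 0) (hq : q ≠ 0)
    (r₀ r₁ : ℝ) (hr₀ : 0 < r₀) (hr₀₁ : r₀ < r₁)
    (hpos : ∀ r ∈ Set.Ioo r₀ r₁, 0 < Fpot M Q Λ r ∧ 0 < Fpot M' Q' Λ' r)
    (heq : ∀ r ∈ Set.Ioo r₀ r₁,
      (q * Q - lam * r) / Real.sqrt (Fpot M Q Λ r)
        = (q * Q' - lam * r) / Real.sqrt (Fpot M' Q' Λ' r)) :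
    M = M' ∧ Q = Q' ∧ Λ = Λ' := by
  have key : ∀ r ∈ Set.Ioo r₀ r₁,
      (q * Q - lam * r) ^ 2 * (r ^ 2 - 2 * M' * r + Q' ^ 2 - Λ' / 3 * r ^ 4)
      = (q * Q' - lam * r) ^ 2 * (r ^ 2 - 2 * M * r + Q ^ 2 - Λ / 3 * r ^ 4) := by
    intro r hr
    have hr0 : r ≠ 0 := (hr₀.trans hr.1).ne'
    obtain ⟨h1, h2⟩ := hpos r hr
    have h := congrArg (fun x => x ^ 2) (heq r hr)
    simp only [div_pow, Real.sq_sqrt h1.le, Real.sq_sqrt h2.le] at h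
    rw [div_eq_div_iff h1.ne' h2.ne'] at h
    have e1 : r ^ 2 - 2 * M * r + Q ^ 2 - Λ / 3 * r ^ 4 = r ^ 2 * Fpot M Q Λ r := by
      unfold Fpot; field_simp
    have e2 : r ^ 2 - 2 * M' * r + Q' ^ 2 - Λ' / 3 * r ^ 4 = r ^ 2 * Fpot M' Q' Λ' r := by
      unfold Fpot; field_simp
    rw [e1, e2]
    linear_combination r ^ 2 * h
  obtain ⟨h3, h5, h6⟩ := coeffs_zero
    ((q * Q) ^ 2 * Q' ^ 2 - (q * Q') ^ 2 * Q ^ 2)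
    ((-2 * M' * (q * Q) ^ 2 - 2 * (q * Q) * lam * Q' ^ 2)
      - (-2 * M * (q * Q') ^ 2 - 2 * (q * Q') * lam * Q ^ 2))
    ((lam ^ 2 * Q' ^ 2 + 4 * M' * (q * Q) * lam + (q * Q) ^ 2)
      - (lam ^ 2 * Q ^ 2 + 4 * M * (q * Q') * lam + (q * Q') ^ 2))
    ((-2 * M' * lam ^ 2 - 2 * (q * Q) * lam) - (-2 * M * lam ^ 2 - 2 * (q * Q') * lam))
    ((lam ^ 2 - (q * Q) ^ 2 * (Λ' / 3)) - (lam ^ 2 - (q * Q') ^ 2 * (Λ / 3)))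
    (2 * (q * Q) * lam * (Λ' / 3) - 2 * (q * Q') * lam * (Λ / 3))
    (-lam ^ 2 * (Λ' / 3) + lam ^ 2 * (Λ / 3)) r₀ r₁ hr₀₁
    (fun r hr => by linear_combination key r hr)
  have hL : Λ = Λ' := by
    apply mul_left_cancel₀ (pow_ne_zero 2 hlam)
    linear_combination 3 * h6
  subst hL
  have hQ : Q = Q' := by
    apply mul_left_cancel₀ (mul_ne_zero (mul_ne_zero hq hlam) hΛ.ne')
    linear_combination 3 / 2 * h5
  subst hQ
  refine ⟨?_, rfl, rfl⟩
  apply mul_left_cancel₀ (pow_ne_zero 2 hlam)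
  linear_combination h3 / 2
end

section
/- Let M, M̃ > 0, Q, Q̃ ∈ ℝ with Q ≠ 0, Λ, Λ̃ > 0, and let q ∈ ℝ with q ≠ 0. Write F = F_{M,Q,Λ} and F̃ = F_{M̃,Q̃,Λ̃}. Suppose there is a nonempty open interval I ⊂ (0, ∞) such that F(r) > 0 and F̃(r) > 0 for all r ∈ I and qQ/√(F(r)) = qQ̃/√(F̃(r)) for all r ∈ I. Then M = M̃, Q = Q̃ and Λ = Λ̃. -/
/-- If `Q ≠ 0`, `q ≠ 0` and `qQ/√F(r) = qQ̃/√F̃(r)` on a nonempty open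
subinterval of `(0,∞)` where both `F` and `F̃` are positive, then the parameters coincide:
`M = M̃`, `Q = Q̃`, `Λ = Λ̃`. -/
theorem stmt_14 (M M' Q Q' Λ Λ' q : ℝ)
    (hM : 0 < M) (hM' : 0 < M') (hQ : Q ≠ 0) (hΛ : 0 < Λ) (hΛ' : 0 < Λ')
    (hq : q ≠ 0)
    (r₀ r₁ : ℝ) (hr₀ : 0 < r₀) (hr₀₁ : r₀ < r₁)
    (hpos : ∀ r ∈ Set.Ioo r₀ r₁, 0 < Fpot M Q Λ r ∧ 0 < Fpot M' Q' Λ' r)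
    (heq : ∀ r ∈ Set.Ioo r₀ r₁,
      q * Q / Real.sqrt (Fpot M Q Λ r) = q * Q' / Real.sqrt (Fpot M' Q' Λ' r)) :
    M = M' ∧ Q = Q' ∧ Λ = Λ' := by
  have key : ∀ r ∈ Set.Ioo r₀ r₁,
      (Q ^ 2 - Q' ^ 2) * r - 2 * (Q ^ 2 * M' - Q' ^ 2 * M)
        - (Q ^ 2 * Λ' - Q' ^ 2 * Λ) / 3 * r ^ 3 = 0 := by
    intro r hr
    have hr0 : 0 < r := hr₀.trans hr.1
    obtain ⟨h1, h2⟩ := hpos r hr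
    have h := heq r hr
    have s1 := Real.sqrt_pos.2 h1
    have s2 := Real.sqrt_pos.2 h2
    rw [div_eq_div_iff s1.ne' s2.ne', mul_assoc, mul_assoc] at h
    have h3 := mul_left_cancel₀ hq h
    have h4 : Q ^ 2 * Fpot M' Q' Λ' r = Q' ^ 2 * Fpot M Q Λ r := by
      rw [← Real.sq_sqrt h1.le, ← Real.sq_sqrt h2.le, ← mul_pow, ← mul_pow, h3]
    unfold Fpot at h4
    field_simp at h4
    have h5 : r * ((Q ^ 2 - Q' ^ 2) * r - 2 * (Q ^ 2 * M' - Q' ^ 2 * M)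
        - (Q ^ 2 * Λ' - Q' ^ 2 * Λ) / 3 * r ^ 3) = 0 := by linarith
    exact (mul_eq_zero.1 h5).resolve_left hr0.ne'
  have hp : (Polynomial.C (Q ^ 2 - Q' ^ 2) * Polynomial.X
      - Polynomial.C (2 * (Q ^ 2 * M' - Q' ^ 2 * M))
      - Polynomial.C ((Q ^ 2 * Λ' - Q' ^ 2 * Λ) / 3) * Polynomial.X ^ 3 : Polynomial ℝ) = 0 := by
    apply Polynomial.eq_zero_of_infinite_isRoot
    refine (Set.Ioo_infinite hr₀₁).mono ?_
    intro r hr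
    have := key r hr
    simpa only [Set.mem_setOf_eq, Polynomial.IsRoot.def, Polynomial.eval_sub, Polynomial.eval_mul,
      Polynomial.eval_C, Polynomial.eval_X, Polynomial.eval_pow] using this
  have c1 : Q ^ 2 - Q' ^ 2 = 0 := by
    have := congrArg (fun p => Polynomial.coeff p 1) hp
    simpa [Polynomial.coeff_X_pow, Polynomial.coeff_C, -map_sub, -map_mul, -map_pow, -map_div₀] using this
  have c0 : 2 * (Q ^ 2 * M' - Q' ^ 2 * M) = 0 := by
    have := congrArg (fun p => Polynomial.eval 0 p) hp
    simp only [Polynomial.eval_sub, Polynomial.eval_mul,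
      Polynomial.eval_C, Polynomial.eval_X, Polynomial.eval_pow, Polynomial.eval_zero] at this
    linarith
  have c3 : (Q ^ 2 * Λ' - Q' ^ 2 * Λ) / 3 = 0 := by
    have := congrArg (fun p => Polynomial.eval 1 p) hp
    simp only [Polynomial.eval_sub, Polynomial.eval_mul,
      Polynomial.eval_C, Polynomial.eval_X, Polynomial.eval_pow, Polynomial.eval_zero] at this
    linarith
  have hQ2 : Q ^ 2 ≠ 0 := pow_ne_zero 2 hQ
  have e : Q' ^ 2 = Q ^ 2 := by linarith
  rw [e] at c0 c3
  refine ⟨?_, ?_, ?_⟩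
  · exact mul_left_cancel₀ hQ2 (by linarith)
  · have hr : (r₀ + r₁) / 2 ∈ Set.Ioo r₀ r₁ := ⟨by linarith, by linarith⟩
    obtain ⟨h1, h2⟩ := hpos _ hr
    have h := heq _ hr
    have s1 := Real.sqrt_pos.2 h1
    have s2 := Real.sqrt_pos.2 h2
    rw [div_eq_div_iff s1.ne' s2.ne', mul_assoc, mul_assoc] at h
    have h3 := mul_left_cancel₀ hq h
    rcases sq_eq_sq_iff_eq_or_eq_neg.1 e with h | h
    · exact h.symm
    · exfalso
      have : Q * (√(Fpot M' Q' Λ' ((r₀ + r₁) / 2)) + √(Fpot M Q Λ ((r₀ + r₁) / 2))) = 0 := by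
        have h6 : Q' * √(Fpot M Q Λ ((r₀ + r₁) / 2)) = -Q * √(Fpot M Q Λ ((r₀ + r₁) / 2)) := by
          rw [h]
        linarith
      rcases mul_eq_zero.1 this with h | h
      · exact hQ h
      · linarith
  · exact mul_left_cancel₀ hQ2 (by linarith)
end
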